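/- arXiv:2011.12828 — 3 statements merged into one kernel-verified Lean document; each statement's English description precedes it below -/
import Mathlib

section
/- The first Rogers–Ramanujan identity: as formal power series in q, the sum over n ≥ 0 of q^(n^2)/(q;q)_n equals 1/((q;q^5)_∞ (q^4;q^5)_∞), where (a;q)_n denotes the q-Pochhammer symbol ∏_{k=0}^{n-1}(1-aq^k). -/
/-!
The proof iterates Bailey's lemma on the unit Bailey pair and then lets `N → ∞` in the resulting
finite identity. Let `r n = 1 / (q;q)_n` and call `β` the Bailey transform of `α` when
`β_s = ∑_{j ≤ s} α_j r(s-j) r(s+j)`.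

* A finite form of the Jacobi triple product (`finite_jacobi`), proved by a three-term recurrence
  in `N` that telescopes in `j`, states that for `z * w = Q`
  `(Q;Q)_{2N} ∑_{j ≤ N} θ_j / ((Q;Q)_{N-j} (Q;Q)_{N+j}) = (z;Q)_N (w;Q)_N`,
  where `θ_0 = 1` and `θ_j = (-1)^j Q^{j(j-1)/2} (z^j + w^j)`. With `Q = q`, `z = 1`, `w = q` the
  right-hand side vanishes for `N ≥ 1`, so the transform of this `θ` is `β_s = [s = 0]`.
* A `q`-Chu–Vandermonde sum (`vandermonde`) gives Bailey's lemma (`bailey`): passing from `α_j` to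
  `q^{j²} α_j` replaces `β_N` by `∑_s q^{s²} r(N-s) β_s`. Two applications to the unit pair give
  `∑_{s ≤ N} q^{s²} r(N-s) r(s) = ∑_{j ≤ N} θ_j r(N-j) r(N+j)` (`finite_rr`), where `θ` is now the
  sequence for `Q = q⁵`, `z = q²`, `w = q³` (`theta_eq`).
* Modulo `q^{N+1}` every `r(N ± j)` above may be replaced by `r(N)`, so
  `(q;q)_N ∑_{s ≤ N} q^{s²} r(s) ≡ ∑_{j ≤ N} θ_j`. The finite triple product with base `q⁵` gives
  `∑_{j ≤ N} θ_j ≡ (q²;q⁵)_N (q³;q⁵)_N (q⁵;q⁵)_N`. Since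
  `(q;q)_N ≡ (q;q)_{5N}` splits into the five residue classes modulo `5`, the factors other than
  `(q;q⁵)_N (q⁴;q⁵)_N` cancel (`rr_cong`).

The finite identities hold in any commutative ring in which the `(Q;Q)_n` are invertible. In the
topology of coefficientwise convergence the infinite sum and product agree with their partial sums
and products modulo `X^{N+1}` (`tsum_cong`, `tprod_cong`).
-/

open scoped Finset

noncomputable instance : TopologicalSpace (PowerSeries ℚ) :=
  Pi.topologicalSpace (ι := Unit →₀ ℕ) (Y := fun _ => ℚ)

/-- The formal variable `q`. -/
noncomputable def q : PowerSeries ℚ := PowerSeries.X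

/-- The q-Pochhammer symbol `(q;q)_n = ∏_{k=0}^{n-1} (1 - q·q^k)`. -/
noncomputable def qPoch (n : ℕ) : PowerSeries ℚ :=
  ∏ k ∈ Finset.range n, (1 - q ^ (k + 1))

/-- The Gaussian binomial coefficient `[m choose k]_q`, zero unless `k ≤ m`. -/
noncomputable def qBinom (m k : ℕ) : PowerSeries ℚ :=
  if k ≤ m then qPoch m * (qPoch k * qPoch (m - k))⁻¹ else 0

namespace RR
variable {R : Type*} [CommRing R]

/-! ### The finite Jacobi triple product -/

/-- The `q`-Pochhammer symbol `(Q;Q)_n` over an arbitrary commutative ring. -/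
def poch (Q : R) (n : ℕ) : R := ∏ k ∈ Finset.range n, (1 - Q ^ (k + 1))

lemma poch_succ (Q : R) (n : ℕ) : poch Q (n + 1) = poch Q n * (1 - Q ^ (n + 1)) :=
  Finset.prod_range_succ _ _

lemma inv_step {Q : R} {r : ℕ → R} (hr : ∀ n, r n * poch Q n = 1) (n : ℕ) :
    r n = r (n + 1) * (1 - Q ^ (n + 1)) := by
  have h1 := hr n
  have h2 := hr (n + 1)
  rw [poch_succ] at h2
  linear_combination (-r n) * h2 + r (n + 1) * (1 - Q ^ (n + 1)) * h1

lemma inv_zero {Q : R} {r : ℕ → R} (hr : ∀ n, r n * poch Q n = 1) : r 0 = 1 := by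
  simpa [poch] using hr 0

/-- The signed power `(-1)^j Q^{j(j-1)/2}`. -/
def sgn (Q : R) (j : ℕ) : R := (-1) ^ j * Q ^ (j.choose 2)

lemma sgn_succ (Q : R) (j : ℕ) : sgn Q (j + 1) = -Q ^ j * sgn Q j := by
  have : (j + 1).choose 2 = j + j.choose 2 := by
    rw [Nat.choose_succ_succ' j 1, Nat.choose_one_right]
  rw [sgn, sgn, this]; ring

/-- The Bailey kernel `r(N-j) r(N+j)`, set to zero for `j > N` as `1 / (Q;Q)_{N-j}` is.
The sequence `r` stands for `n ↦ 1 / (Q;Q)_n`. -/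
def kern (r : ℕ → R) (N j : ℕ) : R := if j ≤ N then r (N - j) * r (N + j) else 0

lemma kern_add (r : ℕ → R) (j a : ℕ) : kern r (j + a) j = r a * r (2 * j + a) := by
  rw [kern, if_pos (by omega)]; congr 2 <;> omega

lemma kern_of_lt (r : ℕ → R) {N j : ℕ} (h : N < j) : kern r N j = 0 := if_neg (by omega)

/-- The factor `1 - Q^a` covers the boundary case `a = 0`, where the kernel vanishes. -/
lemma kern_next {Q : R} {r : ℕ → R} (hr : ∀ n, r n * poch Q n = 1) (j a : ℕ) :
    kern r (j + a) (j + 1) = (1 - Q ^ a) * r a * r (2 * j + a + 1) := by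
  cases a with
  | zero => rw [kern_of_lt r (by omega)]; simp
  | succ a =>
    rw [show j + (a + 1) = (j + 1) + a by ring, kern_add, inv_step hr a,
      show 2 * (j + 1) + a = 2 * j + (a + 1) + 1 by ring]
    ring

/-- The three-term recurrence in `N` of the coefficients in the finite triple product. Multiplying
by `sgn` keeps all exponents of `Q` nonnegative. -/
lemma kern_rec {Q : R} {r : ℕ → R} (hr : ∀ n, r n * poch Q n = 1) (N j : ℕ) :
    sgn Q (j + 1) * ((1 - Q ^ (2 * N + 1)) * (1 - Q ^ (2 * N + 2)) * kern r (N + 1) (j + 1))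
      = (1 + Q ^ (2 * N + 1)) * (sgn Q (j + 1) * kern r N (j + 1))
        - Q ^ N * (sgn Q j * kern r N j) - Q ^ (N + 1) * (sgn Q (j + 2) * kern r N (j + 2)) := by
  rcases lt_trichotomy N j with h | rfl | h
  · simp [kern_of_lt r (show N + 1 < j + 1 by omega), kern_of_lt r (show N < j + 1 by omega),
      kern_of_lt r h, kern_of_lt r (show N < j + 2 by omega)]
  · have h1 := kern_add r (N + 1) 0
    have h2 := kern_add r N 0
    have h3 := inv_step hr (2 * N)
    have h4 := inv_step hr (2 * N + 1)
    simp only [add_zero] at h1 h2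
    rw [kern_of_lt r (show N < N + 1 by omega), kern_of_lt r (show N < N + 2 by omega), h1, h2,
      h3, h4, sgn_succ, show 2 * (N + 1) = 2 * N + 1 + 1 by ring]
    ring
  · obtain ⟨a, rfl⟩ := Nat.exists_eq_add_of_lt h
    have k1 := kern_add r (j + 1) (a + 1)
    have k2 := kern_add r (j + 1) a
    have k3 := kern_add r j (a + 1)
    have k4 := kern_next hr (j + 1) a
    have e1 := inv_step hr (2 * j + a + 1)
    have e2 := inv_step hr (2 * j + a + 2)
    have e0 := inv_step hr a
    rw [show j + 1 + (a + 1) = j + a + 1 + 1 by ring,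
      show 2 * (j + 1) + (a + 1) = 2 * j + a + 3 by ring] at k1
    rw [show j + 1 + a = j + a + 1 by ring, show 2 * (j + 1) + a = 2 * j + a + 2 by ring] at k2
    rw [show j + (a + 1) = j + a + 1 by ring, show 2 * j + (a + 1) = 2 * j + a + 1 by ring] at k3
    rw [show j + 1 + a = j + a + 1 by ring, show 2 * (j + 1) + a + 1 = 2 * j + a + 3 by ring] at k4
    rw [k1, k2, k3, k4, sgn_succ Q (j + 1), sgn_succ, e1, e2, e0]
    ring

/-- The case `j = 0` of the recurrence, where the neighbours `j = 1` and `j = -1` coincide. -/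
lemma kern_rec_zero {Q : R} {r : ℕ → R} (hr : ∀ n, r n * poch Q n = 1) (N : ℕ) :
    (1 - Q ^ (2 * N + 1)) * (1 - Q ^ (2 * N + 2)) * kern r (N + 1) 0
      = (1 + Q ^ (2 * N + 1)) * kern r N 0 + 2 * Q ^ (N + 1) * kern r N 1 := by
  have k1 := kern_add r 0 (N + 1)
  have k2 := kern_add r 0 N
  have k3 := kern_next hr 0 N
  simp only [zero_add, mul_zero] at k1 k2 k3
  rw [k1, k2, k3, inv_step hr N]
  ring

/-- The terms `j` and `-j` of the bilateral theta series `∑ (-1)^j Q^{j(j-1)/2} z^j`, combined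
through `w = Q / z`; the central term is counted once. -/
def theta (Q z w : R) (j : ℕ) : R := if j = 0 then 1 else sgn Q j * (z ^ j + w ^ j)

/-- The passage from `N` to `N + 1` for the partial sums up to `M`: the terms of the recurrence
telescope, leaving a boundary contribution that vanishes once `M > N`. -/
lemma jacobi_step {Q z w : R} {r : ℕ → R} (hr : ∀ n, r n * poch Q n = 1) (hzw : z * w = Q)
    (N M : ℕ) :
    (1 - Q ^ (2 * N + 1)) * (1 - Q ^ (2 * N + 2)) *
        ∑ j ∈ Finset.range (M + 1), theta Q z w j * kern r (N + 1) j
      = (1 - z * Q ^ N) * (1 - w * Q ^ N) *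
          ∑ j ∈ Finset.range (M + 1), theta Q z w j * kern r N j
        + Q ^ N * (sgn Q M * (z ^ (M + 1) + w ^ (M + 1)) * kern r N M
          - Q * (sgn Q (M + 1) * (z ^ M + w ^ M) * kern r N (M + 1))) := by
  induction M with
  | zero =>
    have h := kern_rec_zero hr N
    simp only [zero_add, Finset.range_one, Finset.sum_singleton, theta, if_true, one_mul]
    rw [h, sgn_succ]
    simp only [sgn]
    simp
    rw [← hzw]
    ring
  | succ M ih =>
    have h := kern_rec hr N M
    rw [Finset.sum_range_succ, Finset.sum_range_succ _ (M + 1), mul_add, ih]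
    simp only [theta, if_neg (Nat.succ_ne_zero M)]
    have e : z ^ (M + 1 + 1) + w ^ (M + 1 + 1)
        = (z + w) * (z ^ (M + 1) + w ^ (M + 1)) - Q * (z ^ M + w ^ M) := by
      rw [← hzw]; ring
    rw [e]
    have e2 : (1 - z * Q ^ N) * (1 - w * Q ^ N) = 1 + Q ^ (2 * N + 1) - Q ^ N * (z + w) := by
      linear_combination Q ^ (2 * N) * hzw
    rw [e2]
    linear_combination (z ^ (M + 1) + w ^ (M + 1)) * h

/-- Finite Jacobi triple product. -/
lemma finite_jacobi {Q z w : R} {r : ℕ → R} (hr : ∀ n, r n * poch Q n = 1) (hzw : z * w = Q)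
    (N : ℕ) :
    poch Q (2 * N) * ∑ j ∈ Finset.range (N + 1), theta Q z w j * kern r N j
      = ∏ k ∈ Finset.range N, ((1 - z * Q ^ k) * (1 - w * Q ^ k)) := by
  induction N with
  | zero => simp [poch, theta, kern, inv_zero hr]
  | succ N ih =>
    have h := jacobi_step hr hzw N (N + 1)
    rw [Finset.sum_range_succ _ (N + 1), Finset.sum_range_succ _ (N + 1),
      kern_of_lt r (show N < N + 1 by omega), kern_of_lt r (show N < N + 1 + 1 by omega)] at h
    rw [Finset.prod_range_succ, ← ih, show 2 * (N + 1) = 2 * N + 1 + 1 by ring, poch_succ,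
      poch_succ, Finset.sum_range_succ _ (N + 1)]
    linear_combination poch Q (2 * N) * h

/-! ### Bailey's lemma -/

/-- A limiting case of the `q`-Chu–Vandermonde sum:
`∑_k q^{k² + km} / ((q)_{A-k} (q)_k (q)_{k+m}) = 1 / ((q)_A (q)_{A+m})`. -/
lemma vandermonde {q : R} {r : ℕ → R} (hr : ∀ n, r n * poch q n = 1) (A m : ℕ) :
    poch q A * ∑ k ∈ Finset.range (A + 1), q ^ (k ^ 2 + k * m) * (r (A - k) * r k * r (k + m))
      = r (A + m) := by
  induction A generalizing m with
  | zero => simp [poch, inv_zero hr]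
  | succ A ih =>
    have key : (1 - q ^ (A + 1)) * ∑ k ∈ Finset.range (A + 1 + 1),
          q ^ (k ^ 2 + k * m) * (r (A + 1 - k) * r k * r (k + m))
        = ∑ k ∈ Finset.range (A + 1), q ^ (k ^ 2 + k * m) * (r (A - k) * r k * r (k + m))
          + q ^ (A + m + 1) * ∑ k ∈ Finset.range (A + 1),
            q ^ (k ^ 2 + k * (m + 1)) * (r (A - k) * r k * r (k + (m + 1))) := by
      -- Split `1 - q^(A+1)` as `(1 - q^(A+1-k)) + q^(A+1-k) (1 - q^k)`; the two parts lower `A - k`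
      -- and `k` respectively.
      have split : ∀ k ∈ Finset.range (A + 1 + 1),
          (1 - q ^ (A + 1)) * (q ^ (k ^ 2 + k * m) * (r (A + 1 - k) * r k * r (k + m)))
          = (1 - q ^ (A + 1 - k)) * (q ^ (k ^ 2 + k * m) * (r (A + 1 - k) * r k * r (k + m)))
          + q ^ (A + 1 - k) * (1 - q ^ k) *
              (q ^ (k ^ 2 + k * m) * (r (A + 1 - k) * r k * r (k + m))) := by
        intro k hk
        have hk' : k ≤ A + 1 := by simpa [Nat.lt_succ_iff] using hk
        have : q ^ (A + 1) = q ^ (A + 1 - k) * q ^ k := by rw [← pow_add]; congr 1; omega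
        rw [this]; ring
      rw [Finset.mul_sum, Finset.sum_congr rfl split, Finset.sum_add_distrib]
      congr 1
      · rw [Finset.sum_range_succ]
        simp only [Nat.sub_self, pow_zero, sub_self, zero_mul, add_zero]
        refine Finset.sum_congr rfl fun k hk => ?_
        have hk' : k ≤ A := by simpa [Nat.lt_succ_iff] using hk
        rw [show A + 1 - k = A - k + 1 by omega, inv_step hr (A - k)]
        ring
      · rw [Finset.sum_range_succ', Finset.mul_sum]
        simp only [pow_zero, sub_self, mul_zero, zero_mul, add_zero]
        refine Finset.sum_congr rfl fun k hk => ?_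
        have hk' : k ≤ A := by simpa [Nat.lt_succ_iff] using hk
        obtain ⟨d, rfl⟩ := Nat.exists_eq_add_of_le hk'
        rw [show k + d + 1 - (k + 1) = d by omega, show k + d - k = d by omega, inv_step hr k,
          show k + 1 + m = k + (m + 1) by ring]
        ring
    have h1 := ih m
    have h2 := ih (m + 1)
    have h3 := inv_step hr (A + m)
    rw [show A + (m + 1) = A + m + 1 by ring] at h2
    rw [poch_succ, show A + 1 + m = A + m + 1 by ring]
    linear_combination poch q A * key + h1 + q ^ (A + m + 1) * h2 + h3

/-- The Bailey kernel is reproduced by the weights `q^{s²} r(N-s)`, up to the factor `q^{m²}`. -/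
lemma kern_sum {q : R} {r : ℕ → R} (hr : ∀ n, r n * poch q n = 1) (N m : ℕ) (hm : m ≤ N) :
    ∑ s ∈ Finset.range (N + 1), q ^ (s ^ 2) * r (N - s) * kern r s m
      = q ^ (m ^ 2) * kern r N m := by
  obtain ⟨A, rfl⟩ := Nat.exists_eq_add_of_le hm
  have h := vandermonde hr A (2 * m)
  rw [add_assoc, Finset.sum_range_add, Finset.sum_eq_zero, zero_add, kern_add,
    show 2 * m + A = A + 2 * m by ring, ← h]
  · have : ∀ k ∈ Finset.range (A + 1), q ^ ((m + k) ^ 2) * r (m + A - (m + k)) * kern r (m + k) m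
        = q ^ (m ^ 2) * (q ^ (k ^ 2 + k * (2 * m)) * (r (A - k) * r k * r (k + 2 * m))) := by
      intro k _
      rw [kern_add, show m + A - (m + k) = A - k by omega, show 2 * m + k = k + 2 * m by ring]
      ring
    rw [Finset.sum_congr rfl this, ← Finset.mul_sum, ← mul_assoc (r A), hr, one_mul]
  · intro s hs
    rw [kern_of_lt r (by simpa using hs), mul_zero]

/-- Bailey's lemma, in its limiting form. -/
lemma bailey {q : R} {r : ℕ → R} (hr : ∀ n, r n * poch q n = 1) {α β : ℕ → R}
    (h : ∀ s, β s = ∑ j ∈ Finset.range (s + 1), α j * kern r s j) (N : ℕ) :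
    ∑ s ∈ Finset.range (N + 1), q ^ (s ^ 2) * r (N - s) * β s
      = ∑ j ∈ Finset.range (N + 1), q ^ (j ^ 2) * α j * kern r N j := by
  have ext : ∀ s ∈ Finset.range (N + 1), q ^ (s ^ 2) * r (N - s) * β s
      = ∑ j ∈ Finset.range (N + 1), α j * (q ^ (s ^ 2) * r (N - s) * kern r s j) := by
    intro s hs
    rw [h, Finset.mul_sum]
    rw [← Finset.sum_subset (Finset.range_subset_range.2 (Finset.mem_range.1 hs))]
    · exact Finset.sum_congr rfl fun j _ => by ring
    · intro j _ hj
      rw [kern_of_lt r (by simpa using hj)]; ring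
  rw [Finset.sum_congr rfl ext, Finset.sum_comm]
  refine Finset.sum_congr rfl fun j hj => ?_
  rw [← Finset.mul_sum, kern_sum hr N j (by simpa [Nat.lt_succ_iff] using hj)]
  ring

/-- Two Bailey steps turn the theta terms of base `q` into those of base `q⁵`:
`2j² + j(j-1)/2 = 5j(j-1)/2 + 2j`. -/
lemma theta_eq (q : R) (j : ℕ) :
    q ^ (j ^ 2) * (q ^ (j ^ 2) * theta q 1 q j) = theta (q ^ 5) (q ^ 2) (q ^ 3) j := by
  rcases Nat.eq_zero_or_pos j with rfl | hj
  · simp [theta]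
  · have h : j ^ 2 = 2 * j.choose 2 + j := by
      have := Nat.triangle_succ (j - 1)
      rw [Nat.choose_two_right]
      have h2 : 2 * (j * (j - 1) / 2) = j * (j - 1) :=
        Nat.mul_div_cancel' (Nat.even_mul_pred_self j).two_dvd
      rw [h2]
      obtain ⟨i, rfl⟩ : ∃ i, j = i + 1 := ⟨j - 1, by omega⟩
      simp; ring
    simp only [theta, if_neg hj.ne', sgn, h]
    ring

/-- A finite form of the first Rogers–Ramanujan identity, before the triple product is used. -/
lemma finite_rr {q : R} {r : ℕ → R} (hr : ∀ n, r n * poch q n = 1) (N : ℕ) :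
    ∑ s ∈ Finset.range (N + 1), q ^ (s ^ 2) * r (N - s) * r s
      = ∑ j ∈ Finset.range (N + 1), theta (q ^ 5) (q ^ 2) (q ^ 3) j * kern r N j := by
  -- The factor `1 - q^0` kills the product for `s ≥ 1`.
  have unit : ∀ s, (if s = 0 then (1 : R) else 0)
      = ∑ j ∈ Finset.range (s + 1), theta q 1 q j * kern r s j := by
    intro s
    have h := finite_jacobi hr (one_mul q) s
    have hs : ∏ k ∈ Finset.range s, ((1 - 1 * q ^ k) * (1 - q * q ^ k))
        = if s = 0 then (1 : R) else 0 := by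
      split_ifs with h0
      · simp [h0]
      · exact Finset.prod_eq_zero (i := 0) (by simpa using Nat.pos_of_ne_zero h0) (by simp)
    rw [hs] at h
    have hinv := hr (2 * s)
    have hunit : r (2 * s) * (if s = 0 then (1 : R) else 0) = if s = 0 then (1 : R) else 0 := by
      split_ifs with h0
      · simp [h0, inv_zero hr]
      · simp
    linear_combination (-1 : R) * hunit - r (2 * s) * h
      + (∑ j ∈ Finset.range (s + 1), theta q 1 q j * kern r s j) * hinv
  -- One Bailey step: the new `β` is `s ↦ q^0 r(s)`.
  have first : ∀ s, r s
      = ∑ j ∈ Finset.range (s + 1), q ^ (j ^ 2) * theta q 1 q j * kern r s j := by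
    intro s
    rw [← bailey hr unit s, Finset.sum_eq_single 0] <;> simp +contextual
  rw [bailey hr first N]
  exact Finset.sum_congr rfl fun j _ => by rw [theta_eq]

/-! ### Congruences modulo powers of `q` -/

lemma inv_cong {Q : R} {r : ℕ → R} (hr : ∀ n, r n * poch Q n = 1) (a d : ℕ) :
    Q ^ (a + 1) ∣ r (a + d) - r a := by
  induction d with
  | zero => simp
  | succ d ih =>
    have h := inv_step hr (a + d)
    have : r (a + (d + 1)) - r a = r (a + d) - r a + Q ^ (a + 1) * (Q ^ d * r (a + d + 1)) := by
      rw [h, ← add_assoc]; ring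
    rw [this]
    exact dvd_add ih (dvd_mul_right _ _)

lemma poch_cong (Q : R) (a d : ℕ) : Q ^ (a + 1) ∣ poch Q (a + d) - poch Q a := by
  induction d with
  | zero => simp
  | succ d ih =>
    have : poch Q (a + (d + 1)) - poch Q a
        = poch Q (a + d) - poch Q a + Q ^ (a + 1) * (-(Q ^ d * poch Q (a + d))) := by
      rw [← add_assoc, poch_succ]; ring
    rw [this]
    exact dvd_add ih (dvd_mul_right _ _)

lemma theta_dvd (q : R) (j : ℕ) : q ^ j ∣ theta (q ^ 5) (q ^ 2) (q ^ 3) j := by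
  rcases Nat.eq_zero_or_pos j with rfl | hj
  · simp
  · rw [theta, if_neg hj.ne']
    refine Dvd.dvd.mul_left ⟨q ^ j + q ^ (2 * j), ?_⟩ _
    ring

/-- The vanishing order `j` of `θ_j` makes up for the precision lost in `r(N-j) ≡ r(N)`. The base
`Q` is separate from `q` because both `Q = q` and `Q = q⁵` are needed. -/
lemma theta_cong {q Q : R} (hQ : q ∣ Q) {r : ℕ → R} (hr : ∀ n, r n * poch Q n = 1) (N : ℕ) :
    q ^ (N + 1) ∣ ∑ j ∈ Finset.range (N + 1), theta (q ^ 5) (q ^ 2) (q ^ 3) j * kern r N j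
      - (∑ j ∈ Finset.range (N + 1), theta (q ^ 5) (q ^ 2) (q ^ 3) j) * r N ^ 2 := by
  rw [Finset.sum_mul, ← Finset.sum_sub_distrib]
  refine Finset.dvd_sum fun j hj => ?_
  have hj' : j ≤ N := by simpa [Nat.lt_succ_iff] using hj
  obtain ⟨a, rfl⟩ := Nat.exists_eq_add_of_le hj'
  have h1 : q ^ (j + a + 1) ∣ r (j + a + j) - r (j + a) :=
    (pow_dvd_pow_of_dvd hQ _).trans (inv_cong hr (j + a) j)
  have h2 : q ^ (a + 1) ∣ r (a + j) - r a := (pow_dvd_pow_of_dvd hQ _).trans (inv_cong hr a j)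
  have h3 := mul_dvd_mul (theta_dvd q j) h2
  rw [← pow_add, ← add_assoc] at h3
  rw [kern_add, show 2 * j + a = j + a + j by ring]
  rw [show a + j = j + a by ring] at h3
  have := (h1.mul_left (theta (q ^ 5) (q ^ 2) (q ^ 3) j * r a)).sub (h3.mul_right (r (j + a)))
  convert this using 1
  ring

/-- The factor `q^{s²}` makes up for the precision lost in `r(N-s) ≡ r(N)`. -/
lemma sum_cong {q : R} {r : ℕ → R} (hr : ∀ n, r n * poch q n = 1) (N : ℕ) :
    q ^ (N + 1) ∣ ∑ s ∈ Finset.range (N + 1), q ^ (s ^ 2) * r (N - s) * r s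
      - (∑ s ∈ Finset.range (N + 1), q ^ (s ^ 2) * r s) * r N := by
  rw [Finset.sum_mul, ← Finset.sum_sub_distrib]
  refine Finset.dvd_sum fun j hj => ?_
  have hj' : j ≤ N := by simpa [Nat.lt_succ_iff] using hj
  obtain ⟨a, rfl⟩ := Nat.exists_eq_add_of_le hj'
  have h3 := mul_dvd_mul (pow_dvd_pow q (Nat.le_self_pow two_ne_zero j)) (inv_cong hr a j)
  rw [← pow_add, ← add_assoc, show a + j = j + a by ring] at h3
  rw [Nat.add_sub_cancel_left]
  have := h3.mul_left (- r j)
  convert this using 1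
  ring

/-- `(q;q)_{5N}` split into residue classes of the exponent modulo `5`. -/
lemma poch_five (q : R) (N : ℕ) :
    poch q (5 * N) = (∏ k ∈ Finset.range N, ((1 - q ^ (5 * k + 1)) * (1 - q ^ (5 * k + 4))))
      * (∏ k ∈ Finset.range N, ((1 - q ^ 2 * (q ^ 5) ^ k) * (1 - q ^ 3 * (q ^ 5) ^ k)))
      * poch (q ^ 5) N := by
  induction N with
  | zero => simp [poch]
  | succ N ih =>
    rw [show 5 * (N + 1) = 5 * N + 1 + 1 + 1 + 1 + 1 by ring]
    simp only [poch_succ, Finset.prod_range_succ, ih]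
    ring

/-- The first Rogers–Ramanujan identity modulo `q^{N+1}`. -/
lemma rr_cong {q : R} {r r5 : ℕ → R} (hr : ∀ n, r n * poch q n = 1)
    (hr5 : ∀ n, r5 n * poch (q ^ 5) n = 1) (N : ℕ) :
    q ^ (N + 1) ∣ (∑ s ∈ Finset.range (N + 1), q ^ (s ^ 2) * r s)
      * (∏ k ∈ Finset.range N, ((1 - q ^ (5 * k + 1)) * (1 - q ^ (5 * k + 4)))) - 1 := by
  have c1 := theta_cong dvd_rfl hr N
  have c2 := theta_cong (dvd_pow_self q (by norm_num : (5 : ℕ) ≠ 0)) hr5 N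
  have c3 := sum_cong hr N
  have c4 : q ^ (N + 1) ∣ poch q (5 * N) - poch q N := by
    have := poch_cong q N (4 * N)
    rwa [show N + 4 * N = 5 * N by ring] at this
  have c5 : q ^ (N + 1) ∣ poch (q ^ 5) (2 * N) - poch (q ^ 5) N := by
    have := poch_cong (q ^ 5) N N
    rw [← two_mul] at this
    exact (pow_dvd_pow_of_dvd (dvd_pow_self q (by norm_num : (5 : ℕ) ≠ 0)) _).trans this
  have e1 := finite_rr hr N
  have e2 := finite_jacobi hr5 (show q ^ 2 * q ^ 3 = q ^ 5 by ring) N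
  have e3 := poch_five q N
  have i1 := hr N
  have i2 := hr5 N
  rw [e1] at c3
  revert c1 c2 c3 c4 c5 e2 e3 i1 i2
  generalize (∏ k ∈ Finset.range N, ((1 - q ^ (5 * k + 1)) * (1 - q ^ (5 * k + 4)))) = P
  generalize (∏ k ∈ Finset.range N, ((1 - q ^ 2 * (q ^ 5) ^ k) * (1 - q ^ 3 * (q ^ 5) ^ k))) = P'
  generalize ∑ j ∈ Finset.range (N + 1), theta (q ^ 5) (q ^ 2) (q ^ 3) j = T
  generalize ∑ j ∈ Finset.range (N + 1), theta (q ^ 5) (q ^ 2) (q ^ 3) j * kern r N j = T1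
  generalize ∑ j ∈ Finset.range (N + 1), theta (q ^ 5) (q ^ 2) (q ^ 3) j * kern r5 N j = T2
  generalize ∑ s ∈ Finset.range (N + 1), q ^ (s ^ 2) * r s = S
  generalize poch q (5 * N) = p', poch q N = p, poch (q ^ 5) (2 * N) = u', poch (q ^ 5) N = u
  generalize r N = ρ, r5 N = v
  intro c1 c2 c3 c4 c5 e2 e3 i1 i2
  -- From here on the congruences are equalities in the quotient by `q^(N+1)`.
  simp only [← Ideal.Quotient.eq_zero_iff_dvd, map_sub, map_mul, map_pow, map_one, sub_eq_zero]
    at c1 c2 c3 c4 c5 ⊢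
  replace e2 := congrArg (Ideal.Quotient.mk (Ideal.span {q ^ (N + 1)})) e2
  replace e3 := congrArg (Ideal.Quotient.mk (Ideal.span {q ^ (N + 1)})) e3
  replace i1 := congrArg (Ideal.Quotient.mk (Ideal.span {q ^ (N + 1)})) i1
  replace i2 := congrArg (Ideal.Quotient.mk (Ideal.span {q ^ (N + 1)})) i2
  simp only [map_mul, map_one] at e2 e3 i1 i2
  generalize Ideal.Quotient.mk (Ideal.span {q ^ (N + 1)}) = π at *
  have hT : π P' * π u = π T := by
    rw [← e2, c5, c2]
    linear_combination π T * (π u * π v + 1) * i2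
  have hp : π p = π P * π T := by
    rw [← c4, e3, mul_assoc, hT]
  have hS : π S * π p = π T := by
    have : π S * π ρ = π T * π ρ ^ 2 := by rw [← c3, c1]
    linear_combination π p ^ 2 * this + (π T * (π ρ * π p + 1) - π S * π p) * i1
  -- `T` divides the unit `p = P T`, so it can be cancelled from `S P T = T`.
  linear_combination π ρ * π P * hS - (π S * π P - 1) * i1 - π ρ * hp

/-! ### Infinite sums and products of power series -/

open Filter Topology in
/-- A net of power series over the finite sets that stabilises modulo `X^{N+1}` from `range (N + 1)`
on converges coefficientwise. -/
lemma exists_limit (F : Finset ℕ → PowerSeries ℚ)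
    (hF : ∀ N s, Finset.range (N + 1) ⊆ s →
      (PowerSeries.X : PowerSeries ℚ) ^ (N + 1) ∣ F s - F (Finset.range (N + 1))) :
    ∃ S, Tendsto F atTop (𝓝 S) ∧
      ∀ N, (PowerSeries.X : PowerSeries ℚ) ^ (N + 1) ∣ F (Finset.range (N + 1)) - S := by
  have hc : ∀ d s, Finset.range (d + 1) ⊆ s →
      PowerSeries.coeff d (F s) = PowerSeries.coeff d (F (Finset.range (d + 1))) := by
    intro d s hs
    have := PowerSeries.X_pow_dvd_iff.1 (hF d s hs) d (Nat.lt_succ_self d)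
    rwa [map_sub, sub_eq_zero] at this
  refine ⟨PowerSeries.mk fun d => PowerSeries.coeff d (F (Finset.range (d + 1))), ?_, ?_⟩
  · refine (PowerSeries.WithPiTopology.tendsto_iff_coeff_tendsto _ _ _ _).2 fun d => ?_
    refine tendsto_const_nhds.congr' ?_
    filter_upwards [eventually_ge_atTop (Finset.range (d + 1))] with s hs
    rw [PowerSeries.coeff_mk, hc d s hs]
  · intro N
    refine PowerSeries.X_pow_dvd_iff.2 fun m hm => ?_
    rw [map_sub, PowerSeries.coeff_mk, sub_eq_zero]
    exact hc m _ (Finset.range_subset_range.2 hm)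

lemma tsum_cong (f : ℕ → PowerSeries ℚ)
    (hf : ∀ n, (PowerSeries.X : PowerSeries ℚ) ^ n ∣ f n) (N : ℕ) :
    (PowerSeries.X : PowerSeries ℚ) ^ (N + 1) ∣ ∑ n ∈ Finset.range (N + 1), f n - ∑' n, f n := by
  obtain ⟨S, hS, h⟩ := exists_limit (fun s => ∑ n ∈ s, f n) fun N s hs => by
    rw [← Finset.sum_sdiff hs, add_sub_cancel_right]
    refine Finset.dvd_sum fun n hn => (pow_dvd_pow _ ?_).trans (hf n)
    simp only [Finset.mem_sdiff, Finset.mem_range, not_lt] at hn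
    exact hn.2
  have : T2Space (PowerSeries ℚ) := PowerSeries.WithPiTopology.instT2Space ℚ
  have hs : HasSum f S := hS
  rw [hs.tsum_eq]
  exact h N

lemma tprod_cong (f : ℕ → PowerSeries ℚ)
    (hf : ∀ n, (PowerSeries.X : PowerSeries ℚ) ^ n ∣ f n - 1) (N : ℕ) :
    (PowerSeries.X : PowerSeries ℚ) ^ (N + 1) ∣ ∏ n ∈ Finset.range (N + 1), f n - ∏' n, f n := by
  obtain ⟨S, hS, h⟩ := exists_limit (fun s => ∏ n ∈ s, f n) fun N s hs => by
    rw [← Finset.prod_sdiff hs, ← sub_one_mul]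
    refine Dvd.dvd.mul_right ?_ _
    refine Finset.prod_induction f
      (fun g => (PowerSeries.X : PowerSeries ℚ) ^ (N + 1) ∣ g - 1) ?_ (by simp) ?_
    · intro a b ha hb
      have := (ha.mul_right b).add hb
      convert this using 1
      ring
    · intro n hn
      simp only [Finset.mem_sdiff, Finset.mem_range, not_lt] at hn
      exact (pow_dvd_pow _ hn.2).trans (hf n)
  have : T2Space (PowerSeries ℚ) := PowerSeries.WithPiTopology.instT2Space ℚ
  have hs : HasProd f S := hS
  rw [hs.tprod_eq]
  exact h N

lemma inv_mul_poch (e : ℕ) (n : ℕ) :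
    (poch (PowerSeries.X ^ (e + 1) : PowerSeries ℚ) n)⁻¹ * poch (PowerSeries.X ^ (e + 1)) n = 1 := by
  refine PowerSeries.inv_mul_cancel _ ?_
  simp [poch, map_prod]

end RR

/-- The first Rogers–Ramanujan identity. -/
theorem rogers_ramanujan_first :
    ∑' n : ℕ, q ^ (n ^ 2) * (qPoch n)⁻¹
      = (∏' k : ℕ, ((1 - q ^ (5 * k + 1)) * (1 - q ^ (5 * k + 4))))⁻¹ := by
  have hr : ∀ n, (qPoch n)⁻¹ * RR.poch q n = 1 := fun n => by
    have h := RR.inv_mul_poch 0 n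
    rw [zero_add, pow_one] at h
    exact h
  have hr5 : ∀ n, (RR.poch (q ^ 5) n)⁻¹ * RR.poch (q ^ 5) n = 1 := RR.inv_mul_poch 4
  have key : (∑' n : ℕ, q ^ (n ^ 2) * (qPoch n)⁻¹)
      * (∏' k : ℕ, ((1 - q ^ (5 * k + 1)) * (1 - q ^ (5 * k + 4)))) = 1 := by
    rw [← sub_eq_zero]
    ext d
    have hsum := RR.tsum_cong (fun n => q ^ (n ^ 2) * (qPoch n)⁻¹)
      (fun n => (pow_dvd_pow q (Nat.le_self_pow two_ne_zero n)).mul_right _) (d + 1)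
    have hprod := RR.tprod_cong (fun k => (1 - q ^ (5 * k + 1)) * (1 - q ^ (5 * k + 4)))
      (fun k => ⟨- q ^ (4 * k + 1) - q ^ (4 * k + 4) + q ^ (9 * k + 5), by
        change _ = q ^ k * _
        ring⟩) d
    have hrr := RR.rr_cong hr hr5 (d + 1)
    replace hsum := (pow_dvd_pow _ (Nat.le_succ (d + 1))).trans hsum
    replace hrr := (pow_dvd_pow _ (Nat.le_succ (d + 1))).trans hrr
    suffices h : q ^ (d + 1) ∣ (∑' n : ℕ, q ^ (n ^ 2) * (qPoch n)⁻¹)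
        * (∏' k : ℕ, ((1 - q ^ (5 * k + 1)) * (1 - q ^ (5 * k + 4)))) - 1 from
      PowerSeries.X_pow_dvd_iff.1 h d (Nat.lt_succ_self d)
    generalize (∑' n : ℕ, q ^ (n ^ 2) * (qPoch n)⁻¹) = L at *
    generalize (∏' k : ℕ, ((1 - q ^ (5 * k + 1)) * (1 - q ^ (5 * k + 4)))) = P at *
    have := (hrr.sub (hsum.mul_right
      (∏ k ∈ Finset.range (d + 1), ((1 - q ^ (5 * k + 1)) * (1 - q ^ (5 * k + 4)))))).sub
      (hprod.mul_left L)
    convert this using 1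
    ring
  refine (PowerSeries.eq_inv_iff_mul_eq_one fun h0 => ?_).2 key
  have := congrArg PowerSeries.constantCoeff key
  rw [map_mul, h0, mul_zero, map_one] at this
  exact zero_ne_one this
end

section
/- The Andrews–Gordon identities: for integers r ≥ 2 and 1 ≤ i ≤ r, the sum over n_1 ≥ n_2 ≥ ⋯ ≥ n_{r-1} ≥ 0 of q^(n_1^2+⋯+n_{r-1}^2 + n_i+⋯+n_{r-1}) / (q;q)_{n_1} · [n_1 choose n_1-n_2]_q ⋯ [n_{r-2} choose n_{r-2}-n_{r-1}]_q equals (q^{2r+1}, q^i, q^{2r-i+1}; q^{2r+1})_∞ / (q;q)_∞. -/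
/-!
The proof runs along the Bailey chain. For an element `x` of a field write `(x)_n` for the finite
product `(1 - x) ⋯ (1 - x^n)`, with `1 / (x)_n = 0` for `n < 0`. The `q`-Chu–Vandermonde sum gives,
for `c ∈ {0, 1}`, the Bailey step (`bailey_sum`)

  `∑_s x^(s² + cs) / ((x)_{N-s} (x)_{s-j} (x)_{s+j+c}) = x^(j² + cj) / ((x)_{N-j} (x)_{N+j+c})`.

By the `q`-binomial theorem the weights `(-1)^j x^(j(j-1)/2)` against the kernel
`1 / ((x)_{N-j} (x)_{N+j+1})` sum to `1` if `N = 0` and to `0` otherwise (`delta_sum`). A first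
step with `c = 1` turns this into `1 / (x)_N`, and `r - i` further ones produce the innermost
summations of the Andrews–Gordon sum, those whose variable occurs linearly in the exponent. Then
the kernel with `c = 1` may be replaced by the one with `c = 0`, because the difference is
antisymmetric under `j ↦ -1 - j` (`kernel_switch`); the step with `c = 0`, applied
`i - 1` times, yields the outer summations. The
result is a finite Andrews–Gordon identity (`bailey_eq_theta`): with an additional factor
`1 / (x)_{N - n₁}` in the summand, the sum over `N ≥ n₁ ≥ ⋯ ≥ n_{r-1} ≥ 0` equals

  `∑_j (-1)^j x^(((2r+1) j² + (2r-2i+1) j) / 2) / ((x)_{N-j} (x)_{N+j})`.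

This is used in the field of Laurent series with `x = q`. Letting `N` tend to infinity coefficient
by coefficient (`tannery`), the left side becomes `1 / (q;q)_∞` times the Andrews–Gordon sum, and
the right side `1 / (q;q)_∞²` times the theta series. The latter is summed by the Jacobi triple product
with base `q^(2r+1)` (`hasSum_theta`), itself the limit of the finite version
`finite_triple_product` of the `q`-binomial theorem.

In the finite identities, `k` is the number of summation variables, so that `k = r - 1`,
and `a = i - 1` is the number of variables without a linear term.
-/

open scoped Finset

/-! ### The Bailey step and the q-binomial theorem over a field -/

section FieldIdentities

variable {K : Type*} [Field K]

/-- The reciprocal `1 / (x;x)_n` for an integer `n`, with the usual convention that it vanishes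
for negative `n`. -/
noncomputable def rp (x : K) (n : ℤ) : K :=
  if n < 0 then 0 else (∏ k ∈ Finset.range n.toNat, (1 - x ^ (k + 1)))⁻¹

lemma rp_neg (x : K) {n : ℤ} (h : n < 0) : rp x n = 0 := if_pos h

lemma rp_zero (x : K) : rp x 0 = 1 := by simp [rp]

/-- The recurrence of `rp`, valid for every integer `n`: at `n = 0` both sides vanish. -/
lemma rp_step {x : K} (hx : ∀ n : ℕ, x ^ (n + 1) ≠ 1) (n : ℤ) :
    (1 - x ^ n) * rp x n = rp x (n - 1) := by
  rcases lt_trichotomy n 0 with h | h | h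
  · rw [rp_neg x h, rp_neg x (by omega), mul_zero]
  · subst h
    rw [rp_neg x (by omega : (0 : ℤ) - 1 < 0)]
    simp
  · obtain ⟨m, rfl⟩ : ∃ m : ℕ, n = m + 1 := ⟨(n - 1).toNat, by omega⟩
    have h1 : ((m : ℤ) + 1).toNat = m + 1 := by omega
    have h2 : ((m : ℤ) + 1 - 1).toNat = m := by omega
    rw [rp, rp, if_neg (by omega), if_neg (by omega), h1, h2, Finset.prod_range_succ, mul_inv]
    have h3 : (1 : K) - x ^ (m + 1) ≠ 0 := sub_ne_zero.2 (hx m).symm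
    have h4 : x ^ ((m : ℤ) + 1) = x ^ (m + 1) := by exact_mod_cast zpow_natCast x (m + 1)
    rw [h4]
    field_simp

/-- The `q`-Chu–Vandermonde sum in the form attached to Durfee rectangles. -/
lemma durfee_sum {x : K} (hx0 : x ≠ 0) (hx : ∀ n : ℕ, x ^ (n + 1) ≠ 1) (M : ℕ) :
    ∀ d : ℤ, ∑ t ∈ Finset.range (M + 1),
      x ^ ((t : ℤ) ^ 2 + d * t) * rp x (M - t) * rp x t * rp x (t + d) =
        rp x M * rp x (M + d) := by
  induction M with
  | zero => intro d; simp [rp_zero]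
  | succ M ih =>
    intro d
    have hne : (1 : K) - x ^ (((M + 1 : ℕ) : ℤ)) ≠ 0 := by
      rw [zpow_natCast]; exact sub_ne_zero.2 (hx M).symm
    apply mul_left_cancel₀ hne
    -- `1 - x ^ (M+1) = x ^ t (1 - x ^ (M+1-t)) + (1 - x ^ t)` lowers one index in each summand.
    have key : ∀ t : ℕ, (1 - x ^ (((M + 1 : ℕ) : ℤ))) *
        (x ^ ((t : ℤ) ^ 2 + d * t) * rp x (((M + 1 : ℕ) : ℤ) - t) * rp x t * rp x (t + d)) =
        x ^ ((t : ℤ) ^ 2 + d * t + t) * rp x ((M : ℤ) - t) * rp x t * rp x (t + d) +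
        x ^ ((t : ℤ) ^ 2 + d * t) * rp x (((M + 1 : ℕ) : ℤ) - t) * rp x (t - 1) *
          rp x (t + d) := by
      intro t
      have e1 := rp_step hx (((M + 1 : ℕ) : ℤ) - t)
      have e2 := rp_step hx t
      rw [show ((M + 1 : ℕ) : ℤ) - t - 1 = (M : ℤ) - t by push_cast; ring] at e1
      rw [← e1, ← e2, zpow_add₀ hx0 _ (t : ℤ)]
      have e3 : x ^ (((M + 1 : ℕ) : ℤ)) = x ^ (((M + 1 : ℕ) : ℤ) - t) * x ^ (t : ℤ) := by
        rw [← zpow_add₀ hx0]; congr 1; ring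
      rw [e3]; ring
    rw [Finset.mul_sum, Finset.sum_congr rfl (fun t _ => key t), Finset.sum_add_distrib,
      Finset.sum_range_succ, rp_neg x (by push_cast; omega : (M : ℤ) - ((M + 1 : ℕ) : ℤ) < 0),
      Finset.sum_range_succ' (n := M + 1),
      rp_neg x (by simp : (((0 : ℕ) : ℤ) - 1) < 0)]
    simp only [mul_zero, zero_mul, add_zero]
    rw [← Finset.sum_add_distrib]
    have step := rp_step hx ((M + 1 : ℕ) : ℤ)
    rw [show ((M + 1 : ℕ) : ℤ) - 1 = M by push_cast; ring] at step
    rw [← mul_assoc, step, show ((M + 1 : ℕ) : ℤ) + d = M + (d + 1) by push_cast; ring, ← ih]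
    refine Finset.sum_congr rfl fun t _ => ?_
    have e1 := rp_step hx ((t : ℤ) + d + 1)
    rw [show (t : ℤ) + d + 1 - 1 = t + d by ring] at e1
    rw [show ((t + 1 : ℕ) : ℤ) + d = t + d + 1 by push_cast; ring, ← e1,
      show ((M + 1 : ℕ) : ℤ) - ((t + 1 : ℕ) : ℤ) = M - t by push_cast; ring,
      show ((t + 1 : ℕ) : ℤ) - 1 = t by push_cast; ring,
      show (t : ℤ) + (d + 1) = t + d + 1 by ring,
      show ((t + 1 : ℕ) : ℤ) ^ 2 + d * ((t + 1 : ℕ) : ℤ) =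
        ((t : ℤ) ^ 2 + d * t + t) + (t + d + 1) by push_cast; ring,
      show (t : ℤ) ^ 2 + (d + 1) * t = (t : ℤ) ^ 2 + d * t + t by ring, zpow_add₀ hx0 _ (t + d + 1)]
    ring

/-- The case `j ≥ 0` of `bailey_sum`, where the sum starts at `s = j`. -/
lemma bailey_sum_nat {x : K} (hx0 : x ≠ 0) (hx : ∀ n : ℕ, x ^ (n + 1) ≠ 1) (N c j : ℕ) :
    ∑ s ∈ Finset.range (N + 1),
      x ^ (s ^ 2 + c * s) * rp x (N - s) * (rp x (s - j) * rp x (s + j + c)) =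
        x ^ ((j : ℤ) ^ 2 + c * j) * (rp x (N - j) * rp x (N + j + c)) := by
  by_cases h : j ≤ N
  · obtain ⟨M, rfl⟩ := Nat.exists_eq_add_of_le h
    have hz : ∑ s ∈ Finset.range j, x ^ (s ^ 2 + c * s) * rp x (((j + M : ℕ) : ℤ) - s) *
        (rp x (s - j) * rp x (s + j + c)) = 0 := by
      refine Finset.sum_eq_zero fun s hs => ?_
      have := Finset.mem_range.1 hs
      rw [rp_neg x (by omega : (s : ℤ) - j < 0)]; ring
    rw [add_assoc, Finset.sum_range_add, hz, zero_add,
      show ((j + M : ℕ) : ℤ) - j = M by push_cast; ring,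
      show ((j + M : ℕ) : ℤ) + j + c = M + (2 * j + c) by push_cast; ring,
      ← durfee_sum hx0 hx M (2 * j + c), Finset.mul_sum]
    refine Finset.sum_congr rfl fun t _ => ?_
    rw [show ((j + M : ℕ) : ℤ) - ((j + t : ℕ) : ℤ) = M - t by push_cast; ring,
      show ((j + t : ℕ) : ℤ) - j = t by push_cast; ring,
      show ((j + t : ℕ) : ℤ) + j + c = t + (2 * j + c) by push_cast; ring,
      ← zpow_natCast x, show (((j + t) ^ 2 + c * (j + t) : ℕ) : ℤ) =
        ((j : ℤ) ^ 2 + c * j) + ((t : ℤ) ^ 2 + (2 * j + c) * t) by push_cast; ring,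
      zpow_add₀ hx0]
    ring
  · rw [rp_neg x (by omega : (N : ℤ) - j < 0)]
    rw [zero_mul, mul_zero]
    refine Finset.sum_eq_zero fun s hs => ?_
    have := Finset.mem_range.1 hs
    rw [rp_neg x (by omega : (s : ℤ) - j < 0)]; ring

/-- One step of the Bailey chain: `1 / ((x)_{s-j} (x)_{s+j+c})` is, up to the factor
`x ^ (j² + cj)`, reproduced by the kernel `x ^ (s² + cs) / (x)_{N-s}`. -/
lemma bailey_sum {x : K} (hx0 : x ≠ 0) (hx : ∀ n : ℕ, x ^ (n + 1) ≠ 1) (N c : ℕ) (hc : c ≤ 1)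
    (j : ℤ) :
    ∑ s ∈ Finset.range (N + 1),
      x ^ (s ^ 2 + c * s) * rp x (N - s) * (rp x (s - j) * rp x (s + j + c)) =
        x ^ (j ^ 2 + c * j) * (rp x (N - j) * rp x (N + j + c)) := by
  by_cases h : 0 ≤ j
  · lift j to ℕ using h
    exact bailey_sum_nat hx0 hx N c j
  -- Both sides are invariant under `j ↦ -j - c`.
  · obtain ⟨m, hm⟩ : ∃ m : ℕ, j = -m - c := ⟨(-j - c).toNat, by omega⟩
    subst hm
    have := bailey_sum_nat hx0 hx N c m
    rw [show (-(m : ℤ) - c) ^ 2 + c * (-(m : ℤ) - c) = (m : ℤ) ^ 2 + c * m by ring,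
      show (N : ℤ) - (-(m : ℤ) - c) = N + m + c by ring,
      show (N : ℤ) + (-(m : ℤ) - c) + c = N - m by ring, mul_comm (rp x (N + m + c)), ← this]
    refine Finset.sum_congr rfl fun s _ => ?_
    rw [show (s : ℤ) - (-(m : ℤ) - c) = s + m + c by ring,
      show (s : ℤ) + (-(m : ℤ) - c) + c = s - m by ring]
    ring

/-- The finite `q`-binomial theorem. -/
lemma q_binomial {x : K} (hx0 : x ≠ 0) (hx : ∀ n : ℕ, x ^ (n + 1) ≠ 1) (z : K) (n : ℕ) :
    ∑ k ∈ Finset.range (n + 1),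
      (-1) ^ k * x ^ (k.choose 2) * z ^ k * (rp x k * rp x (n - k)) =
        rp x n * ∏ k ∈ Finset.range n, (1 - z * x ^ k) := by
  induction n with
  | zero => simp [rp_zero]
  | succ n ih =>
    have hne : (1 : K) - x ^ (((n + 1 : ℕ) : ℤ)) ≠ 0 := by
      rw [zpow_natCast]; exact sub_ne_zero.2 (hx n).symm
    apply mul_left_cancel₀ hne
    have key : ∀ k : ℕ, (1 - x ^ (((n + 1 : ℕ) : ℤ))) *
        ((-1) ^ k * x ^ (k.choose 2) * z ^ k * (rp x k * rp x (((n + 1 : ℕ) : ℤ) - k))) =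
        (-1) ^ k * x ^ (k.choose 2) * z ^ k * (rp x k * rp x ((n : ℤ) - k)) +
        (-1) ^ k * x ^ (k.choose 2) * z ^ k * x ^ (((n + 1 : ℕ) : ℤ) - k) *
          (rp x (k - 1) * rp x (((n + 1 : ℕ) : ℤ) - k)) := by
      intro k
      have e1 := rp_step hx (((n + 1 : ℕ) : ℤ) - k)
      have e2 := rp_step hx k
      rw [show ((n + 1 : ℕ) : ℤ) - k - 1 = (n : ℤ) - k by push_cast; ring] at e1
      rw [← e1, ← e2]
      have e3 : x ^ (((n + 1 : ℕ) : ℤ)) = x ^ (((n + 1 : ℕ) : ℤ) - k) * x ^ (k : ℤ) := by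
        rw [← zpow_add₀ hx0]; congr 1; ring
      rw [e3]; ring
    have step := rp_step hx ((n + 1 : ℕ) : ℤ)
    rw [show ((n + 1 : ℕ) : ℤ) - 1 = n by push_cast; ring] at step
    rw [Finset.mul_sum, Finset.sum_congr rfl (fun t _ => key t), Finset.sum_add_distrib,
      Finset.sum_range_succ, rp_neg x (by push_cast; omega : (n : ℤ) - ((n + 1 : ℕ) : ℤ) < 0),
      Finset.sum_range_succ' (n := n + 1), rp_neg x (by simp : (((0 : ℕ) : ℤ) - 1) < 0)]
    simp only [mul_zero, zero_mul, add_zero]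
    rw [ih, ← mul_assoc (1 - _), step, Finset.prod_range_succ, ← mul_assoc, ← ih]
    have : ∑ k ∈ Finset.range (n + 1), (-1) ^ (k + 1) * x ^ ((k + 1).choose 2) * z ^ (k + 1) *
        x ^ (((n + 1 : ℕ) : ℤ) - ((k + 1 : ℕ) : ℤ)) *
          (rp x (((k + 1 : ℕ) : ℤ) - 1) * rp x (((n + 1 : ℕ) : ℤ) - ((k + 1 : ℕ) : ℤ))) =
        -(z * x ^ n) * ∑ k ∈ Finset.range (n + 1),
          (-1) ^ k * x ^ (k.choose 2) * z ^ k * (rp x k * rp x (n - k)) := by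
      rw [Finset.mul_sum]
      refine Finset.sum_congr rfl fun k _ => ?_
      have e4 : x ^ n = x ^ ((n : ℤ) - k) * x ^ k := by
        rw [← zpow_natCast x k, ← zpow_add₀ hx0, ← zpow_natCast]; congr 1; ring
      rw [show ((n + 1 : ℕ) : ℤ) - ((k + 1 : ℕ) : ℤ) = n - k by push_cast; ring,
        show ((k + 1 : ℕ) : ℤ) - 1 = k by push_cast; ring,
        show (k + 1).choose 2 = k + k.choose 2 by
          rw [Nat.choose_succ_succ' k 1, Nat.choose_one_right], e4]
      ring
    rw [this]; ring

end FieldIdentities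

/-! ### The Bailey chain and the finite Andrews–Gordon identity -/

section ThetaSums

variable {K : Type*} [Field K]

/-- The triangular numbers `j (j - 1) / 2`, indexed by all integers. -/
def tri (j : ℤ) : ℤ := j * (j - 1) / 2

lemma two_mul_tri (j : ℤ) : 2 * tri j = j * (j - 1) :=
  Int.mul_ediv_cancel' (Int.even_mul_pred_self j).two_dvd

lemma choose_two_eq_tri (k : ℕ) : ((k.choose 2 : ℕ) : ℤ) = tri k := by
  induction k with
  | zero => rfl
  | succ k ih =>
    have h1 := two_mul_tri k
    have h2 := two_mul_tri ((k + 1 : ℕ) : ℤ)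
    rw [Nat.choose_succ_succ' k 1, Nat.choose_one_right]
    push_cast at h2 ⊢
    rw [ih]
    nlinarith

lemma sum_Icc_eq_sum_range (φ : ℤ → K) (N : ℕ) :
    ∑ j ∈ Finset.Icc (-((N : ℤ) + 1)) N, φ j =
      ∑ k ∈ Finset.range (2 * N + 1 + 1), φ (k - (N + 1)) := by
  refine Finset.sum_bij' (fun j _ => (j + (N + 1)).toNat) (fun k _ => (k : ℤ) - (N + 1))
    ?_ ?_ ?_ ?_ ?_
  · intro j hj; rw [Finset.mem_Icc] at hj; rw [Finset.mem_range]; omega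
  · intro k hk; rw [Finset.mem_range] at hk; rw [Finset.mem_Icc]; omega
  · intro j hj; rw [Finset.mem_Icc] at hj; omega
  · intro k hk; omega
  · intro j hj; rw [Finset.mem_Icc] at hj; congr 1; omega

/-- The unit Bailey pair relative to the kernel with `c = 1`. -/
lemma delta_sum {x : K} (hx0 : x ≠ 0) (hx : ∀ n : ℕ, x ^ (n + 1) ≠ 1) (N : ℕ) :
    ∑ j ∈ Finset.Icc (-((N : ℤ) + 1)) N,
      (-1) ^ j * x ^ tri j * (rp x (N - j) * rp x (N + j + 1)) = if N = 0 then 1 else 0 := by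
  have hm : (-1 : K) ≠ 0 := by simp
  split_ifs with h0
  · subst h0
    have h1 := rp_step hx 1
    have h2 : tri (-1) = 1 := rfl
    have h3 : tri 0 = 0 := rfl
    rw [sum_Icc_eq_sum_range]
    simp only [Finset.sum_range_succ, Finset.sum_range_zero]
    simp [h2, h3, rp_zero] at h1 ⊢
    linear_combination h1
  · -- The `q`-binomial theorem at `z = x ^ (-N-1)`, where the product has a vanishing factor.
    have hC : (-1 : K) ^ ((N : ℤ) + 1) * x ^ (-tri (N + 2)) ≠ 0 :=
      mul_ne_zero (zpow_ne_zero _ hm) (zpow_ne_zero _ hx0)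
    apply mul_left_cancel₀ hC
    have hb := q_binomial hx0 hx (x ^ (-((N : ℤ) + 1))) (2 * N + 1)
    have hz : ∏ k ∈ Finset.range (2 * N + 1), (1 - x ^ (-((N : ℤ) + 1)) * x ^ k) = 0 := by
      apply Finset.prod_eq_zero (i := N + 1) (Finset.mem_range.2 (by omega))
      rw [← zpow_natCast x, ← zpow_add₀ hx0]
      simp
    rw [hz, mul_zero] at hb
    rw [mul_zero, ← hb, sum_Icc_eq_sum_range, Finset.mul_sum]
    refine Finset.sum_congr rfl fun k _ => ?_
    rw [show (N : ℤ) - (k - (N + 1)) = ((2 * N + 1 : ℕ) : ℤ) - k by push_cast; ring,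
      show (N : ℤ) + (k - (N + 1)) + 1 = k by ring, ← zpow_natCast x, choose_two_eq_tri,
      ← zpow_natCast (-1 : K), ← zpow_natCast, ← zpow_mul]
    have e1 : tri (k : ℤ) + -((N : ℤ) + 1) * k = -tri (N + 2) + tri (k - (N + 1)) := by
      apply mul_left_cancel₀ (two_ne_zero : (2 : ℤ) ≠ 0)
      linear_combination two_mul_tri k + two_mul_tri ((N : ℤ) + 2) -
        two_mul_tri ((k : ℤ) - (N + 1))
    have e2 : (-1 : K) ^ (k : ℤ) = (-1) ^ ((N : ℤ) + 1) * (-1) ^ ((k : ℤ) - (N + 1)) := by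
      rw [← zpow_add₀ hm]; congr 1; ring
    have e3 := congrArg (x ^ ·) e1
    simp only [zpow_add₀ hx0 (tri (k : ℤ)), zpow_add₀ hx0 (-tri ((N : ℤ) + 2))] at e3
    rw [e2]
    linear_combination (-1) ^ ((N : ℤ) + 1) * (-1) ^ ((k : ℤ) - (N + 1)) *
      (rp x (((2 * N + 1 : ℕ) : ℤ) - k) * rp x k) * (-e3)

/-- Reversing the product `∏ (1 - y x ^ (k - N))` and taking out the leading monomials, which turns
the `q`-binomial theorem into the two-sided finite triple product. -/
lemma prod_reflect {x y : K} (hx0 : x ≠ 0) (hy : y ≠ 0) (N : ℕ) :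
    ∏ k ∈ Finset.range N, (1 - y * x ^ (-(N : ℤ)) * x ^ k) =
      (-1) ^ N * y ^ N * x ^ (-tri (N + 1)) * ∏ k ∈ Finset.range N, (1 - x ^ (k + 1) * y⁻¹) := by
  have h1 : ∏ k ∈ Finset.range N, (1 - y * x ^ (-(N : ℤ)) * x ^ k) =
      ∏ k ∈ Finset.range N, (1 - y * x ^ (-((k : ℤ) + 1))) := by
    rw [← Finset.prod_range_reflect]
    refine Finset.prod_congr rfl fun k hk => ?_
    have := Finset.mem_range.1 hk
    rw [mul_assoc, ← zpow_natCast x, ← zpow_add₀ hx0]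
    congr 3; omega
  rw [h1]
  clear h1
  induction N with
  | zero => simp [show tri 1 = 0 from rfl]
  | succ N ih =>
    have e1 : -tri (((N + 1 : ℕ) : ℤ) + 1) = -tri ((N : ℤ) + 1) + -((N : ℤ) + 1) := by
      apply mul_left_cancel₀ (two_ne_zero : (2 : ℤ) ≠ 0)
      push_cast
      linear_combination two_mul_tri ((N : ℤ) + 1) - two_mul_tri ((N : ℤ) + 1 + 1)
    have e2 : x ^ (-((N : ℤ) + 1)) * x ^ (N + 1) = 1 := by
      rw [← zpow_natCast x, ← zpow_add₀ hx0]; simp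
    have e3 : y * y⁻¹ = 1 := mul_inv_cancel₀ hy
    rw [Finset.prod_range_succ, Finset.prod_range_succ, ih, e1, zpow_add₀ hx0]
    generalize x ^ (-((N : ℤ) + 1)) = u at *
    generalize x ^ (N + 1) = v at *
    generalize ∏ k ∈ Finset.range N, (1 - x ^ (k + 1) * y⁻¹) = p
    linear_combination (-(-1) ^ N * y ^ N * x ^ (-tri (N + 1)) * p) * (y * y⁻¹ * e2 + e3)

/-- The finite form of the Jacobi triple product. -/
lemma finite_triple_product {x y : K} (hx0 : x ≠ 0) (hx : ∀ n : ℕ, x ^ (n + 1) ≠ 1)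
    (hy : y ≠ 0) (N : ℕ) :
    ∑ j ∈ Finset.Icc (-((N : ℤ) + 1)) N,
      (-1) ^ j * x ^ tri j * y ^ j * (rp x (N - j) * rp x (N + j)) =
        rp x (2 * N) * ∏ k ∈ Finset.range N, ((1 - y * x ^ k) * (1 - x ^ (k + 1) * y⁻¹)) := by
  have hm : (-1 : K) ≠ 0 := by simp
  have hC : (-1 : K) ^ N * y ^ N * x ^ (-tri (N + 1)) ≠ 0 :=
    mul_ne_zero (mul_ne_zero (pow_ne_zero _ hm) (pow_ne_zero _ hy)) (zpow_ne_zero _ hx0)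
  apply mul_left_cancel₀ hC
  have hb := q_binomial hx0 hx (y * x ^ (-(N : ℤ))) (N + N)
  have hs : ∏ k ∈ Finset.range N, (1 - y * x ^ (-(N : ℤ)) * x ^ (N + k)) =
      ∏ k ∈ Finset.range N, (1 - y * x ^ k) := by
    refine Finset.prod_congr rfl fun k _ => ?_
    have : x ^ (-(N : ℤ)) * x ^ N = 1 := by rw [← zpow_natCast x, ← zpow_add₀ hx0]; simp
    rw [pow_add]; linear_combination -y * x ^ k * this
  rw [Finset.prod_range_add, hs, prod_reflect hx0 hy] at hb
  rw [Finset.prod_mul_distrib, sum_Icc_eq_sum_range, Finset.sum_range_succ',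
    rp_neg x (by push_cast; omega : (N : ℤ) + (((0 : ℕ) : ℤ) - (N + 1)) < 0)]
  have hb' : rp x (2 * N) * ((-1) ^ N * y ^ N * x ^ (-tri (N + 1)) *
      (∏ k ∈ Finset.range N, (1 - x ^ (k + 1) * y⁻¹)) * ∏ k ∈ Finset.range N, (1 - y * x ^ k)) =
      rp x ((N + N : ℕ) : ℤ) * ((-1) ^ N * y ^ N * x ^ (-tri (N + 1)) *
      (∏ k ∈ Finset.range N, (1 - x ^ (k + 1) * y⁻¹)) * ∏ k ∈ Finset.range N, (1 - y * x ^ k)) := by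
    congr 2; push_cast; ring
  rw [← hb] at hb'
  refine Eq.trans ?_ (hb'.symm.trans (by ring))
  rw [mul_zero, mul_zero, add_zero, Finset.mul_sum, ← two_mul]
  refine Finset.sum_congr rfl fun k _ => ?_
  rw [show (N : ℤ) - (((k + 1 : ℕ) : ℤ) - (N + 1)) = ((2 * N : ℕ) : ℤ) - k by push_cast; ring,
    show (N : ℤ) + (((k + 1 : ℕ) : ℤ) - (N + 1)) = k by push_cast; ring,
    show ((k + 1 : ℕ) : ℤ) - (N + 1) = (k : ℤ) - N by push_cast; ring,
    ← zpow_natCast x, choose_two_eq_tri, mul_pow, ← zpow_natCast (-1 : K) k,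
    ← zpow_natCast (x ^ (-(N : ℤ))), ← zpow_mul, ← zpow_natCast y k,
    ← zpow_natCast y N, ← zpow_natCast (-1 : K) N]
  have e1 : tri (k : ℤ) + -(N : ℤ) * k = -tri (N + 1) + tri (k - N) := by
    apply mul_left_cancel₀ (two_ne_zero : (2 : ℤ) ≠ 0)
    linear_combination two_mul_tri k + two_mul_tri ((N : ℤ) + 1) - two_mul_tri ((k : ℤ) - N)
  have e2 : (-1 : K) ^ (k : ℤ) = (-1) ^ (N : ℤ) * (-1) ^ ((k : ℤ) - N) := by
    rw [← zpow_add₀ hm]; congr 1; ring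
  have e4 : y ^ (k : ℤ) = y ^ (N : ℤ) * y ^ ((k : ℤ) - N) := by
    rw [← zpow_add₀ hy]; congr 1; ring
  have e3 := congrArg (x ^ ·) e1
  simp only [zpow_add₀ hx0 (tri (k : ℤ)), zpow_add₀ hx0 (-tri ((N : ℤ) + 1))] at e3
  rw [e2, e4]
  linear_combination (-1) ^ (N : ℤ) * (-1) ^ ((k : ℤ) - N) * (y ^ (N : ℤ) * y ^ ((k : ℤ) - N)) *
    (rp x (((2 * N : ℕ) : ℤ) - k) * rp x k) * (-e3)

/-- The finite Andrews–Gordon sum over `N ≥ n₁ ≥ ⋯ ≥ n_k ≥ 0`, as an iterated sum: the summand is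
`x ^ (∑ n_j² + ∑_{j > a} n_j) / ((x)_{N - n₁} (x)_{n₁ - n₂} ⋯ (x)_{n_k})`. -/
noncomputable def bailey (x : K) : ℕ → ℕ → ℕ → K
  | 0, _, N => rp x N
  | k + 1, a, N => ∑ s ∈ Finset.range (N + 1),
      x ^ (s ^ 2 + (if a = 0 then 1 else 0) * s) * rp x (N - s) * bailey x k (a - 1) s

/-- Bailey's lemma for a family of weights `w`: one more summation multiplies the weight `w j` by
`x ^ (j² + cj)` and keeps the shape of the kernel. -/
lemma bailey_step {x : K} (hx0 : x ≠ 0) (hx : ∀ n : ℕ, x ^ (n + 1) ≠ 1) (N c : ℕ) (hc : c ≤ 1)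
    (J : Finset ℤ) (w : ℤ → K) (g : ℕ → K)
    (hg : ∀ s ≤ N, g s = ∑ j ∈ J, w j * (rp x (s - j) * rp x (s + j + c))) :
    ∑ s ∈ Finset.range (N + 1), x ^ (s ^ 2 + c * s) * rp x (N - s) * g s =
      ∑ j ∈ J, w j * x ^ (j ^ 2 + c * j) * (rp x (N - j) * rp x (N + j + c)) := by
  have h1 : ∀ s ∈ Finset.range (N + 1), x ^ (s ^ 2 + c * s) * rp x (N - s) * g s =
      ∑ j ∈ J, w j * (x ^ (s ^ 2 + c * s) * rp x (N - s) * (rp x (s - j) * rp x (s + j + c))) := by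
    intro s hs
    rw [hg s (by have := Finset.mem_range.1 hs; omega), Finset.mul_sum]
    exact Finset.sum_congr rfl fun j _ => by ring
  rw [Finset.sum_congr rfl h1, Finset.sum_comm]
  refine Finset.sum_congr rfl fun j _ => ?_
  rw [← Finset.mul_sum, bailey_sum hx0 hx N c hc j]
  ring

/-- The weights `(-1)^j x ^ (j(j-1)/2)` give the unit Bailey pair: the sum is `1` for `N = 0`
and `0` otherwise. The index range `[-(B+1), B]` contains the support `[-(N+1), N]`, and letting it
depend on a bound `B` only allows sums for different `N` to be interchanged. -/
lemma delta_sum' {x : K} (hx0 : x ≠ 0) (hx : ∀ n : ℕ, x ^ (n + 1) ≠ 1) {N B : ℕ} (hN : N ≤ B) :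
    (if N = 0 then 1 else 0) = ∑ j ∈ Finset.Icc (-((B : ℤ) + 1)) B,
      (-1) ^ j * x ^ tri j * (rp x (N - j) * rp x (N + j + (1 : ℕ))) := by
  rw [← delta_sum hx0 hx N]
  push_cast
  apply Finset.sum_subset
  · intro j; simp only [Finset.mem_Icc]; omega
  · intro j _ hj
    rw [Finset.mem_Icc, not_and_or] at hj
    rcases hj with hj | hj
    · rw [rp_neg x (by omega : (N : ℤ) + j + 1 < 0)]; ring
    · rw [rp_neg x (by omega : (N : ℤ) - j < 0)]; ring

/-- If every variable has a linear term (`a = 0`), the finite sum results from `k + 1`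
Bailey steps with `c = 1` applied to the unit Bailey pair; the first of these produces
`1 / (x)_N`. -/
lemma bailey_eq_odd {x : K} (hx0 : x ≠ 0) (hx : ∀ n : ℕ, x ^ (n + 1) ≠ 1) (B k : ℕ) :
    ∀ N ≤ B, bailey x k 0 N = ∑ j ∈ Finset.Icc (-((B : ℤ) + 1)) B,
      (-1) ^ j * x ^ (tri j + (k + 1) * (j ^ 2 + j)) *
        (rp x (N - j) * rp x (N + j + (1 : ℕ))) := by
  induction k with
  | zero =>
    intro N hN
    have := bailey_step hx0 hx N 1 le_rfl _ (fun j => (-1) ^ j * x ^ tri j)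
      (fun s => if s = 0 then 1 else 0) (fun s hs => delta_sum' hx0 hx (hs.trans hN))
    rw [bailey]
    rw [Finset.sum_eq_single 0 (fun s _ hs => by simp [hs]) (by simp)] at this
    simp only [if_true, Nat.cast_zero, sub_zero] at this
    rw [show x ^ (0 ^ 2 + 1 * 0) * rp x N * 1 = rp x N by simp] at this
    rw [this]
    refine Finset.sum_congr rfl fun j _ => ?_
    rw [mul_assoc ((-1 : K) ^ j), ← zpow_add₀ hx0]
    simp
  | succ k ih =>
    intro N hN
    rw [bailey, if_pos rfl, bailey_step hx0 hx N 1 le_rfl _ _ (bailey x k (0 - 1))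
      (fun s hs => ih s (hs.trans hN))]
    refine Finset.sum_congr rfl fun j _ => ?_
    rw [mul_assoc ((-1 : K) ^ j), ← zpow_add₀ hx0]
    congr 3; push_cast; ring

/-- The weights `(-1)^j x ^ (j(j-1)/2 + m(j²+j))` cannot distinguish the Bailey kernels for `c = 1`
and for `c = 0`: the difference of the two sums is antisymmetric under `j ↦ -1 - j`. -/
lemma kernel_switch {x : K} (hx0 : x ≠ 0) (hx : ∀ n : ℕ, x ^ (n + 1) ≠ 1) (B N : ℕ) (m : ℤ) :
    ∑ j ∈ Finset.Icc (-((B : ℤ) + 1)) B, (-1) ^ j * x ^ (tri j + m * (j ^ 2 + j)) *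
        (rp x (N - j) * rp x (N + j + (1 : ℕ))) =
    ∑ j ∈ Finset.Icc (-((B : ℤ) + 1)) B, (-1) ^ j * x ^ (tri j + m * (j ^ 2 + j)) *
        (rp x (N - j) * rp x (N + j)) := by
  rw [← sub_eq_zero, ← Finset.sum_sub_distrib]
  have h1 : ∀ j : ℤ, (-1) ^ j * x ^ (tri j + m * (j ^ 2 + j)) *
        (rp x (N - j) * rp x (N + j + (1 : ℕ))) - (-1) ^ j * x ^ (tri j + m * (j ^ 2 + j)) *
        (rp x (N - j) * rp x (N + j)) = (-1) ^ j * x ^ (tri j + m * (j ^ 2 + j) + (N + j + 1)) *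
        (rp x (N - j) * rp x (N + j + 1)) := by
    intro j
    have e1 := rp_step hx ((N : ℤ) + j + 1)
    rw [show (N : ℤ) + j + 1 - 1 = N + j by ring] at e1
    rw [← e1, zpow_add₀ hx0 _ ((N : ℤ) + j + 1)]
    push_cast; ring
  rw [Finset.sum_congr rfl fun j _ => h1 j]
  have hm : (-1 : K) ≠ 0 := by simp
  refine Finset.sum_involution (fun j _ => -1 - j) ?_ ?_ ?_ ?_
  · intro j _
    rw [show (N : ℤ) - (-1 - j) = N + j + 1 by ring,
      show (N : ℤ) + (-1 - j) + 1 = N - j by ring,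
      show tri (-1 - j) + m * ((-1 - j) ^ 2 + (-1 - j)) + (N - j) =
        tri j + m * (j ^ 2 + j) + (N + j + 1) by
          apply mul_left_cancel₀ (two_ne_zero : (2 : ℤ) ≠ 0)
          linear_combination two_mul_tri (-1 - j) - two_mul_tri j]
    have e : (-1 : K) ^ (-1 - j) = -(-1) ^ j := by
      rw [zpow_sub₀ hm, div_eq_mul_inv, ← inv_zpow, inv_neg_one]; simp
    rw [e]; ring
  · intro j _ _ h; omega
  · intro j hj; rw [Finset.mem_Icc] at hj ⊢; omega
  · intro j _; ring

/-- The finite form of the Andrews–Gordon identity: `k - a + 1` Bailey steps with `c = 1`, the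
switch of kernels, and `a` steps with `c = 0`. -/
lemma bailey_eq_theta {x : K} (hx0 : x ≠ 0) (hx : ∀ n : ℕ, x ^ (n + 1) ≠ 1) (B k : ℕ) :
    ∀ a ≤ k, ∀ N ≤ B, bailey x k a N = ∑ j ∈ Finset.Icc (-((B : ℤ) + 1)) B,
      (-1) ^ j * x ^ (tri j + (k + 1) * j ^ 2 + (k - a + 1) * j) *
        (rp x (N - j) * rp x (N + j)) := by
  have h0 : ∀ k : ℕ, ∀ N ≤ B, bailey x k 0 N = ∑ j ∈ Finset.Icc (-((B : ℤ) + 1)) B,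
      (-1) ^ j * x ^ (tri j + (k + 1) * j ^ 2 + (k - (0 : ℕ) + 1) * j) *
        (rp x (N - j) * rp x (N + j)) := by
    intro k N hN
    rw [bailey_eq_odd hx0 hx B k N hN, kernel_switch hx0 hx]
    refine Finset.sum_congr rfl fun j _ => ?_
    congr 3; push_cast; ring
  induction k with
  | zero => intro a ha; obtain rfl : a = 0 := by omega
            exact h0 0
  | succ k ih =>
    intro a ha
    rcases a with _ | a
    · exact h0 (k + 1)
    intro N hN
    rw [bailey, if_neg (by omega), bailey_step hx0 hx N 0 zero_le_one _ _ (bailey x k (a + 1 - 1))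
      (fun s hs => by
        have := ih a (by omega) s (hs.trans hN)
        simpa only [Nat.cast_zero, add_zero, Nat.add_sub_cancel] using this)]
    refine Finset.sum_congr rfl fun j _ => ?_
    rw [mul_assoc ((-1 : K) ^ j), ← zpow_add₀ hx0]
    congr 3
    · push_cast; ring
    · simp

end ThetaSums

/-! ### The finite identities for power series -/

section FinitePowerSeries

/-- The power series `1 / (q^m;q^m)_n` for an integer `n`, zero for negative `n`. -/
noncomputable def rps (m : ℕ) (n : ℤ) : PowerSeries ℚ :=
  if n < 0 then 0 else (∏ k ∈ Finset.range n.toNat, (1 - q ^ (m * (k + 1))))⁻¹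

lemma rps_neg (m : ℕ) {n : ℤ} (h : n < 0) : rps m n = 0 := if_pos h

lemma constantCoeff_one_sub_q_pow {n : ℕ} (hn : n ≠ 0) :
    PowerSeries.constantCoeff (1 - q ^ n) = 1 := by
  simp [q, hn]

lemma constantCoeff_prod_ne_zero {m : ℕ} (hm : m ≠ 0) (n : ℕ) :
    PowerSeries.constantCoeff (∏ k ∈ Finset.range n, (1 - q ^ (m * (k + 1)))) ≠ 0 := by
  rw [map_prod, Finset.prod_congr rfl fun k _ =>
    constantCoeff_one_sub_q_pow (mul_ne_zero hm (Nat.succ_ne_zero k))]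
  simp

lemma prod_mul_rps {m : ℕ} (hm : m ≠ 0) (n : ℕ) :
    (∏ k ∈ Finset.range n, (1 - q ^ (m * (k + 1)))) * rps m n = 1 := by
  rw [rps, if_neg (by omega), Int.toNat_natCast]
  exact PowerSeries.mul_inv_cancel _ (constantCoeff_prod_ne_zero hm n)

lemma qPoch_inv_eq_rps (n : ℕ) : (qPoch n)⁻¹ = rps 1 n := by
  rw [rps, if_neg (by omega), Int.toNat_natCast, qPoch]
  simp only [one_mul]

lemma qPoch_mul_rps (n : ℕ) : qPoch n * rps 1 n = 1 := by
  have := prod_mul_rps one_ne_zero n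
  simp only [one_mul] at this
  exact this

/-- The embedding of power series into the field of Laurent series. -/
noncomputable def toL : PowerSeries ℚ →+* LaurentSeries ℚ := HahnSeries.ofPowerSeries ℤ ℚ

lemma toL_injective : Function.Injective toL := HahnSeries.ofPowerSeries_injective

lemma toL_q_ne_zero : toL q ≠ 0 :=
  (map_ne_zero_iff toL toL_injective).2 PowerSeries.X_ne_zero

lemma toL_q_pow_ne_one {m : ℕ} (hm : m ≠ 0) (n : ℕ) : (toL q ^ m) ^ (n + 1) ≠ 1 := by
  rw [← pow_mul, ← map_pow, ← map_one toL, toL_injective.ne_iff]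
  intro h
  have := constantCoeff_one_sub_q_pow (mul_ne_zero hm (Nat.succ_ne_zero n))
  rw [h] at this
  simp at this

lemma toL_rps {m : ℕ} (hm : m ≠ 0) (n : ℤ) : toL (rps m n) = rp (toL q ^ m) n := by
  by_cases h : n < 0
  · rw [rps_neg m h, rp_neg _ h, map_zero]
  · lift n to ℕ using (by omega)
    have := congrArg toL (prod_mul_rps hm n)
    rw [map_mul, map_one, map_prod] at this
    rw [rp, if_neg h, Int.toNat_natCast, eq_comm]
    apply inv_eq_of_mul_eq_one_right
    refine Eq.trans ?_ this
    congr 1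
    refine Finset.prod_congr rfl fun k _ => ?_
    rw [map_sub, map_one, map_pow, pow_mul]

lemma neg_one_zpow_eq (j : ℤ) : (-1 : LaurentSeries ℚ) ^ j = (-1) ^ j.natAbs := by
  rcases Int.natAbs_eq j with h | h
  · conv_lhs => rw [h]
    exact zpow_natCast _ _
  · conv_lhs => rw [h]
    rw [zpow_neg, ← inv_zpow, inv_neg_one, zpow_natCast]

/-- The exponent of `q` in the theta series on the product side, with `k + 1 = r`, `a + 1 = i`. -/
def thetaExp (k a : ℕ) (j : ℤ) : ℤ := tri j + (k + 1) * j ^ 2 + (k - a + 1) * j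

/-- The theta exponents are nonnegative and tend to infinity, so that the theta series converges. -/
lemma abs_le_thetaExp {k a : ℕ} (ha : a ≤ k) (j : ℤ) : |j| ≤ thetaExp k a j := by
  have h := two_mul_tri j
  have ha' : (a : ℤ) ≤ k := by exact_mod_cast ha
  have ha0 : (0 : ℤ) ≤ a := by positivity
  unfold thetaExp
  rcases le_total 0 j with hj | hj
  · rw [abs_of_nonneg hj]
    nlinarith [mul_nonneg (sub_nonneg.2 ha') hj, mul_nonneg (ha0.trans ha') (sq_nonneg j)]
  · rw [abs_of_nonpos hj]
    rcases eq_or_lt_of_le hj with rfl | hj'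
    · simp [show tri 0 = 0 from rfl]
    have h1 : 0 ≤ (-j) * (-j - 1) := mul_nonneg (by omega) (by omega)
    nlinarith [mul_nonneg (ha0.trans ha') h1, mul_nonneg ha0 (neg_nonneg.2 hj)]

/-- The `j`-th term of the theta series on the product side. -/
noncomputable def theta (k a : ℕ) (j : ℤ) : PowerSeries ℚ :=
  (-1) ^ j.natAbs * q ^ (thetaExp k a j).toNat

lemma toL_theta {k a : ℕ} (ha : a ≤ k) (j : ℤ) :
    toL (theta k a j) = (-1) ^ j * toL q ^ (thetaExp k a j) := by
  have h : ((thetaExp k a j).toNat : ℤ) = thetaExp k a j :=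
    Int.toNat_of_nonneg ((abs_nonneg j).trans (abs_le_thetaExp ha j))
  rw [theta, neg_one_zpow_eq, map_mul, map_pow, map_pow, map_neg, map_one, ← zpow_natCast (toL q),
    h]

/-- The finite triple product with base `q ^ (2r+1)` at `y = q ^ (2r+1-i)`, where `r = k + 1` and
`i = a + 1`. -/
lemma theta_triple_product {k a : ℕ} (ha : a ≤ k) (N : ℕ) :
    ∑ j ∈ Finset.Icc (-((N : ℤ) + 1)) N,
      theta k a j * (rps (2 * k + 3) (N - j) * rps (2 * k + 3) (N + j)) =
        rps (2 * k + 3) (2 * N) * ∏ l ∈ Finset.range N,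
          ((1 - q ^ ((2 * k + 3) * l + (2 * k + 3 - (a + 1)))) *
            (1 - q ^ ((2 * k + 3) * l + (a + 1)))) := by
  have hM : 2 * k + 3 ≠ 0 := by omega
  have hq := toL_q_ne_zero
  apply toL_injective
  have key := finite_triple_product (pow_ne_zero _ hq) (toL_q_pow_ne_one hM)
    (pow_ne_zero (2 * k + 3 - (a + 1)) hq) N
  rw [map_sum, map_mul, map_prod, toL_rps hM]
  refine Eq.trans (Finset.sum_congr rfl fun j _ => ?_) (key.trans ?_)
  · rw [map_mul, map_mul, toL_rps hM, toL_rps hM, toL_theta ha, ← zpow_natCast, ← zpow_natCast,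
      ← zpow_mul, ← zpow_mul, mul_assoc ((-1) ^ j) (_ ^ (_ * tri j)), ← zpow_add₀ hq]
    congr 3
    rw [thetaExp, Nat.cast_sub (by omega)]
    push_cast
    linear_combination -(k + 1) * two_mul_tri j
  · congr 1
    refine Finset.prod_congr rfl fun l _ => ?_
    simp only [map_mul, map_sub, map_one, map_pow]
    have e : (toL q ^ (2 * k + 3)) ^ (l + 1) * (toL q ^ (2 * k + 3 - (a + 1)))⁻¹ =
        toL q ^ ((2 * k + 3) * l + (a + 1)) := by
      rw [← div_eq_mul_inv, div_eq_iff (pow_ne_zero _ hq), ← pow_mul, ← pow_add]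
      congr 1
      rw [mul_add]; omega
    rw [e, ← pow_mul, ← pow_add, add_comm (2 * k + 3 - (a + 1))]

/-- The summand of the Andrews–Gordon sum truncated at `N`, i.e.
`q ^ (∑ n_j² + ∑_{j > a} n_j) / ((q)_{N - n₁} (q)_{n₁ - n₂} ⋯ (q)_{n_k})`, in recursive form. -/
noncomputable def agTerm : ℕ → ℕ → ℕ → (ℕ → ℕ) → PowerSeries ℚ
  | 0, _, N, _ => rps 1 N
  | k + 1, a, N, n => q ^ (n 0 ^ 2 + (if a = 0 then 1 else 0) * n 0) * rps 1 ((N : ℤ) - n 0) *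
      agTerm k (a - 1) (n 0) (fun j => n (j + 1))

/-- Extension of a finite tuple by zero. -/
def ext0 {k : ℕ} (f : Fin k → ℕ) : ℕ → ℕ := fun j => if h : j < k then f ⟨j, h⟩ else 0

lemma sum_piFinset_succ {M : Type*} [AddCommMonoid M] (k : ℕ) (S : Finset ℕ)
    (φ : (Fin (k + 1) → ℕ) → M) :
    ∑ f ∈ Fintype.piFinset (fun _ => S), φ f =
      ∑ s ∈ S, ∑ g ∈ Fintype.piFinset (fun _ : Fin k => S), φ (Fin.cons s g) := by
  rw [← Finset.sum_product']
  refine Finset.sum_bij' (fun f _ => (f 0, Fin.tail f)) (fun p _ => Fin.cons p.1 p.2) ?_ ?_ ?_ ?_ ?_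
  · intro f hf
    rw [Fintype.mem_piFinset] at hf
    rw [Finset.mem_product, Fintype.mem_piFinset]
    exact ⟨hf 0, fun j => hf j.succ⟩
  · intro p hp
    rw [Finset.mem_product, Fintype.mem_piFinset] at hp
    rw [Fintype.mem_piFinset]
    exact Fin.cases hp.1 hp.2
  · intro f _; exact Fin.cons_self_tail f
  · intro p _; simp
  · intro f _; simp

lemma ext0_cons_zero {k : ℕ} (s : ℕ) (g : Fin k → ℕ) :
    ext0 (Fin.cons s g : Fin (k + 1) → ℕ) 0 = s := by
  simp [ext0]

lemma ext0_cons_succ {k : ℕ} (s : ℕ) (g : Fin k → ℕ) :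
    (fun j => ext0 (Fin.cons s g : Fin (k + 1) → ℕ) (j + 1)) = ext0 g := by
  funext j
  by_cases h : j < k
  · have := Fin.cons_succ (α := fun _ => ℕ) s g ⟨j, h⟩
    simpa [ext0, h] using this
  · simp [ext0, h]

/-- In the field of Laurent series the sum of `agTerm` over all tuples is the iterated sum `bailey`.
Tuples running over the larger box `[0, B]^k` contribute nothing new, since `1 / (q)_n` vanishes
for `n < 0`. -/
lemma toL_sum_agTerm (B k : ℕ) : ∀ a, ∀ N ≤ B,
    toL (∑ f ∈ Fintype.piFinset (fun _ : Fin k => Finset.range (B + 1)), agTerm k a N (ext0 f)) =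
      bailey (toL q) k a N := by
  have hr : ∀ n, toL (rps 1 n) = rp (toL q) n := fun n => by
    rw [toL_rps one_ne_zero, pow_one]
  induction k with
  | zero => intro a N _; simp [agTerm, bailey, hr]
  | succ k ih =>
    intro a N hN
    rw [sum_piFinset_succ, bailey, map_sum]
    have h1 : ∀ s ∈ Finset.range (B + 1), toL (∑ g ∈ Fintype.piFinset
        (fun _ : Fin k => Finset.range (B + 1)), agTerm (k + 1) a N (ext0 (Fin.cons s g))) =
        toL q ^ (s ^ 2 + (if a = 0 then 1 else 0) * s) * rp (toL q) (N - s) *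
          bailey (toL q) k (a - 1) s := by
      intro s hs
      rw [← ih (a - 1) s (by have := Finset.mem_range.1 hs; omega), ← hr, ← map_pow, ← map_mul,
        ← map_mul, Finset.mul_sum]
      congr 1
      refine Finset.sum_congr rfl fun g _ => ?_
      rw [agTerm, ext0_cons_zero, ext0_cons_succ]
    rw [Finset.sum_congr rfl h1]
    symm
    apply Finset.sum_subset
    · intro s; simp only [Finset.mem_range]; omega
    · intro s _ hs
      rw [Finset.mem_range] at hs
      rw [rp_neg _ (by omega : (N : ℤ) - s < 0)]; ring

/-- The finite Andrews–Gordon identity for power series. -/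
lemma sum_agTerm_eq {k a : ℕ} (ha : a ≤ k) (N : ℕ) :
    ∑ f ∈ Fintype.piFinset (fun _ : Fin k => Finset.range (N + 1)), agTerm k a N (ext0 f) =
      ∑ j ∈ Finset.Icc (-((N : ℤ) + 1)) N, theta k a j * (rps 1 (N - j) * rps 1 (N + j)) := by
  apply toL_injective
  have hx := toL_q_pow_ne_one one_ne_zero
  rw [pow_one] at hx
  rw [toL_sum_agTerm N k a N le_rfl, bailey_eq_theta toL_q_ne_zero hx N k a ha N le_rfl, map_sum]
  refine Finset.sum_congr rfl fun j _ => ?_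
  rw [map_mul, map_mul, toL_rps one_ne_zero, toL_rps one_ne_zero, pow_one, toL_theta ha, thetaExp]

/-- Only weakly decreasing tuples contribute. -/
lemma agTerm_eq_zero (k : ℕ) : ∀ a N (n : ℕ → ℕ), (∃ j < k, n j < n (j + 1)) →
    agTerm (k + 1) a N n = 0 := by
  induction k with
  | zero => rintro a N n ⟨j, hj, _⟩; omega
  | succ k ih =>
    rintro a N n ⟨j, hj, h⟩
    rw [agTerm]
    rcases j with _ | j
    · rw [agTerm, rps_neg 1 (by simpa using h : (n 0 : ℤ) - n (0 + 1) < 0)]; ring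
    · rw [ih _ _ _ ⟨j, by omega, h⟩, mul_zero]

/-- On a weakly decreasing tuple the reciprocal factors `1 / ((q)_{n₁ - n₂} ⋯ (q)_{n_k})` telescope
to `1 / (q)_{n₁}` times a product of `q`-binomial coefficients. -/
lemma agTerm_eq (k : ℕ) : ∀ a N (n : ℕ → ℕ), (∀ j < k, n (j + 1) ≤ n j) →
    agTerm (k + 1) a N n = rps 1 ((N : ℤ) - n 0) *
      (q ^ ((∑ j ∈ Finset.range (k + 1), n j ^ 2) +
          ∑ j ∈ Finset.range (k + 1), if a ≤ j then n j else 0) *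
        (qPoch (n 0))⁻¹ * ∏ j ∈ Finset.range k, qBinom (n j) (n j - n (j + 1))) := by
  induction k with
  | zero =>
    intro a N n _
    simp only [agTerm, qPoch_inv_eq_rps]
    rcases a with _ | a <;> simp <;> ring
  | succ k ih =>
    intro a N n hn
    have h0 : n 1 ≤ n 0 := hn 0 (by omega)
    have hb : rps 1 ((n 0 : ℤ) - n 1) * (qPoch (n 1))⁻¹ =
        (qPoch (n 0))⁻¹ * qBinom (n 0) (n 0 - n 1) := by
      rw [qBinom, if_pos (Nat.sub_le _ _), PowerSeries.mul_inv_rev, qPoch_inv_eq_rps,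
        qPoch_inv_eq_rps, Nat.sub_sub_self h0, qPoch_inv_eq_rps, qPoch_inv_eq_rps,
        Nat.cast_sub h0]
      linear_combination (-(rps 1 ((n 0 : ℤ) - n 1) * rps 1 (n 1))) * qPoch_mul_rps (n 0)
    have hs : ∑ j ∈ Finset.range (k + 1 + 1), (if a ≤ j then n j else 0) =
        (∑ j ∈ Finset.range (k + 1), if a - 1 ≤ j then n (j + 1) else 0) +
          (if a = 0 then 1 else 0) * n 0 := by
      rw [Finset.sum_range_succ']
      congr 1
      · refine Finset.sum_congr rfl fun j _ => ?_
        congr 1; rw [eq_iff_iff]; omega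
      · simp
    rw [agTerm, ih _ _ _ (fun j hj => hn (j + 1) (by omega)), hs,
      Finset.sum_range_succ' (fun j => n j ^ 2), Finset.prod_range_succ']
    simp only [zero_add]
    have e : ∀ A b C d : ℕ, q ^ (A + b + (C + d)) = q ^ (b + d) * q ^ (A + C) := by
      intros; rw [← pow_add]; congr 1; ring
    rw [e]
    linear_combination (q ^ (n 0 ^ 2 + (if a = 0 then 1 else 0) * n 0) *
      q ^ ((∑ j ∈ Finset.range (k + 1), n (j + 1) ^ 2) +
        ∑ j ∈ Finset.range (k + 1), if a - 1 ≤ j then n (j + 1) else 0) * rps 1 ((N : ℤ) - n 0) *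
      ∏ j ∈ Finset.range k, qBinom (n (j + 1)) (n (j + 1) - n (j + 1 + 1))) * hb

/-- Every entry of the tuple bounds the order of the summand from below, uniformly in `N`. -/
lemma pow_dvd_agTerm (k : ℕ) : ∀ a N (n : ℕ → ℕ), ∀ j < k, q ^ n j ∣ agTerm k a N n := by
  induction k with
  | zero => intro a N n j hj; omega
  | succ k ih =>
    intro a N n j hj
    rw [agTerm]
    rcases j with _ | j
    · refine ((pow_dvd_pow q ?_).mul_right _).mul_right _
      exact (Nat.le_self_pow two_ne_zero _).trans (Nat.le_add_right _ _)
    · exact (ih (a - 1) (n 0) (fun j => n (j + 1)) j (by omega)).mul_left _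

end FinitePowerSeries

/-! ### Limits of power series and the Jacobi triple product -/

section Limits

open Filter Topology

instance : T2Space (PowerSeries ℚ) := PowerSeries.WithPiTopology.instT2Space ℚ

instance : IsTopologicalRing (PowerSeries ℚ) := PowerSeries.WithPiTopology.instIsTopologicalRing ℚ

lemma tendsto_iff_coeff {ι : Type*} (f : ι → PowerSeries ℚ) (u : Filter ι) (g : PowerSeries ℚ) :
    Tendsto f u (𝓝 g) ↔
      ∀ d, Tendsto (fun i => PowerSeries.coeff d (f i)) u (𝓝 (PowerSeries.coeff d g)) :=
  PowerSeries.WithPiTopology.tendsto_iff_coeff_tendsto ℚ f u g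

/-- Tannery's theorem for formal power series: sums may be taken to the limit term by term if each
coefficient receives contributions only from a finite set of indices independent of `N`. -/
lemma tannery {ι : Type*} (F : ℕ → ι → PowerSeries ℚ) (g : ι → PowerSeries ℚ)
    (s : ℕ → Finset ι) (A : ℕ → Finset ι)
    (hA : ∀ d N i, i ∉ A d → PowerSeries.coeff d (F N i) = 0)
    (hs : ∀ N i, i ∉ s N → F N i = 0)
    (hlim : ∀ i, Tendsto (fun N => F N i) atTop (𝓝 (g i))) :
    ∃ S, HasSum g S ∧ Tendsto (fun N => ∑ i ∈ s N, F N i) atTop (𝓝 S) := by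
  classical
  refine ⟨PowerSeries.mk fun d => ∑ i ∈ A d, PowerSeries.coeff d (g i), ?_, ?_⟩
  · refine (PowerSeries.WithPiTopology.hasSum_iff_hasSum_coeff ℚ).2 fun d => ?_
    rw [PowerSeries.coeff_mk]
    refine hasSum_sum_of_ne_finset_zero fun i hi => ?_
    refine tendsto_nhds_unique ((tendsto_iff_coeff _ _ _).1 (hlim i) d) ?_
    simp only [hA d _ i hi]
    exact tendsto_const_nhds
  · rw [tendsto_iff_coeff]
    intro d
    rw [PowerSeries.coeff_mk]
    have h : ∀ N, PowerSeries.coeff d (∑ i ∈ s N, F N i) =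
        ∑ i ∈ A d, PowerSeries.coeff d (F N i) := by
      intro N
      rw [map_sum, Finset.sum_subset (Finset.subset_union_left (s₂ := A d)) (fun i _ hi => by
        rw [hs N i hi, map_zero])]
      exact (Finset.sum_subset Finset.subset_union_right fun i _ hi => hA d N i hi).symm
    simp only [h]
    exact tendsto_finsetSum _ fun i _ => (tendsto_iff_coeff _ _ _).1 (hlim i) d

lemma multipliable_one_sub_q_pow (e : ℕ → ℕ) (he : ∀ k, k ≤ e k) :
    Multipliable fun k => (1 - q ^ e k : PowerSeries ℚ) := by
  simp_rw [sub_eq_add_neg]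
  apply PowerSeries.WithPiTopology.multipliable_one_add_of_tendsto_order_atTop_nhds_top
  refine ENat.tendsto_nhds_top_iff_natCast_lt.mpr (fun n ↦ Filter.eventually_atTop.mpr ⟨n + 1, ?_⟩)
  intro m hm
  rw [PowerSeries.order_neg, q, PowerSeries.order_X_pow]
  exact_mod_cast hm.trans (he m)

lemma coeff_eq_zero_of_pow_dvd {n d : ℕ} {f : PowerSeries ℚ} (h : q ^ n ∣ f) (hd : d < n) :
    PowerSeries.coeff d f = 0 :=
  PowerSeries.X_pow_dvd_iff.1 h d hd

/-- The limit `(q^m;q^m)_∞` of the products `(q^m;q^m)_n`. -/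
noncomputable def eulerProd (m : ℕ) : PowerSeries ℚ := ∏' k : ℕ, (1 - q ^ (m * (k + 1)))

lemma multipliable_euler {m : ℕ} (hm : m ≠ 0) :
    Multipliable fun k : ℕ => (1 - q ^ (m * (k + 1)) : PowerSeries ℚ) :=
  multipliable_one_sub_q_pow _ fun k => by
    have := Nat.le_mul_of_pos_left (k + 1) (Nat.pos_of_ne_zero hm); omega

/-- The Euler product is invertible, and its inverse is the limit of the inverses of the partial
products. -/
lemma tendsto_rps_nat {m : ℕ} (hm : m ≠ 0) :
    eulerProd m * (eulerProd m)⁻¹ = 1 ∧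
      Tendsto (fun N : ℕ => rps m N) atTop (𝓝 (eulerProd m)⁻¹) := by
  set L : PowerSeries ℚ := PowerSeries.mk fun d => PowerSeries.coeff d (rps m d) with hL
  -- Consecutive reciprocals agree up to degree `N`, so every coefficient is eventually constant.
  have hstep : ∀ d N : ℕ, d ≤ N →
      PowerSeries.coeff d (rps m ((N + 1 : ℕ) : ℤ)) = PowerSeries.coeff d (rps m N) := by
    intro d N hd
    have h1 := prod_mul_rps hm N
    have h2 := prod_mul_rps hm (N + 1)
    rw [Finset.prod_range_succ] at h2
    have h3 : rps m ((N + 1 : ℕ) : ℤ) - rps m N =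
        q ^ (m * (N + 1)) * rps m ((N + 1 : ℕ) : ℤ) := by
      linear_combination rps m N * h2 - rps m ((N + 1 : ℕ) : ℤ) * (1 - q ^ (m * (N + 1))) * h1
    rw [← sub_eq_zero, ← map_sub, h3]
    refine coeff_eq_zero_of_pow_dvd (dvd_mul_right _ _) ?_
    have := Nat.le_mul_of_pos_left (N + 1) (Nat.pos_of_ne_zero hm); omega
  have hconst : ∀ d N : ℕ, d ≤ N →
      PowerSeries.coeff d (rps m N) = PowerSeries.coeff d (rps m d) := by
    intro d N hd
    induction N, hd using Nat.le_induction with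
    | base => rfl
    | succ N hN ih => rw [hstep d N hN, ih]
  have hlim : Tendsto (fun N : ℕ => rps m N) atTop (𝓝 L) := by
    rw [tendsto_iff_coeff]
    intro d
    refine tendsto_const_nhds.congr' ?_
    filter_upwards [eventually_ge_atTop d] with N hN
    rw [hL, PowerSeries.coeff_mk, hconst d N hN]
  have hp := (multipliable_euler hm).hasProd.tendsto_prod_nat
  have h1 : eulerProd m * L = 1 := by
    refine tendsto_nhds_unique (hp.mul hlim) ?_
    simp only [prod_mul_rps hm]
    exact tendsto_const_nhds
  have h0 : PowerSeries.constantCoeff (eulerProd m) ≠ 0 := by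
    intro h
    have := congrArg PowerSeries.constantCoeff h1
    rw [map_mul, h, zero_mul, map_one] at this
    exact zero_ne_one this
  have h2 : L = (eulerProd m)⁻¹ := by
    rw [PowerSeries.eq_inv_iff_mul_eq_one h0, mul_comm, h1]
  exact ⟨PowerSeries.mul_inv_cancel _ h0, h2 ▸ hlim⟩

lemma tendsto_rps {m : ℕ} (hm : m ≠ 0) {u : ℕ → ℤ} (hu : Tendsto u atTop atTop) :
    Tendsto (fun N => rps m (u N)) atTop (𝓝 (eulerProd m)⁻¹) := by
  have h1 : Tendsto (fun N => (u N).toNat) atTop atTop := by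
    refine tendsto_atTop.2 fun b => ?_
    filter_upwards [tendsto_atTop.1 hu b] with N hN
    omega
  refine ((tendsto_rps_nat hm).2.comp h1).congr' ?_
  filter_upwards [tendsto_atTop.1 hu 0] with N hN
  simp [Int.toNat_of_nonneg hN]

lemma tendsto_add_int (j : ℤ) : Tendsto (fun N : ℕ => (N : ℤ) + j) atTop atTop :=
  tendsto_atTop_add_const_right _ j tendsto_natCast_atTop_atTop

/-- The theta series converges, and its sum describes the termwise limit of the theta sums with
kernel `1 / ((q^m)_{N-j} (q^m)_{N+j})`. -/
lemma tendsto_theta_sum {m k a : ℕ} (hm : m ≠ 0) (ha : a ≤ k) :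
    ∃ S, HasSum (theta k a) S ∧
      Tendsto (fun N : ℕ => ∑ j ∈ Finset.Icc (-((N : ℤ) + 1)) N,
        theta k a j * (rps m (N - j) * rps m (N + j))) atTop
        (𝓝 (S * ((eulerProd m)⁻¹ * (eulerProd m)⁻¹))) := by
  set F : ℕ → ℤ → PowerSeries ℚ := fun N j =>
    theta k a j * (rps m ((N : ℤ) - j) * rps m (N + j)) with hF
  have h1 : ∀ (d N : ℕ) (j : ℤ), j ∉ Finset.Icc (-(d : ℤ)) d → PowerSeries.coeff d (F N j) = 0 := by
    intro d N j hj
    refine coeff_eq_zero_of_pow_dvd (n := (thetaExp k a j).toNat)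
      ((dvd_mul_left _ _).mul_right _) ?_
    have h1 := abs_le_thetaExp ha j
    rw [Finset.mem_Icc, ← abs_le] at hj
    omega
  have h2 : ∀ (N : ℕ) (j : ℤ), j ∉ Finset.Icc (-((N : ℤ) + 1)) N → F N j = 0 := by
    intro N j hj
    simp only [hF]
    rw [Finset.mem_Icc, not_and_or] at hj
    rcases hj with hj | hj
    · rw [rps_neg m (by omega : (N : ℤ) + j < 0)]; ring
    · rw [rps_neg m (by omega : (N : ℤ) - j < 0)]; ring
  have h3 : ∀ j, Tendsto (fun N => F N j) atTop
      (𝓝 (theta k a j * ((eulerProd m)⁻¹ * (eulerProd m)⁻¹))) := fun j =>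
    ((tendsto_rps hm (tendsto_add_int (-j))).mul
      (tendsto_rps hm (tendsto_add_int j))).const_mul _
  obtain ⟨S, hS, hlim⟩ := tannery F _ _ _ h1 h2 h3
  have he := (tendsto_rps_nat hm).1
  refine ⟨S * (eulerProd m * eulerProd m), ?_, ?_⟩
  · refine (hS.mul_right (eulerProd m * eulerProd m)).congr_fun ?_
    intro j
    linear_combination (-theta k a j) * (eulerProd m * (eulerProd m)⁻¹ + 1) * he
  · convert hlim using 2
    linear_combination S * (eulerProd m * (eulerProd m)⁻¹ + 1) * he

/-- The Jacobi triple product for the theta series, with base `q ^ (2r+1)`, `r = k + 1`. -/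
lemma hasSum_theta {k a : ℕ} (ha : a ≤ k) :
    HasSum (theta k a) (∏' l : ℕ, ((1 - q ^ ((2 * k + 3) * (l + 1))) *
      (1 - q ^ ((2 * k + 3) * l + (a + 1))) *
      (1 - q ^ ((2 * k + 3) * l + (2 * k + 3 - (a + 1)))))) := by
  have hM : 2 * k + 3 ≠ 0 := by omega
  obtain ⟨S, hS, hlim⟩ := tendsto_theta_sum hM ha
  have hle : ∀ l : ℕ, l ≤ (2 * k + 3) * l := fun l => Nat.le_mul_of_pos_left l (by omega)
  have m1 := multipliable_one_sub_q_pow (fun l => (2 * k + 3) * l + (a + 1))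
    (fun l => (hle l).trans (Nat.le_add_right _ _))
  have m2 := multipliable_one_sub_q_pow (fun l => (2 * k + 3) * l + (2 * k + 3 - (a + 1)))
    (fun l => (hle l).trans (Nat.le_add_right _ _))
  have he := (tendsto_rps_nat hM).1
  rw [((multipliable_euler hM).mul m1).tprod_mul m2, (multipliable_euler hM).tprod_mul m1]
  have hprod := (m2.mul m1).hasProd.tendsto_prod_nat
  rw [m2.tprod_mul m1] at hprod
  have h2 : Tendsto (fun N : ℕ => 2 * (N : ℤ)) atTop atTop :=
    tendsto_natCast_atTop_atTop.const_mul_atTop' (by norm_num)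
  simp only [theta_triple_product ha] at hlim
  have huniq := tendsto_nhds_unique hlim ((tendsto_rps hM h2).mul hprod)
  rw [← eulerProd]
  convert hS using 1
  linear_combination eulerProd (2 * k + 3) ^ 2 * (-huniq) +
    (S * (eulerProd (2 * k + 3) * (eulerProd (2 * k + 3))⁻¹ + 1) - eulerProd (2 * k + 3) *
      ((∏' l : ℕ, (1 - q ^ ((2 * k + 3) * l + (2 * k + 3 - (a + 1))))) *
      ∏' l : ℕ, (1 - q ^ ((2 * k + 3) * l + (a + 1))))) * he

end Limits

/-! ### The infinite identity -/

/-- The Andrews–Gordon identities. -/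
theorem andrews_gordon (r i : ℕ) (hr : 2 ≤ r) (hi1 : 1 ≤ i) (hir : i ≤ r) :
    ∑' n : {f : Fin (r - 1) → ℕ // Antitone f},
      (fun nf : ℕ → ℕ =>
        q ^ ((∑ j ∈ Finset.range (r - 1), (nf j) ^ 2) + ∑ j ∈ Finset.Icc (i - 1) (r - 2), nf j)
          * (qPoch (nf 0))⁻¹
          * ∏ j ∈ Finset.range (r - 2), qBinom (nf j) (nf j - nf (j + 1)))
      (fun j => if h : j < r - 1 then n.1 ⟨j, h⟩ else 0)
      = (∏' k : ℕ, ((1 - q ^ ((2 * r + 1) * (k + 1)))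
            * (1 - q ^ ((2 * r + 1) * k + i))
            * (1 - q ^ ((2 * r + 1) * k + (2 * r + 1 - i)))))
          * (∏' k : ℕ, (1 - q ^ (k + 1)))⁻¹ := by
  obtain ⟨k, rfl⟩ : ∃ k, r = k + 2 := ⟨r - 2, by omega⟩
  obtain ⟨a, rfl⟩ : ∃ a, i = a + 1 := ⟨i - 1, by omega⟩
  have ha : a ≤ k + 1 := by omega
  have hE : (∏' k : ℕ, (1 - q ^ (k + 1)) : PowerSeries ℚ) = eulerProd 1 := by
    simp only [eulerProd, one_mul]
  rw [hE]
  simp only [Nat.add_sub_cancel, show k + 2 - 1 = k + 1 from rfl]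
  -- `t` is the summand, extended to all tuples.
  set t : (Fin (k + 1) → ℕ) → PowerSeries ℚ := fun f =>
    q ^ ((∑ j ∈ Finset.range (k + 1), ext0 f j ^ 2) + ∑ j ∈ Finset.Icc a k, ext0 f j) *
      (qPoch (ext0 f 0))⁻¹ * ∏ j ∈ Finset.range k, qBinom (ext0 f j) (ext0 f j - ext0 f (j + 1))
    with ht
  change ∑' n : {f : Fin (k + 1) → ℕ | Antitone f}, t n = _
  have hext : ∀ (f : Fin (k + 1) → ℕ) (j : Fin (k + 1)), ext0 f j = f j := by
    intro f j; exact dif_pos j.2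
  have hanti : ∀ f : Fin (k + 1) → ℕ,
      Antitone f ↔ ∀ j < k, ext0 f (j + 1) ≤ ext0 f j := by
    intro f
    rw [Fin.antitone_iff_succ_le]
    constructor
    · intro h j hj
      have := h ⟨j, hj⟩
      rw [← hext f, ← hext f] at this
      exact this
    · intro h j
      rw [← hext f, ← hext f]
      exact h j j.2
  have hterm : ∀ (N : ℕ) (f : Fin (k + 1) → ℕ), agTerm (k + 1) a N (ext0 f) =
      rps 1 ((N : ℤ) - f 0) * {f : Fin (k + 1) → ℕ | Antitone f}.indicator t f := by
    intro N f
    by_cases hf : Antitone f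
    · have hsum : ∑ j ∈ Finset.Icc a k, ext0 f j =
          ∑ j ∈ Finset.range (k + 1), if a ≤ j then ext0 f j else 0 := by
        rw [← Finset.sum_filter]
        refine Finset.sum_congr ?_ fun _ _ => rfl
        ext j; simp only [Finset.mem_Icc, Finset.mem_filter, Finset.mem_range]; omega
      rw [Set.indicator_of_mem (by exact hf), agTerm_eq k a N _ ((hanti f).1 hf)]
      simp only [ht]
      rw [hsum]
      rfl
    · rw [Set.indicator_of_notMem (by exact hf), mul_zero]
      rw [hanti] at hf
      push Not at hf
      exact agTerm_eq_zero k a N _ hf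
  have h1 : ∀ (d N : ℕ) (f : Fin (k + 1) → ℕ),
      f ∉ (Fintype.piFinset fun _ => Finset.range (d + 1)) →
      PowerSeries.coeff d (agTerm (k + 1) a N (ext0 f)) = 0 := by
    intro d N f hf
    rw [Fintype.mem_piFinset] at hf
    push Not at hf
    obtain ⟨j, hj⟩ := hf
    refine coeff_eq_zero_of_pow_dvd (pow_dvd_agTerm (k + 1) a N _ j j.2) ?_
    rw [hext]
    rw [Finset.mem_range] at hj
    omega
  have h2 : ∀ (N : ℕ) (f : Fin (k + 1) → ℕ),
      f ∉ (Fintype.piFinset fun _ => Finset.range (N + 1)) →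
      agTerm (k + 1) a N (ext0 f) = 0 := by
    intro N f hf
    by_cases hanti' : Antitone f
    · rw [Fintype.mem_piFinset] at hf
      push Not at hf
      obtain ⟨j, hj⟩ := hf
      rw [Finset.mem_range] at hj
      -- Some entry exceeds `N`, hence so does the first one.
      have := hanti' (Fin.zero_le j)
      rw [hterm, rps_neg 1 (by omega : (N : ℤ) - f 0 < 0), zero_mul]
    · rw [hterm, Set.indicator_of_notMem (by exact hanti'), mul_zero]
  have h3 : ∀ f : Fin (k + 1) → ℕ,
      Filter.Tendsto (fun N => agTerm (k + 1) a N (ext0 f)) Filter.atTop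
        (nhds ((eulerProd 1)⁻¹ * {f : Fin (k + 1) → ℕ | Antitone f}.indicator t f)) := by
    intro f
    simp only [hterm]
    exact (tendsto_rps one_ne_zero (tendsto_add_int (-(f 0 : ℤ)))).mul_const _
  obtain ⟨S, hS, hlim⟩ := tannery (fun N f => agTerm (k + 1) a N (ext0 f)) _ _ _ h1 h2 h3
  obtain ⟨Θ, hΘ, hlim'⟩ := tendsto_theta_sum (m := 1) one_ne_zero ha
  have hΘ' := hΘ.unique (hasSum_theta ha)
  rw [show 2 * (k + 1) + 3 = 2 * (k + 2) + 1 by ring] at hΘ'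
  have he := (tendsto_rps_nat (m := 1) one_ne_zero).1
  simp only [sum_agTerm_eq ha] at hlim
  have hSΘ := tendsto_nhds_unique hlim hlim'
  have hS' : HasSum ({f : Fin (k + 1) → ℕ | Antitone f}.indicator t) (eulerProd 1 * S) := by
    refine (hS.mul_left (eulerProd 1)).congr_fun ?_
    intro f
    linear_combination (-{f : Fin (k + 1) → ℕ | Antitone f}.indicator t f) * he
  rw [tsum_subtype, hS'.tsum_eq, hSΘ, ← hΘ']
  linear_combination Θ * (eulerProd 1)⁻¹ * he
end

section
/- Borodin's product formula for cylindric partitions: let c = (c_1,…,c_k) be a composition with c_1+⋯+c_k = ℓ, t = k+ℓ, and s(i,j) = c_i+c_{i+1}+⋯+c_j. Then the generating function F_c(1,q) = Σ_Λ q^{|Λ|} over all cylindric partitions Λ of profile c equals 1/(q^t;q^t)_∞ · ∏_{i=1}^k ∏_{j=i}^k ∏_{m=1}^{c_i} 1/(q^{m+j-i+s(i+1,j)}; q^t)_∞ · ∏_{i=2}^k ∏_{j=2}^i ∏_{m=1}^{c_i} 1/(q^{t-m+j-i-s(j,i-1)}; q^t)_∞. -/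
/-!
The boundary of the profile is encoded by a cyclic word of length `t = k + ℓ`, with one down letter
for each row of the array and one up letter for each unit of the profile. Sorting the cells of a
cylindric partition by diagonals turns it into a sequence of partitions `μ d`, `d ∈ ℤ / t`, in which
neighbours interlace: `μ (d + 1) / μ d` is a horizontal strip at an up letter, `μ d / μ (d + 1)` at
a down letter (`stateEquiv`). The size becomes the sum of the sizes of all `μ d`.

If an up letter is followed by a down letter, then `μ d` between them is a local maximum. Toggling
`μ d` in the intervals allowed by its neighbours swaps the two letters and splits off an arbitrary
natural number (`swapEquiv`). For the change of sizes to be compatible with the weight, each letter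
keeps its original position as a label, the weight of `μ d` being the difference of the labels of
the letters on both sides of it. Swapping the up letter labelled `A` with the down letter
labelled `B` thus multiplies the generating function by `1 - q ^ (B - A)` (`gf_swap`).

This is done for the pairs `A < B` of an up and a down letter, up to translation by `t`. Among the
pairs that have not been swapped yet, one with minimal `B - A` consists of adjacent letters
(`adjacent_of_min`), and swapping it removes exactly this pair (`pairs_swap`). Modulo `q ^ N` only finitely many
pairs matter; when no other ones are left, a sequence of weight less than `N` must be constant
(`State.const_of_wt_lt`), and a constant sequence `μ` has weight `t |μ|`, which gives the factor
`1 / (q ^ t; q ^ t)_∞` (`red_gf_main`, `red_gf_par`). Listing the differences `B - A` according to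
the blocks of the two letters and their winding number gives the double products of the theorem
(`prod_pairs`, `prod_expo`).
-/

open scoped Finset

/-- A cylindric partition with profile `c = (c₁, …, c_k)` (0-indexed): a `k`-tuple of
partitions `λ⁽ⁱ⁾` (antitone, eventually-zero sequences of naturals, 0-indexed) with
`λ⁽ⁱ⁾ⱼ ≥ λ⁽ⁱ⁺¹⁾_{j + c_{i+1}}` cyclically. -/
structure CylindricPartition (k : ℕ) [NeZero k] (c : Fin k → ℕ) where
  part : Fin k → ℕ → ℕ
  antitone : ∀ i, Antitone (part i)
  finite_support : ∀ i, ∃ N, ∀ j, N ≤ j → part i j = 0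
  cyl : ∀ i j, part (i + 1) (j + c (i + 1)) ≤ part i j

namespace CylindricPartition

variable {k : ℕ} [NeZero k] {c : Fin k → ℕ}

/-- The size `|Λ|`: the sum of all parts. -/
noncomputable def size (Λ : CylindricPartition k c) : ℕ :=
  ∑' (i : Fin k) (j : ℕ), Λ.part i j

/-- The largest part `max(Λ)`. -/
def maxPart (Λ : CylindricPartition k c) : ℕ :=
  Finset.univ.sup fun i => Λ.part i 0

end CylindricPartition

/-- The generating function `F_c(1, q) = Σ_Λ q^{|Λ|}` of cylindric partitions of profile `c`. -/
noncomputable def cylGF (k : ℕ) [NeZero k] (c : Fin k → ℕ) : PowerSeries ℚ :=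
  ∑' Λ : CylindricPartition k c, (PowerSeries.X : PowerSeries ℚ) ^ Λ.size

/-- The profile as a function on 1-based indices `1, …, k`. -/
def profExt (k : ℕ) (c : Fin k → ℕ) (m : ℕ) : ℕ :=
  if h : 1 ≤ m ∧ m ≤ k then c ⟨m - 1, by omega⟩ else 0

/-- `s(a, b) = c_a + c_{a+1} + ⋯ + c_b` (1-based indices). -/
def sSum (k : ℕ) (c : Fin k → ℕ) (a b : ℕ) : ℕ :=
  ∑ m ∈ Finset.Icc a b, profExt k c m

namespace Borodin

open PowerSeries

/-! ### Generating functions and truncation -/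

/-- Reduction of power series modulo `X ^ N`, as a ring homomorphism. -/
noncomputable def red (N : ℕ) :
    PowerSeries ℚ →+* PowerSeries ℚ ⧸ Ideal.span {(X : PowerSeries ℚ) ^ N} :=
  Ideal.Quotient.mk _

lemma red_eq_iff {N : ℕ} {f g : PowerSeries ℚ} :
    red N f = red N g ↔ ∀ n < N, coeff n f = coeff n g := by
  rw [red, Ideal.Quotient.eq, Ideal.mem_span_singleton, X_pow_dvd_iff]
  simp [sub_eq_zero]

lemma red_ext {f g : PowerSeries ℚ} (h : ∀ N, red N f = red N g) : f = g := by
  ext n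
  exact red_eq_iff.1 (h (n + 1)) n (by omega)

lemma red_one_sub {N a : ℕ} (h : N ≤ a) : red N (1 - X ^ a) = 1 := by
  rw [← map_one (red N), red_eq_iff]
  intro n hn
  simp only [map_sub, coeff_X_pow, sub_eq_self, ite_eq_right_iff]
  omega

/-- The generating function of a weighted set with integer weights; negative weights are
ignored. -/
noncomputable def gf {A : Type*} (wt : A → ℤ) : PowerSeries ℚ :=
  PowerSeries.mk fun n => (Nat.card {a // wt a = (n : ℤ)} : ℚ)

/-- A weight is admissible if it is nonnegative and has finite fibres. -/
def Adm {A : Type*} (wt : A → ℤ) : Prop :=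
  (∀ a, 0 ≤ wt a) ∧ ∀ n : ℕ, Finite {a // wt a = (n : ℤ)}

lemma gf_equiv {A B : Type*} {wA : A → ℤ} {wB : B → ℤ} (e : A ≃ B) (h : ∀ a, wA a = wB (e a)) :
    gf wA = gf wB := by
  ext n
  simp only [gf, coeff_mk]
  congr 1
  exact Nat.card_congr (e.subtypeEquiv fun a => by rw [h])

lemma adm_of_step {A B : Type*} {wA : A → ℤ} {wB : B → ℤ} (e : A ≃ B × ℕ) (m : ℤ)
    (h : ∀ a, wA a = wB (e a).1 + m * (e a).2) (hA : Adm wA) : Adm wB := by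
  have h0 : ∀ b, wA (e.symm (b, 0)) = wB b := fun b => by rw [h]; simp
  refine ⟨fun b => h0 b ▸ hA.1 _, fun n => ?_⟩
  have := hA.2 n
  refine Finite.of_injective
    (fun b : {b // wB b = (n : ℤ)} =>
      (⟨e.symm (b.1, 0), by rw [h0, b.2]⟩ : {a // wA a = (n : ℤ)})) ?_
  intro b b' hb
  simpa [Subtype.ext_iff] using hb

/-- Splitting off a free natural number of weight `m` multiplies the generating function
by `1 / (1 - X ^ m)`. -/
lemma gf_step {A B : Type*} {wA : A → ℤ} {wB : B → ℤ} (e : A ≃ B × ℕ) (m : ℕ)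
    (h : ∀ a, wA a = wB (e a).1 + m * (e a).2) (hA : Adm wA) :
    gf wA * (1 - X ^ m) = gf wB := by
  have hB := adm_of_step e m h hA
  ext n
  -- an element of weight `n` either has zero integer part, or comes from weight `n - m`
  have key : Nat.card {a // wA a = (n : ℤ)}
      = Nat.card {b // wB b = (n : ℤ)} + Nat.card {a // wA a = ((n : ℤ) - m)} := by
    have hf1 := hB.2 n
    have hf2 : Finite {a // wA a = ((n : ℤ) - m)} := by
      by_cases hmn : m ≤ n
      · have := hA.2 (n - m)
        rwa [Nat.cast_sub hmn] at this
      · have : IsEmpty {a // wA a = ((n : ℤ) - m)} :=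
          ⟨fun a => by have := hA.1 a.1; have := a.2; omega⟩
        infer_instance
    rw [← Nat.card_sum]
    refine Nat.card_congr (Equiv.ofBijective
      (Sum.elim (fun b => ⟨e.symm (b.1, 0), by rw [h]; simpa using b.2⟩)
        (fun a => ⟨e.symm ((e a.1).1, (e a.1).2 + 1), by
          have h1 := h a.1
          have h2 := a.2
          rw [h]; simp only [Equiv.apply_symm_apply]; push_cast; linarith⟩)) ⟨?_, ?_⟩).symm
    · rintro (b | a) (b' | a') hh <;> simp [Subtype.ext_iff] at hh ⊢
      · exact hh
      · exact e.injective (Prod.ext hh.1 hh.2)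
    · rintro ⟨a, ha⟩
      have h1 := h a
      rcases hea : e a with ⟨b, i⟩
      rw [hea] at h1
      rcases i with _ | i
      · exact ⟨Sum.inl ⟨b, by simp at h1; omega⟩, by simp [← hea]⟩
      · refine ⟨Sum.inr ⟨e.symm (b, i), ?_⟩, ?_⟩
        · rw [h]; simp only [Equiv.apply_symm_apply]; push_cast at h1; linarith
        · simp [← hea]
  rw [mul_sub, mul_one, map_sub, coeff_mul_X_pow']
  simp only [gf, coeff_mk]
  rw [key]
  split_ifs with hmn
  · rw [Nat.cast_sub hmn]; push_cast; ring
  · have : IsEmpty {a // wA a = ((n : ℤ) - m)} :=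
      ⟨fun a => by have := hA.1 a.1; have := a.2; omega⟩
    simp

lemma multipliable_factor (a t : ℕ) (ht : 0 < t) :
    Multipliable fun r : ℕ => (1 - (X : PowerSeries ℚ) ^ (t * r + a)) := by
  simp_rw [sub_eq_add_neg]
  apply WithPiTopology.multipliable_one_add_of_tendsto_order_atTop_nhds_top
  refine ENat.tendsto_nhds_top_iff_natCast_lt.mpr (fun n ↦ Filter.eventually_atTop.mpr ⟨n+1, ?_⟩)
  intro m hm
  rw [order_neg, order_X_pow]
  norm_cast
  nlinarith

lemma red_tprod (f : ℕ → PowerSeries ℚ) (hf : Multipliable f) (N L : ℕ)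
    (h : ∀ r, L ≤ r → red N (f r) = 1) : red N (∏' r, f r) = red N (∏ r ∈ Finset.range L, f r) := by
  rw [red_eq_iff]
  intro n hn
  have h1 := hf.hasProd.tendsto_prod_nat
  have h2 := ((WithPiTopology.continuous_coeff ℚ n).tendsto _).comp h1
  refine tendsto_nhds_unique h2 (tendsto_const_nhds.congr' ?_)
  filter_upwards [Filter.eventually_ge_atTop L] with M hM
  have : red N (∏ r ∈ Finset.range L, f r) = red N (∏ r ∈ Finset.range M, f r) := by
    rw [← Finset.prod_range_mul_prod_Ico _ hM, map_mul, map_prod _ _ (Finset.Ico _ _),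
      Finset.prod_eq_one (s := Finset.Ico _ _) fun r hr => h r (Finset.mem_Ico.1 hr).1, mul_one]
  exact red_eq_iff.1 this n hn

lemma tsum_eq_gf {A : Type*} (wt : A → ℕ) (h : ∀ n : ℕ, Finite {a // wt a = n}) :
    ∑' a, (X : PowerSeries ℚ) ^ wt a = gf fun a => (wt a : ℤ) := by
  have : HasSum (fun a => (X : PowerSeries ℚ) ^ wt a) (gf fun a => (wt a : ℤ)) := by
    refine (WithPiTopology.hasSum_iff_hasSum_coeff (R := ℚ)).2 fun n => ?_
    have hfin : {a | wt a = n}.Finite := @Set.toFinite _ _ (h n)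
    have hc : coeff n (gf fun a => (wt a : ℤ))
        = ∑ a ∈ hfin.toFinset, coeff n ((X : PowerSeries ℚ) ^ wt a) := by
      rw [Finset.sum_congr rfl (g := fun _ => (1 : ℚ))]
      · simp only [gf, coeff_mk, Nat.cast_inj, Finset.sum_const, nsmul_eq_mul, mul_one]
        have := Nat.card_coe_set_eq {a | wt a = n}
        rw [Set.ncard_eq_toFinset_card _ hfin] at this
        rw [← this]
        rfl
      · intro a ha
        simp at ha
        simp [coeff_X_pow, ha]
    rw [hc]
    refine hasSum_sum_of_ne_finset_zero fun a ha => ?_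
    simp at ha
    rw [coeff_X_pow, if_neg (Ne.symm ha)]
  have i : T2Space (PowerSeries ℚ) := WithPiTopology.instT2Space ℚ
  exact this.tsum_eq

/-- Weighted sets whose elements of weight less than `N` correspond have generating functions
that agree modulo `X ^ N`. -/
lemma red_gf_eq {A B : Type*} {wA : A → ℤ} {wB : B → ℤ} (N : ℕ) (f : B → A)
    (hf : Function.Injective f) (hw : ∀ b, wA (f b) = wB b)
    (hs : ∀ a, wA a < N → ∃ b, f b = a) : red N (gf wA) = red N (gf wB) := by
  rw [red_eq_iff]
  intro n hn
  simp only [gf, coeff_mk]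
  congr 1
  refine (Nat.card_congr (Equiv.ofBijective
    (fun b : {b // wB b = (n : ℤ)} => (⟨f b.1, by rw [hw, b.2]⟩ : {a // wA a = (n : ℤ)}))
    ⟨fun b b' h => Subtype.ext (hf (congrArg Subtype.val h)), ?_⟩)).symm
  rintro ⟨a, ha⟩
  obtain ⟨b, rfl⟩ := hs a (by omega)
  exact ⟨⟨b, by rw [← hw, ha]⟩, rfl⟩

/-! ### Periodic interlacing sequences and toggles -/

/-- The sum of the parts of a sequence. -/
noncomputable def siz (a : ℕ → ℕ) : ℕ := ∑' s, a s

lemma siz_eq_sum {a : ℕ → ℕ} {N : ℕ} (h : ∀ j, N ≤ j → a j = 0) :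
    siz a = ∑ s ∈ Finset.range N, a s :=
  tsum_eq_sum fun j hj => h j (by simpa using hj)

/-- `Interl a b` says that `a / b` is a horizontal strip:
`a 0 ≥ b 0 ≥ a 1 ≥ b 1 ≥ ⋯`. -/
def Interl (a b : ℕ → ℕ) : Prop := ∀ s, b s ≤ a s ∧ a (s + 1) ≤ b s

/-- The periodic sequences of partitions `μ d`, `d ∈ ℤ / t`, with the interlacing pattern
prescribed by a word `w`: the letter at `p` sits between `μ p` and `μ (p + 1)`, and it is `true`
for an up step and `false` for a down step. -/
@[ext] structure State (t : ℕ) (w : ZMod t → Bool) where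
  /-- The partition at each place of the circle. -/
  μ : ZMod t → ℕ → ℕ
  fin : ∀ d, ∃ N, ∀ j, N ≤ j → μ d j = 0
  up : ∀ p, w p = true → Interl (μ (p + 1)) (μ p)
  dn : ∀ p, w p = false → Interl (μ p) (μ (p + 1))

/-- The weight of a periodic sequence of partitions, the place `d` having weight `Y d`. -/
noncomputable def State.wt {t : ℕ} [NeZero t] {w : ZMod t → Bool} (Y : ZMod t → ℤ)
    (S : State t w) : ℤ := ∑ d, Y d * siz (S.μ d)

/-- The toggle of `m` with respect to its neighbours `a`, `b`: the first part of `m` is dropped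
and the other ones are reflected in the intervals that the neighbours allow. -/
def togDown (a b m : ℕ → ℕ) : ℕ → ℕ := fun s =>
  max (a (s + 1)) (b (s + 1)) + min (a s) (b s) - m (s + 1)

/-- The inverse of `togDown`, the first part exceeding its minimal value by `n`. -/
def togUp (a b m : ℕ → ℕ) (n : ℕ) : ℕ → ℕ
  | 0 => n + max (a 0) (b 0)
  | s + 1 => max (a (s + 1)) (b (s + 1)) + min (a s) (b s) - m s

lemma interl_togDown {a b m : ℕ → ℕ} (ha : Interl m a) (hb : Interl m b) :
    Interl a (togDown a b m) ∧ Interl b (togDown a b m) := by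
  constructor <;> intro s <;>
  · have h1 := ha s; have h2 := hb s; have h3 := ha (s + 1); have h4 := hb (s + 1)
    simp only [togDown]; omega

lemma interl_togUp {a b m : ℕ → ℕ} (n : ℕ) (ha : Interl a m) (hb : Interl b m) :
    Interl (togUp a b m n) a ∧ Interl (togUp a b m n) b := by
  constructor <;> intro s <;> rcases s with _ | s <;> simp only [togUp]
  · have h1 := ha 0; have h2 := hb 0; omega
  · have h1 := ha s; have h2 := hb s; have h3 := ha (s + 1); have h4 := hb (s + 1); omega
  · have h1 := ha 0; have h2 := hb 0; omega
  · have h1 := ha s; have h2 := hb s; have h3 := ha (s + 1); have h4 := hb (s + 1); omega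

lemma togUp_togDown {a b m : ℕ → ℕ} (ha : Interl m a) (hb : Interl m b) :
    togUp a b (togDown a b m) (m 0 - max (a 0) (b 0)) = m := by
  funext s
  rcases s with _ | s <;> simp only [togUp, togDown]
  · have h1 := ha 0; have h2 := hb 0; omega
  · have h1 := ha s; have h2 := hb s; have h3 := ha (s + 1); have h4 := hb (s + 1); omega

lemma togDown_togUp {a b m : ℕ → ℕ} (n : ℕ) (ha : Interl a m) (hb : Interl b m) :
    togDown a b (togUp a b m n) = m := by
  funext s
  have h1 := ha s; have h2 := hb s
  simp only [togUp, togDown]; omega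

lemma fin_togDown {a b m : ℕ → ℕ} (ha : ∃ N, ∀ j, N ≤ j → a j = 0)
    (hb : ∃ N, ∀ j, N ≤ j → b j = 0) : ∃ N, ∀ j, N ≤ j → togDown a b m j = 0 := by
  obtain ⟨N, hN⟩ := ha
  obtain ⟨M, hM⟩ := hb
  refine ⟨max N M, fun j hj => ?_⟩
  simp [togDown, hN j (by omega), hN (j + 1) (by omega), hM (j + 1) (by omega)]

lemma fin_togUp {a b m : ℕ → ℕ} (n : ℕ) (ha : ∃ N, ∀ j, N ≤ j → a j = 0)
    (hb : ∃ N, ∀ j, N ≤ j → b j = 0) : ∃ N, ∀ j, N ≤ j → togUp a b m n j = 0 := by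
  obtain ⟨N, hN⟩ := ha
  obtain ⟨M, hM⟩ := hb
  refine ⟨max N M + 1, fun j hj => ?_⟩
  obtain ⟨j, rfl⟩ : ∃ i, j = i + 1 := ⟨j - 1, by omega⟩
  simp [togUp, hN j (by omega), hN (j + 1) (by omega), hM (j + 1) (by omega)]

lemma siz_togDown {a b m : ℕ → ℕ} (ha : Interl m a) (hb : Interl m b)
    (hm : ∃ N, ∀ j, N ≤ j → m j = 0) :
    siz m + siz (togDown a b m) = siz a + siz b + (m 0 - max (a 0) (b 0)) := by
  obtain ⟨N, hN⟩ := hm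
  have ha0 : ∀ j, N ≤ j → a j = 0 := fun j hj => by have := (ha j).1; rw [hN j hj] at this; omega
  have hb0 : ∀ j, N ≤ j → b j = 0 := fun j hj => by have := (hb j).1; rw [hN j hj] at this; omega
  have hk0 : ∀ j, N ≤ j → togDown a b m j = 0 := fun j hj => by
    simp [togDown, ha0 j hj, ha0 (j + 1) (by omega), hb0 (j + 1) (by omega)]
  rw [siz_eq_sum hk0, siz_eq_sum ha0, siz_eq_sum hb0,
    siz_eq_sum (N := N + 1) fun j hj => hN j (by omega)]
  -- telescoping in the number of parts
  have key : ∀ n, ∑ s ∈ Finset.range (n + 1), m s + ∑ s ∈ Finset.range n, togDown a b m s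
      + max (a 0) (b 0)
      = ∑ s ∈ Finset.range n, a s + ∑ s ∈ Finset.range n, b s + m 0 + max (a n) (b n) := by
    intro n
    induction n with
    | zero => simp
    | succ n ih =>
      have h1 := ha n; have h2 := hb n; have h3 := ha (n + 1); have h4 := hb (n + 1)
      simp only [Finset.sum_range_succ, togDown] at ih ⊢
      have := hb (n + 1)
      omega
  have := key N
  have h1 := ha 0; have h2 := hb 0
  rw [ha0 N le_rfl, hb0 N le_rfl] at this
  omega

lemma ne_of_letters {t : ℕ} {w : ZMod t → Bool} {d : ZMod t} (h1 : w (d - 1) = true)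
    (h2 : w d = false) : d - 1 ≠ d ∧ d + 1 ≠ d := by
  have h : d - 1 ≠ d := fun h => by rw [h, h2] at h1; cases h1
  exact ⟨h, fun h' => h (by rw [sub_eq_iff_eq_add, h'])⟩

section swap

variable {t : ℕ} [NeZero t] {w w' : ZMod t → Bool} {d : ZMod t}

/-- Toggling at the place `d` between an up step and a down step exchanges these two steps,
and splits off a natural number. -/
noncomputable def swapEquiv (h1 : w (d - 1) = true) (h2 : w d = false) (h1' : w' (d - 1) = false)
    (h2' : w' d = true) (hw : ∀ p, p ≠ d - 1 → p ≠ d → w' p = w p) :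
    State t w ≃ State t w' × ℕ where
  toFun S :=
    (⟨Function.update S.μ d (togDown (S.μ (d - 1)) (S.μ (d + 1)) (S.μ d)),
      fun p => by
        by_cases hp : p = d
        · subst hp
          rw [Function.update_self]
          exact fin_togDown (S.fin _) (S.fin _)
        · rw [Function.update_of_ne hp]
          exact S.fin p,
      fun p hp => by
        have ha := S.up _ h1
        rw [sub_add_cancel] at ha
        have hn := ne_of_letters h1 h2
        have hp1 : p ≠ d - 1 := fun h => by rw [h, h1'] at hp; cases hp
        have hp2 : p + 1 ≠ d := fun h => hp1 (eq_sub_of_add_eq h)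
        rw [Function.update_of_ne hp2]
        by_cases hpd : p = d
        · subst hpd
          rw [Function.update_self]
          exact (interl_togDown ha (S.dn _ h2)).2
        · rw [Function.update_of_ne hpd]
          exact S.up p (by rw [← hw p hp1 hpd, hp]),
      fun p hp => by
        have ha := S.up _ h1
        rw [sub_add_cancel] at ha
        have hn := ne_of_letters h1 h2
        have hpd : p ≠ d := fun h => by rw [h, h2'] at hp; cases hp
        rw [Function.update_of_ne hpd]
        by_cases hp1 : p = d - 1
        · subst hp1
          rw [sub_add_cancel, Function.update_self]
          exact (interl_togDown ha (S.dn _ h2)).1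
        · rw [Function.update_of_ne fun h => hp1 (eq_sub_of_add_eq h)]
          exact S.dn p (by rw [← hw p hp1 hpd, hp])⟩,
      S.μ d 0 - max (S.μ (d - 1) 0) (S.μ (d + 1) 0))
  invFun P :=
    ⟨Function.update P.1.μ d (togUp (P.1.μ (d - 1)) (P.1.μ (d + 1)) (P.1.μ d) P.2),
      fun p => by
        by_cases hp : p = d
        · subst hp
          rw [Function.update_self]
          exact fin_togUp _ (P.1.fin _) (P.1.fin _)
        · rw [Function.update_of_ne hp]
          exact P.1.fin p,
      fun p hp => by
        have ha := P.1.dn _ h1'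
        rw [sub_add_cancel] at ha
        have hpd : p ≠ d := fun h => by rw [h, h2] at hp; cases hp
        rw [Function.update_of_ne hpd]
        by_cases hp1 : p = d - 1
        · subst hp1
          rw [sub_add_cancel, Function.update_self]
          exact (interl_togUp _ ha (P.1.up _ h2')).1
        · rw [Function.update_of_ne fun h => hp1 (eq_sub_of_add_eq h)]
          exact P.1.up p (by rw [hw p hp1 hpd, hp]),
      fun p hp => by
        have ha := P.1.dn _ h1'
        rw [sub_add_cancel] at ha
        have hp1 : p ≠ d - 1 := fun h => by rw [h, h1] at hp; cases hp
        have hp2 : p + 1 ≠ d := fun h => hp1 (eq_sub_of_add_eq h)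
        rw [Function.update_of_ne hp2]
        by_cases hpd : p = d
        · subst hpd
          rw [Function.update_self]
          exact (interl_togUp _ ha (P.1.up _ h2')).2
        · rw [Function.update_of_ne hpd]
          exact P.1.dn p (by rw [hw p hp1 hpd, hp])⟩
  left_inv S := by
    have ha := S.up _ h1
    rw [sub_add_cancel] at ha
    have hn := ne_of_letters h1 h2
    ext1
    simp only [Function.update_self, Function.update_of_ne hn.1, Function.update_of_ne hn.2,
      Function.update_idem, togUp_togDown ha (S.dn _ h2), Function.update_eq_self]
  right_inv P := by
    have ha := P.1.dn _ h1'
    rw [sub_add_cancel] at ha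
    have hn := ne_of_letters h1 h2
    refine Prod.ext ?_ ?_
    · ext1
      simp only [Function.update_self, Function.update_of_ne hn.1, Function.update_of_ne hn.2,
        Function.update_idem, togDown_togUp _ ha (P.1.up _ h2'), Function.update_eq_self]
    · simp only [Function.update_self, Function.update_of_ne hn.1, Function.update_of_ne hn.2,
        togUp]
      omega

lemma wt_swapEquiv (h1 : w (d - 1) = true) (h2 : w d = false) (h1' : w' (d - 1) = false)
    (h2' : w' d = true) (hw : ∀ p, p ≠ d - 1 → p ≠ d → w' p = w p) (Y Y' : ZMod t → ℤ)
    (hY : ∀ p, Y' p = Y p + Y d * ((if p = d - 1 then 1 else 0) + (if p = d + 1 then 1 else 0)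
      - 2 * (if p = d then 1 else 0))) (S : State t w) :
    S.wt Y = (swapEquiv h1 h2 h1' h2' hw S).1.wt Y'
      + Y d * (swapEquiv h1 h2 h1' h2' hw S).2 := by
  have hn := ne_of_letters h1 h2
  have ha := S.up _ h1
  rw [sub_add_cancel] at ha
  have hs := siz_togDown ha (S.dn _ h2) (S.fin d)
  set κ := togDown (S.μ (d - 1)) (S.μ (d + 1)) (S.μ d) with hκ
  set n := S.μ d 0 - max (S.μ (d - 1) 0) (S.μ (d + 1) 0) with hnn
  have e1 : (swapEquiv h1 h2 h1' h2' hw S).1.μ = Function.update S.μ d κ := rfl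
  have e2 : (swapEquiv h1 h2 h1' h2' hw S).2 = n := rfl
  rw [e2, State.wt, State.wt, e1]
  have e3 : ∀ p, Y' p * (siz (Function.update S.μ d κ p) : ℤ)
      = Y p * siz (S.μ p) + (if p = d - 1 then Y d * siz (S.μ p) else 0)
        + (if p = d + 1 then Y d * siz (S.μ p) else 0)
        - (if p = d then Y d * (siz (S.μ p) + siz κ) else 0) := by
    intro p
    rw [hY]
    by_cases hp : p = d
    · subst hp
      rw [Function.update_self]
      simp only [hn.1.symm, hn.2.symm, if_false, if_true]
      ring
    · rw [Function.update_of_ne hp]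
      simp only [hp, if_false]
      split_ifs <;> ring
  simp only [e3, Finset.sum_add_distrib, Finset.sum_sub_distrib, Finset.sum_ite_eq',
    Finset.mem_univ, if_true]
  have hs' : (siz (S.μ d) : ℤ) + siz κ = siz (S.μ (d - 1)) + siz (S.μ (d + 1)) + n := by
    exact_mod_cast hs
  rw [hs']
  ring

end swap

/-! ### Partitions -/

/-- Partitions, as antitone eventually vanishing sequences. -/
abbrev Par := {a : ℕ → ℕ // Antitone a ∧ ∃ N, ∀ j, N ≤ j → a j = 0}

/-- Partitions with at most `L` parts. -/
abbrev ParLE (L : ℕ) := {a : ℕ → ℕ // Antitone a ∧ ∀ j, L ≤ j → a j = 0}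

lemma mul_le_siz {a : ℕ → ℕ} (ha : Antitone a) (hf : ∃ N, ∀ j, N ≤ j → a j = 0) (j : ℕ) :
    (j + 1) * a j ≤ siz a := by
  obtain ⟨N, hN⟩ := hf
  rw [siz_eq_sum (N := N + j + 1) fun i hi => hN i (by omega)]
  calc (j + 1) * a j = ∑ s ∈ Finset.range (j + 1), a j := by simp
    _ ≤ ∑ s ∈ Finset.range (j + 1), a s :=
        Finset.sum_le_sum fun s hs => ha (by simp at hs; omega)
    _ ≤ _ := Finset.sum_le_sum_of_subset (Finset.range_subset_range.2 (by omega))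

lemma bounds_of_siz_le {a : ℕ → ℕ} (ha : Antitone a) (hf : ∃ N, ∀ j, N ≤ j → a j = 0) {n : ℕ}
    (hn : siz a ≤ n) (j : ℕ) : a j ≤ n ∧ (n ≤ j → a j = 0) := by
  have h := mul_le_siz ha hf j
  refine ⟨by nlinarith, fun hj => ?_⟩
  by_contra h0
  have : 1 ≤ a j := by omega
  nlinarith

lemma finite_of_bounds {ι : Type*} [Finite ι] (n : ℕ) :
    {f : ι → ℕ → ℕ | ∀ i j, f i j ≤ n ∧ (n ≤ j → f i j = 0)}.Finite := by
  refine @Set.toFinite _ _ ?_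
  refine Finite.of_injective (β := ι → Fin n → Fin (n + 1))
    (fun f i j => ⟨f.1 i j, by have := (f.2 i j).1; omega⟩) ?_
  intro f g h
  ext i j
  by_cases hj : j < n
  · simpa using congrFun (congrFun h i) ⟨j, hj⟩
  · rw [(f.2 i j).2 (by omega), (g.2 i j).2 (by omega)]

/-- Subtracting the last part from all the parts. -/
def parEquiv (L : ℕ) : ParLE (L + 1) ≃ ParLE L × ℕ where
  toFun a := (⟨fun j => a.1 j - a.1 L,
    fun i j h => by have := a.2.1 h; simp only; omega,
    fun j hj => by have := a.2.1 hj; simp only; omega⟩, a.1 L)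
  invFun p := ⟨fun j => if j ≤ L then p.1.1 j + p.2 else 0,
    fun i j h => by have := p.1.2.1 h; simp only; split_ifs <;> omega,
    fun j hj => if_neg (by omega)⟩
  left_inv a := by
    ext j
    simp only
    split_ifs with h
    · have := a.2.1 h; omega
    · rw [a.2.2 j (by omega)]
  right_inv p := by
    refine Prod.ext ?_ ?_
    · ext j
      simp only [le_refl, if_true, p.1.2.2 L le_rfl]
      split_ifs with h
      · omega
      · rw [p.1.2.2 j (by omega)]; omega
    · simp only [le_refl, if_true, p.1.2.2 L le_rfl]; omega

lemma siz_parEquiv (L : ℕ) (a : ParLE (L + 1)) :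
    siz a.1 = siz (parEquiv L a).1.1 + (L + 1) * (parEquiv L a).2 := by
  rw [siz_eq_sum a.2.2, siz_eq_sum (N := L + 1) fun j hj => (parEquiv L a).1.2.2 j (by omega)]
  have : (L + 1) * (parEquiv L a).2 = ∑ s ∈ Finset.range (L + 1), a.1 L := by simp [parEquiv]
  rw [this, ← Finset.sum_add_distrib]
  refine Finset.sum_congr rfl fun s hs => ?_
  have : a.1 L ≤ a.1 s := a.2.1 (by simp at hs; omega)
  simp only [parEquiv, Equiv.coe_fn_mk]
  omega

lemma adm_parLE (t L : ℕ) (ht : 0 < t) : Adm fun a : ParLE L => ((t * siz a.1 : ℕ) : ℤ) := by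
  refine ⟨fun a => by positivity, fun n => ?_⟩
  have hf := finite_of_bounds (ι := Unit) n
  refine @Finite.of_injective _ _ hf
    (fun a => ⟨fun _ => a.1.1, fun _ j => bounds_of_siz_le a.1.2.1 ⟨L, a.1.2.2⟩ ?_ j⟩) ?_
  · have h : ((t * siz a.1.1 : ℕ) : ℤ) = n := a.2
    norm_cast at h
    nlinarith
  · intro a b h
    have := congrFun (congrArg Subtype.val h) ()
    exact Subtype.ext (Subtype.ext this)

lemma gf_parLE (t L : ℕ) (ht : 0 < t) :
    gf (fun a : ParLE L => ((t * siz a.1 : ℕ) : ℤ))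
      * ∏ m ∈ Finset.range L, (1 - (X : PowerSeries ℚ) ^ (t * (m + 1))) = 1 := by
  induction L with
  | zero =>
    have h0 : ∀ a : ParLE 0, a = ⟨fun _ => 0, fun _ _ _ => le_rfl, fun _ _ => rfl⟩ := fun a =>
      Subtype.ext (funext fun j => a.2.2 j (by omega))
    have hs : siz (fun _ => 0) = 0 := by simp [siz]
    rw [Finset.prod_range_zero, mul_one]
    ext n
    simp only [gf, coeff_mk, coeff_one]
    split_ifs with hn
    · subst hn
      have : Unique {a : ParLE 0 // ((t * siz a.1 : ℕ) : ℤ) = (0 : ℕ)} :=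
        ⟨⟨⟨⟨fun _ => 0, fun _ _ _ => le_rfl, fun _ _ => rfl⟩, by simp [hs]⟩⟩,
          fun a => Subtype.ext (h0 _)⟩
      rw [Nat.card_unique, Nat.cast_one]
    · have : IsEmpty {a : ParLE 0 // ((t * siz a.1 : ℕ) : ℤ) = n} :=
        ⟨fun a => hn (by have := a.2; rw [h0 a.1, hs] at this; push_cast at this; omega)⟩
      rw [Nat.card_of_isEmpty, Nat.cast_zero]
  | succ L ih =>
    have := gf_step (parEquiv L) (t * (L + 1)) (wB := fun a => ((t * siz a.1 : ℕ) : ℤ))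
      (fun a => by rw [siz_parEquiv]; push_cast; ring) (adm_parLE t (L + 1) ht)
    rw [Finset.prod_range_succ, mul_comm (∏ _ ∈ _, _), ← mul_assoc, this, ih]

/-- Euler's product for the generating function of partitions, modulo `X ^ N`. -/
lemma red_gf_par (t N L : ℕ) (ht : 0 < t) (hL : N ≤ L) :
    red N (gf fun a : Par => ((t * siz a.1 : ℕ) : ℤ))
      * red N (∏ m ∈ Finset.range L, (1 - (X : PowerSeries ℚ) ^ (t * (m + 1)))) = 1 := by
  rw [red_gf_eq N (B := ParLE L) (wB := fun a => ((t * siz a.1 : ℕ) : ℤ))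
    (fun a => ⟨a.1, a.2.1, L, a.2.2⟩), ← map_mul, gf_parLE t L ht, map_one]
  · intro a b h
    exact Subtype.ext (congrArg (fun x : Par => x.1) h)
  · intro b; rfl
  · intro a ha
    have h1 : siz a.1 ≤ L := by norm_cast at ha; nlinarith
    exact ⟨⟨a.1, a.2.1, fun j hj => (bounds_of_siz_le a.2.1 a.2.2 h1 j).2 hj⟩, rfl⟩

/-! ### Relabellings and pairs of letters -/

lemma exists_of_cast_eq {t : ℕ} {p q : ℤ} (h : (p : ZMod t) = (q : ZMod t)) :
    ∃ m : ℤ, p = q + t * m := by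
  obtain ⟨m, hm⟩ := (ZMod.intCast_eq_intCast_iff_dvd_sub q p t).1 h.symm
  exact ⟨m, by linarith⟩

lemma cast_add_mul {t : ℕ} (p m : ℤ) : ((p + t * m : ℤ) : ZMod t) = p := by simp

/-- A relabelling `g` of the places of the line carries the letters of the original word to new
places: the letter now at `p` was originally at `g p`. It is good if it commutes with the
translation by `t`, and if only up letters (`true`) have overtaken down letters (`false`) to their
right. -/
structure Good {t : ℕ} (w : ZMod t → Bool) (g : Equiv.Perm ℤ) : Prop where
  per : ∀ p, g (p + t) = g p + t
  ord : ∀ p q, p < q → (w (g p) = true ∨ w (g q) = false) → g p < g q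

lemma Good.per_mul {t : ℕ} {w : ZMod t → Bool} {g : Equiv.Perm ℤ} (hg : Good w g) (p m : ℤ) :
    g (p + t * m) = g p + t * m := by
  induction m using Int.induction_on with
  | zero => simp
  | succ i ih =>
    have := hg.per (p + t * i)
    rw [show p + (t : ℤ) * (i + 1) = p + t * i + t by ring, this, ih]; ring
  | pred i ih =>
    have := hg.per (p + t * (-(i : ℤ) - 1))
    rw [show p + (t : ℤ) * (-(i : ℤ) - 1) + t = p + t * (-(i : ℤ)) by ring, ih] at this
    linarith

lemma Good.symm_mul {t : ℕ} {w : ZMod t → Bool} {g : Equiv.Perm ℤ} (hg : Good w g) (p m : ℤ) :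
    g.symm (p + t * m) = g.symm p + t * m := by
  rw [Equiv.symm_apply_eq, hg.per_mul, Equiv.apply_symm_apply]

/-- The word obtained by moving the letters of `w` according to `g`. -/
def wordOf {t : ℕ} (w : ZMod t → Bool) (g : Equiv.Perm ℤ) (x : ZMod t) : Bool :=
  w (g (x.val : ℤ) : ℤ)

/-- The weight of the place `x`: the difference of the original positions of the letters
following and preceding it. -/
def wtOf {t : ℕ} (g : Equiv.Perm ℤ) (x : ZMod t) : ℤ := g (x.val : ℤ) - g ((x.val : ℤ) - 1)

section main

variable {t : ℕ} {w : ZMod t → Bool} {g : Equiv.Perm ℤ}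

lemma exists_val [NeZero t] (p : ℤ) : ∃ m : ℤ, (((p : ZMod t).val : ℕ) : ℤ) = p + t * m := by
  apply exists_of_cast_eq
  simp

lemma wordOf_cast [NeZero t] (hg : Good w g) (p : ℤ) : wordOf w g (p : ZMod t) = w (g p : ℤ) := by
  obtain ⟨m, hm⟩ := exists_val (t := t) p
  rw [wordOf, hm, hg.per_mul, cast_add_mul]

lemma wtOf_cast [NeZero t] (hg : Good w g) (p : ℤ) : wtOf g (p : ZMod t) = g p - g (p - 1) := by
  obtain ⟨m, hm⟩ := exists_val (t := t) p
  rw [wtOf, hm, hg.per_mul, show p + (t : ℤ) * m - 1 = p - 1 + t * m by ring, hg.per_mul]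
  ring

/-- The periodic transposition of the letters next to the place `d`. -/
def trans (d : ZMod t) (hd : d - 1 ≠ d) : Equiv.Perm ℤ :=
  Function.Involutive.toPerm
    (fun p : ℤ => if (p : ZMod t) = d - 1 then p + 1 else if (p : ZMod t) = d then p - 1 else p)
    (by
      intro p
      by_cases h1 : (p : ZMod t) = d - 1
      · simp [h1, hd.symm]
      · by_cases h2 : (p : ZMod t) = d
        · simp [h2, hd.symm]
        · simp [h1, h2])

lemma trans_apply (d : ZMod t) (hd : d - 1 ≠ d) (p : ℤ) : trans d hd p =
    if (p : ZMod t) = d - 1 then p + 1 else if (p : ZMod t) = d then p - 1 else p := rfl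

lemma trans_symm (d : ZMod t) (hd : d - 1 ≠ d) : (trans d hd).symm = trans d hd := rfl

lemma trans_trans (d : ZMod t) (hd : d - 1 ≠ d) (p : ℤ) : trans d hd (trans d hd p) = p :=
  (trans d hd).symm_apply_apply p

lemma trans_lt (d : ZMod t) (hd : d - 1 ≠ d) {p q : ℤ} (h : p < q) :
    trans d hd p < trans d hd q ∨ ((p : ZMod t) = d - 1 ∧ q = p + 1) := by
  by_cases hq : q = p + 1
  · subst hq
    by_cases hp : (p : ZMod t) = d - 1
    · exact Or.inr ⟨hp, rfl⟩
    · left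
      have h1 : ((p + 1 : ℤ) : ZMod t) ≠ d := fun h => hp (by push_cast at h; rw [← h]; ring)
      rw [trans_apply, trans_apply, if_neg hp, if_neg h1]
      split_ifs <;> omega
  · left
    by_cases hq2 : q = p + 2
    · subst hq2
      rw [trans_apply, trans_apply]
      by_cases hp : (p : ZMod t) = d - 1
      · have h1 : ((p + 2 : ℤ) : ZMod t) ≠ d := fun h => hd (by
          push_cast at h
          rw [hp] at h
          linear_combination -h)
        rw [if_pos hp, if_neg h1]
        split_ifs <;> omega
      · rw [if_neg hp]
        split_ifs <;> omega
    · rw [trans_apply, trans_apply]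
      split_ifs <;> omega

/-- Swapping an up letter with the down letter that follows it keeps the relabelling good. -/
lemma good_swap (hg : Good w g) (d : ℤ) (hd : (d : ZMod t) - 1 ≠ d)
    (h1 : w (g (d - 1) : ℤ) = true) (h2 : w (g d : ℤ) = false) :
    Good w ((trans (d : ZMod t) hd).trans g) := by
  constructor
  · intro p
    simp only [Equiv.trans_apply, trans_apply, Int.cast_add, Int.cast_natCast,
      CharP.cast_eq_zero, add_zero]
    split_ifs
    · rw [← hg.per]; congr 1; ring
    · rw [← hg.per]; congr 1; ring
    · rw [hg.per]
  · intro p q hpq hw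
    simp only [Equiv.trans_apply] at hw ⊢
    rcases trans_lt (d : ZMod t) hd hpq with h | ⟨hp, rfl⟩
    · exact hg.ord _ _ h hw
    · exfalso
      have hp' : ((p + 1 : ℤ) : ZMod t) = d := by push_cast; rw [hp]; ring
      have hp'' : (p : ZMod t) = (d - 1 : ℤ) := by push_cast; exact hp
      obtain ⟨m, rfl⟩ := exists_of_cast_eq hp''
      rw [trans_apply, trans_apply, if_pos hp, if_neg (by rw [hp']; exact hd.symm), if_pos hp'] at hw
      rw [show d - 1 + (t : ℤ) * m + 1 = d + t * m by ring, hg.per_mul,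
        show d + (t : ℤ) * m - 1 = d - 1 + t * m by ring, hg.per_mul, cast_add_mul, cast_add_mul,
        h1, h2] at hw
      simp at hw

/-- The pairs of an up letter and a down letter to the right of it, labelled by their original
positions, that lie at most `M` apart originally. They are taken up to translation by `t`. -/
noncomputable def pairs (w : ZMod t → Bool) (M : ℕ) (g : Equiv.Perm ℤ) : Finset (ℤ × ℤ) :=
  (Finset.Ico (0 : ℤ) t ×ˢ Finset.Ico (0 : ℤ) (t + M + 1)).filter fun x =>
    w x.1 = true ∧ w x.2 = false ∧ x.2 - x.1 ≤ M ∧ g.symm x.1 < g.symm x.2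

lemma Good.lt (hg : Good w g) {A B : ℤ} (hA : w A = true) (h : g.symm A < g.symm B) : A < B := by
  have := hg.ord _ _ h (Or.inl (by simpa using hA))
  simpa using this

lemma mem_pairs (hg : Good w g) {M : ℕ} {x : ℤ × ℤ} : x ∈ pairs w M g ↔
    0 ≤ x.1 ∧ x.1 < t ∧ w x.1 = true ∧ w x.2 = false ∧ x.2 - x.1 ≤ M ∧
      g.symm x.1 < g.symm x.2 := by
  rw [pairs, Finset.mem_filter, Finset.mem_product, Finset.mem_Ico, Finset.mem_Ico]
  constructor
  · rintro ⟨⟨⟨h1, h2⟩, -⟩, h⟩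
    exact ⟨h1, h2, h⟩
  · rintro ⟨h1, h2, h3, h4, h5, h6⟩
    have := hg.lt h3 h6
    exact ⟨⟨⟨h1, h2⟩, by omega, by omega⟩, h3, h4, h5, h6⟩

/-- Every pair can be translated into `pairs`. -/
lemma exists_mem_pairs [NeZero t] (hg : Good w g) {M : ℕ} {A B : ℤ} (hA : w A = true)
    (hB : w B = false)
    (hM : B - A ≤ M) (h : g.symm A < g.symm B) :
    ∃ x ∈ pairs w M g, x.2 - x.1 = B - A := by
  have ht : (0 : ℤ) < t := by exact_mod_cast NeZero.pos t
  refine ⟨(A + t * (-(A / t)), B + t * (-(A / t))), (mem_pairs hg).2 ⟨?_, ?_, ?_, ?_, ?_, ?_⟩, ?_⟩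
  · have := Int.emod_nonneg A ht.ne'
    have := Int.mul_ediv_add_emod A t
    simp only [mul_neg]; omega
  · have := Int.emod_lt_of_pos A ht
    have := Int.mul_ediv_add_emod A t
    simp only [mul_neg]; omega
  · rw [cast_add_mul, hA]
  · rw [cast_add_mul, hB]
  · simpa using hM
  · simpa only [hg.symm_mul, add_lt_add_iff_right] using h
  · simp

/-- In a pair of `pairs` with minimal difference, the two letters are adjacent. -/
lemma adjacent_of_min [NeZero t] (hg : Good w g) {M : ℕ} {x : ℤ × ℤ} (hx : x ∈ pairs w M g)
    (hmin : ∀ y ∈ pairs w M g, x.2 - x.1 ≤ y.2 - y.1) : g.symm x.2 = g.symm x.1 + 1 := by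
  obtain ⟨-, -, hA, hB, hM, hlt⟩ := (mem_pairs hg).1 hx
  by_contra hne
  have hlt' : g.symm x.1 + 1 < g.symm x.2 := by omega
  rcases hC : w (g (g.symm x.1 + 1) : ℤ) with _ | _
  · have h1 := hg.ord _ _ hlt' (Or.inr (by simpa using hB))
    rw [Equiv.apply_symm_apply] at h1
    obtain ⟨y, hy, hyd⟩ := exists_mem_pairs hg (M := M) hA hC (by omega) (by simp)
    have := hmin y hy
    omega
  · have h1 := hg.ord (g.symm x.1) (g.symm x.1 + 1) (by omega) (Or.inl (by simpa using hA))
    rw [Equiv.apply_symm_apply] at h1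
    obtain ⟨y, hy, hyd⟩ := exists_mem_pairs hg (M := M) hC hB (by omega) (by simpa using hlt')
    have := hmin y hy
    omega

/-- Swapping an adjacent pair removes this pair, and no other one, from `pairs`. -/
lemma pairs_swap [NeZero t] (hg : Good w g) {M : ℕ} {x : ℤ × ℤ} (hx : x ∈ pairs w M g) (d : ℤ)
    (h1 : g.symm x.1 = d - 1) (h2 : g.symm x.2 = d) (hd : (d : ZMod t) - 1 ≠ d)
    (hg' : Good w ((trans (d : ZMod t) hd).trans g)) :
    pairs w M ((trans (d : ZMod t) hd).trans g) = (pairs w M g).erase x := by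
  obtain ⟨hx0, hxt, hA, hB, hM, hlt⟩ := (mem_pairs hg).1 hx
  have e1 : g (d - 1) = x.1 := by rw [← h1, Equiv.apply_symm_apply]
  have e2 : g d = x.2 := by rw [← h2, Equiv.apply_symm_apply]
  ext y
  rw [Finset.mem_erase, mem_pairs hg, mem_pairs hg']
  simp only [Equiv.symm_trans_apply, trans_symm]
  constructor
  · rintro ⟨hy0, hyt, hyA, hyB, hyM, hy⟩
    have hylt : g.symm y.1 < g.symm y.2 := by
      rcases trans_lt (d : ZMod t) hd hy with h | ⟨hp, hq⟩
      · simpa only [trans_trans] using h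
      · exfalso
        have h3 : ((g.symm y.1 : ℤ) : ZMod t) = d := by
          have : g.symm y.1 = trans (d : ZMod t) hd (trans (d : ZMod t) hd (g.symm y.1)) :=
            (trans_trans _ _ _).symm
          rw [this, trans_apply _ _ (trans _ _ _), if_pos hp]
          push_cast; rw [hp]; ring
        obtain ⟨m, hm⟩ := exists_of_cast_eq h3
        rw [Equiv.symm_apply_eq, hg.per_mul, e2] at hm
        rw [hm, cast_add_mul, hB] at hyA
        cases hyA
    refine ⟨?_, hy0, hyt, hyA, hyB, hyM, hylt⟩
    rintro rfl
    rw [h1, h2, trans_apply, trans_apply, if_pos (by push_cast; rfl), if_neg hd.symm,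
      if_pos rfl] at hy
    omega
  · rintro ⟨hne, hy0, hyt, hyA, hyB, hyM, hy⟩
    refine ⟨hy0, hyt, hyA, hyB, hyM, ?_⟩
    rcases trans_lt (d : ZMod t) hd hy with h | ⟨hp, hq⟩
    · exact h
    · exfalso
      apply hne
      have hp' : ((g.symm y.1 : ℤ) : ZMod t) = (d - 1 : ℤ) := by push_cast; exact hp
      obtain ⟨m, hm⟩ := exists_of_cast_eq hp'
      rw [hm, show d - 1 + (t : ℤ) * m + 1 = d + t * m by ring, Equiv.symm_apply_eq, hg.per_mul,
        e2] at hq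
      rw [Equiv.symm_apply_eq, hg.per_mul, e1] at hm
      have hm0 : m = 0 := by
        have ht : (0 : ℤ) < t := by exact_mod_cast NeZero.pos t
        have h3 : m < 1 := by by_contra h; nlinarith
        have h4 : -1 < m := by by_contra h; nlinarith
        omega
      subst hm0
      exact Prod.ext (by simpa using hm) (by simpa using hq)

end main

/-! ### Sorting the word -/

lemma State.antitone {t : ℕ} {v : ZMod t → Bool} (S : State t v) (p : ZMod t) :
    Antitone (S.μ p) := by
  refine antitone_nat_of_succ_le fun s => ?_
  rcases hv : v p with _ | _
  · have := S.dn p hv s; omega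
  · have h1 := S.up p hv s; have h2 := S.up p hv (s + 1); omega

section terminal

variable {t : ℕ} [NeZero t] {w : ZMod t → Bool} {g : Equiv.Perm ℤ}

/-- Swapping an adjacent up-down pair divides the generating function by the corresponding
geometric series. -/
lemma gf_swap (hg : Good w g) (hadm : Adm (State.wt (w := wordOf w g) (wtOf g))) (d : ℤ)
    (h1 : w (g (d - 1) : ℤ) = true) (h2 : w (g d : ℤ) = false) (hd : (d : ZMod t) - 1 ≠ d) :
    Adm (State.wt (w := wordOf w ((trans (d : ZMod t) hd).trans g))
      (wtOf ((trans (d : ZMod t) hd).trans g))) ∧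
    gf (State.wt (w := wordOf w g) (wtOf g)) * (1 - X ^ (g d - g (d - 1)).toNat)
      = gf (State.wt (w := wordOf w ((trans (d : ZMod t) hd).trans g))
        (wtOf ((trans (d : ZMod t) hd).trans g))) := by
  have hg' := good_swap hg d hd h1 h2
  have hlt : g (d - 1) < g d := hg.ord _ _ (by omega) (Or.inl h1)
  set g' := (trans (d : ZMod t) hd).trans g with hg'_def
  have hval : ∀ p : ℤ, g' p = g p + (g d - g (d - 1)) *
      ((if (p : ZMod t) = d - 1 then 1 else 0) - (if (p : ZMod t) = d then 1 else 0)) := by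
    intro p
    simp only [g', Equiv.trans_apply, trans_apply]
    by_cases hp : (p : ZMod t) = d - 1
    · have hp' : (p : ZMod t) = (d - 1 : ℤ) := by push_cast; exact hp
      obtain ⟨m, rfl⟩ := exists_of_cast_eq hp'
      rw [if_pos hp, if_pos hp, if_neg (by rw [hp]; exact hd),
        show d - 1 + (t : ℤ) * m + 1 = d + t * m by ring, hg.per_mul, hg.per_mul]
      ring
    · by_cases hp2 : (p : ZMod t) = d
      · obtain ⟨m, rfl⟩ := exists_of_cast_eq hp2
        rw [if_neg hp, if_pos hp2, if_neg hp, if_pos hp2,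
          show d + (t : ℤ) * m - 1 = d - 1 + t * m by ring, hg.per_mul, hg.per_mul]
        ring
      · simp [hp, hp2]
  have a1 : wordOf w g ((d : ZMod t) - 1) = true := by
    have := wordOf_cast hg (d - 1)
    push_cast at this
    rw [this, h1]
  have a2 : wordOf w g (d : ZMod t) = false := by rw [wordOf_cast hg, h2]
  have b1 : wordOf w g' ((d : ZMod t) - 1) = false := by
    have := wordOf_cast hg' (d - 1)
    push_cast at this
    rw [this]
    simp only [g', Equiv.trans_apply, trans_apply]
    simp [h2]
  have b2 : wordOf w g' (d : ZMod t) = true := by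
    rw [wordOf_cast hg']
    simp only [g', Equiv.trans_apply, trans_apply]
    simp [h1, hd.symm]
  have b3 : ∀ p : ZMod t, p ≠ d - 1 → p ≠ d → wordOf w g' p = wordOf w g p := by
    intro p hp hp2
    obtain ⟨p, rfl⟩ := ZMod.intCast_surjective p
    rw [wordOf_cast hg', wordOf_cast hg, hval, if_neg hp, if_neg hp2]
    simp
  have hY : wtOf g (d : ZMod t) = g d - g (d - 1) := wtOf_cast hg d
  have b4 : ∀ p : ZMod t, wtOf g' p = wtOf g p + wtOf g (d : ZMod t) *
      ((if p = (d : ZMod t) - 1 then 1 else 0) + (if p = (d : ZMod t) + 1 then 1 else 0)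
      - 2 * (if p = (d : ZMod t) then 1 else 0)) := by
    intro p
    obtain ⟨p, rfl⟩ := ZMod.intCast_surjective p
    rw [wtOf_cast hg', wtOf_cast hg, wtOf_cast hg, hval, hval]
    have c1 : (((p - 1 : ℤ) : ZMod t) = d - 1) = ((p : ZMod t) = d) := by
      push_cast; rw [sub_left_inj]
    have c2 : (((p - 1 : ℤ) : ZMod t) = d) = ((p : ZMod t) = d + 1) := by
      push_cast; rw [sub_eq_iff_eq_add]
    simp only [c1, c2]
    ring
  have hwt := wt_swapEquiv a1 a2 b1 b2 b3 (wtOf g) (wtOf g') b4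
  have hm : (((g d - g (d - 1)).toNat : ℕ) : ℤ) = wtOf g (d : ZMod t) := by
    rw [hY, Int.toNat_of_nonneg (by omega)]
  exact ⟨adm_of_step (swapEquiv a1 a2 b1 b2 b3) _ hwt hadm,
    gf_step (swapEquiv a1 a2 b1 b2 b3) _ (by rw [hm]; exact hwt) hadm⟩

lemma sum_zmod (f : ZMod t → ℤ) : ∑ x, f x = ∑ p ∈ Finset.range t, f ((p : ℤ) : ZMod t) := by
  refine Finset.sum_nbij' (fun x => x.val) (fun p => (p : ZMod t)) ?_ ?_ ?_ ?_ ?_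
  · intro x _; simpa using ZMod.val_lt x
  · intro p _; simp
  · intro x _; simp
  · intro p hp; exact ZMod.val_cast_of_lt (by simpa using hp)
  · intro x _; simp

lemma sum_by_parts (g a : ℤ → ℤ) (n : ℕ) :
    ∑ p ∈ Finset.range n, (g p - g (p - 1)) * a p
      = ∑ p ∈ Finset.range n, g p * (a p - a (p + 1)) + g (n - 1) * a n - g (-1) * a 0 := by
  induction n with
  | zero => simp
  | succ n ih =>
    rw [Finset.sum_range_succ, ih, Finset.sum_range_succ]
    push_cast
    rw [add_sub_cancel_right]
    ring

/-- Summation by parts for the weight. -/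
lemma wt_eq (hg : Good w g) {v : ZMod t → Bool} (S : State t v) :
    S.wt (wtOf g) = t * siz (S.μ 0) + ∑ p ∈ Finset.range t,
      g p * ((siz (S.μ ((p : ℤ) : ZMod t)) : ℤ) - siz (S.μ ((p + 1 : ℤ) : ZMod t))) := by
  rw [State.wt, sum_zmod, Finset.sum_congr rfl fun p _ => by rw [wtOf_cast hg]]
  rw [sum_by_parts g (fun p => siz (S.μ (p : ZMod t)))]
  have h := hg.per (-1)
  rw [show (-1 : ℤ) + t = t - 1 by ring] at h
  rw [h]
  simp only [Int.cast_natCast, CharP.cast_eq_zero, Int.cast_zero]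
  ring

lemma Interl.siz_le {a b : ℕ → ℕ} (h : Interl a b) (ha : ∃ N, ∀ j, N ≤ j → a j = 0) :
    siz b ≤ siz a ∧ (siz a = siz b → a = b) := by
  obtain ⟨N, hN⟩ := ha
  have key : ∀ M, N ≤ M → siz b = ∑ s ∈ Finset.range M, b s ∧ siz a = ∑ s ∈ Finset.range M, a s :=
    fun M hM => ⟨siz_eq_sum fun j hj => by have := (h j).1; rw [hN j (by omega)] at this; omega,
      siz_eq_sum fun j hj => hN j (by omega)⟩
  refine ⟨?_, fun he => ?_⟩
  · rw [(key N le_rfl).1, (key N le_rfl).2]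
    exact Finset.sum_le_sum fun s _ => (h s).1
  · funext s
    obtain ⟨h1, h2⟩ := key (N + s + 1) (by omega)
    rw [h1, h2] at he
    exact ((Finset.sum_eq_sum_iff_of_le fun s _ => (h s).1).1 he.symm s (by simp)).symm

/-- If every remaining pair is far apart, a periodic sequence of small weight is constant: the
weight exceeds `t` times the size of `μ 0` by at least `N` times the total increase of the sizes
along the up steps of a period, so that this increase vanishes. -/
lemma State.const_of_wt_lt (hg : Good w g) (N : ℕ) (hrow : ∃ x, w x = false)
    (hpairs : pairs w (N + t) g = ∅) (S : State t (wordOf w g)) (hS : S.wt (wtOf g) < N)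
    (x : ZMod t) : S.μ x = S.μ 0 := by
  have ht : (0 : ℤ) < t := by exact_mod_cast NeZero.pos t
  -- all down letters carry larger labels than all up letters in the period
  have hgap : ∀ p q : ℕ, p < t → q < t → w (g p : ℤ) = true → w (g q : ℤ) = false →
      (g p : ℤ) + N < g q := by
    intro p q hp hq hwp hwq
    by_contra hcon
    have hq' : w (g (q + t * 1) : ℤ) = false := by rw [hg.per_mul, cast_add_mul, hwq]
    obtain ⟨y, hy, -⟩ := exists_mem_pairs hg (M := N + t) hwp hq'
      (by rw [hg.per_mul]; push_cast; linarith) (by simp; omega)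
    rw [hpairs] at hy
    simp at hy
  -- the least label of a down letter
  obtain ⟨q, hqm, hqmin⟩ : ∃ q ∈ (Finset.range t).filter (fun q : ℕ => w (g (q : ℤ) : ℤ) = false),
      ∀ q' ∈ (Finset.range t).filter (fun q : ℕ => w (g (q : ℤ) : ℤ) = false),
        g (q : ℤ) ≤ g (q' : ℤ) := by
    refine Finset.exists_min_image _ (fun q : ℕ => g (q : ℤ)) ?_
    obtain ⟨x, hx⟩ := hrow
    obtain ⟨p, rfl⟩ := ZMod.intCast_surjective x
    refine ⟨((g.symm p : ℤ) : ZMod t).val, ?_⟩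
    rw [Finset.mem_filter, Finset.mem_range]
    refine ⟨ZMod.val_lt _, ?_⟩
    obtain ⟨m, hm⟩ := exists_val (t := t) (g.symm p)
    rw [hm, hg.per_mul, cast_add_mul, Equiv.apply_symm_apply, hx]
  simp only [Finset.mem_filter, Finset.mem_range] at hqm hqmin
  set a : ℤ → ℤ := fun p => siz (S.μ (p : ZMod t)) with ha
  have hwt := wt_eq hg S
  change _ = _ + ∑ p ∈ Finset.range t, g p * (a p - a (p + 1)) at hwt
  have hup : ∀ p : ℤ, w (g p : ℤ) = true → a p ≤ a (p + 1) ∧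
      (a p = a (p + 1) → S.μ ((p + 1 : ℤ) : ZMod t) = S.μ (p : ZMod t)) := by
    intro p hp
    have h := (S.up (p : ZMod t) (by rw [wordOf_cast hg, hp])).siz_le (S.fin _)
    simp only [ha]
    push_cast
    exact ⟨by exact_mod_cast h.1, fun he => h.2 (by exact_mod_cast he.symm)⟩
  have hdn : ∀ p : ℤ, w (g p : ℤ) = false → a (p + 1) ≤ a p ∧
      (a p = a (p + 1) → S.μ ((p + 1 : ℤ) : ZMod t) = S.μ (p : ZMod t)) := by
    intro p hp
    have h := (S.dn (p : ZMod t) (by rw [wordOf_cast hg, hp])).siz_le (S.fin _)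
    simp only [ha]
    push_cast
    exact ⟨by exact_mod_cast h.1, fun he => (h.2 (by exact_mod_cast he)).symm⟩
  have htel : ∑ p ∈ Finset.range t, (a p - a (p + 1)) = 0 := by
    have := Finset.sum_range_sub (fun n : ℕ => a n) t
    push_cast at this
    have h0 : a t = a 0 := by simp [ha]
    rw [h0, sub_self] at this
    rw [← neg_eq_zero, ← Finset.sum_neg_distrib, ← this]
    exact Finset.sum_congr rfl fun p _ => by ring
  -- termwise lower bound
  set b : ℕ → ℤ := fun p => if w (g (p : ℤ) : ℤ) = true then a (p + 1) - a p else 0 with hb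
  have hb0 : ∀ p ∈ Finset.range t, 0 ≤ b p := by
    intro p _
    simp only [hb]
    split_ifs with h
    · have := (hup p h).1; omega
    · exact le_rfl
  have hbound : (N : ℤ) * ∑ p ∈ Finset.range t, b p
      ≤ ∑ p ∈ Finset.range t, g p * (a p - a (p + 1)) := by
    have e : ∑ p ∈ Finset.range t, g p * (a p - a (p + 1))
        = ∑ p ∈ Finset.range t, (g p - g q) * (a p - a (p + 1)) := by
      simp only [sub_mul, Finset.sum_sub_distrib, ← Finset.mul_sum, htel]
      ring
    rw [e, Finset.mul_sum]
    refine Finset.sum_le_sum fun p hp => ?_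
    simp only [hb]
    rw [Finset.mem_range] at hp
    rcases hw : w (g (p : ℤ) : ℤ) with _ | _
    · have h1 := (hdn p hw).1
      have h2 := hqmin p ⟨hp, hw⟩
      simp only [Bool.false_eq_true, if_false, mul_zero]
      exact mul_nonneg (by linarith) (by linarith)
    · have h1 := (hup p hw).1
      have h2 := hgap p q hp hqm.1 hw hqm.2
      simp only [if_true]
      nlinarith
  have hbsum : ∑ p ∈ Finset.range t, b p = 0 := by
    have h1 := Finset.sum_nonneg hb0
    have h2 : (0 : ℤ) ≤ t * siz (S.μ 0) := by positivity
    by_contra hne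
    have : 1 ≤ ∑ p ∈ Finset.range t, b p := by omega
    have hN : (0 : ℤ) ≤ N := by positivity
    nlinarith
  have hb' := (Finset.sum_eq_zero_iff_of_nonneg hb0).1 hbsum
  have hle : ∀ p ∈ Finset.range t, 0 ≤ a p - a (p + 1) := by
    intro p hp
    have h1 := hb' p hp
    simp only [hb] at h1
    rcases hw : w (g (p : ℤ) : ℤ) with _ | _
    · have := (hdn p hw).1; linarith
    · rw [hw] at h1; simp only [if_true] at h1; linarith
  have hall := (Finset.sum_eq_zero_iff_of_nonneg hle).1 htel
  have hstep : ∀ n : ℕ, n ≤ t → S.μ ((n : ℤ) : ZMod t) = S.μ 0 := by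
    intro n
    induction n with
    | zero => intro _; simp
    | succ n ih =>
      intro hn
      rw [← ih (by omega)]
      have h1 := hall n (by simpa using hn)
      rcases hw : w (g (n : ℤ) : ℤ) with _ | _
      · have := (hdn n hw).2 (by linarith)
        push_cast at this ⊢; exact this
      · have := (hup n hw).2 (by linarith)
        push_cast at this ⊢; exact this
  have := hstep x.val (ZMod.val_lt x).le
  simpa using this

/-- The periodic sequence that is constantly a given partition. -/
def State.const (v : ZMod t → Bool) (a : Par) : State t v where
  μ _ := a.1
  fin _ := a.2.2
  up _ _ s := ⟨le_rfl, a.2.1 (Nat.le_succ s)⟩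
  dn _ _ s := ⟨le_rfl, a.2.1 (Nat.le_succ s)⟩

/-- When no pair at most `N + t` apart is left, only the constant sequences matter modulo `X ^ N`,
and these have weight `t` times the size of the partition. -/
lemma red_gf_terminal (hg : Good w g) (N : ℕ) (hrow : ∃ x, w x = false)
    (hpairs : pairs w (N + t) g = ∅) :
    red N (gf (State.wt (w := wordOf w g) (wtOf g)))
      = red N (gf fun a : Par => ((t * siz a.1 : ℕ) : ℤ)) := by
  refine red_gf_eq N (State.const (wordOf w g)) ?_ ?_ ?_
  · intro a b h
    exact Subtype.ext (congrFun (congrArg State.μ h) 0)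
  · intro a
    rw [wt_eq hg]
    simp [State.const]
  · intro S hS
    refine ⟨⟨S.μ 0, S.antitone 0, S.fin 0⟩, ?_⟩
    ext1
    funext x
    exact (S.const_of_wt_lt hg N hrow hpairs hS x).symm

/-- Modulo `X ^ N`, all pairs at most `N + t` apart can be swapped, each swap contributing the
factor `1 - X ^ (B - A)` of the pair `(A, B)` and removing it from the set of pairs. -/
lemma red_gf_main (N : ℕ) (hrow : ∃ x, w x = false) (n : ℕ) :
    ∀ g : Equiv.Perm ℤ, Good w g → Adm (State.wt (w := wordOf w g) (wtOf g)) →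
      (pairs w (N + t) g).card = n →
      red N (gf (State.wt (w := wordOf w g) (wtOf g))
        * ∏ x ∈ pairs w (N + t) g, (1 - (X : PowerSeries ℚ) ^ (x.2 - x.1).toNat))
      = red N (gf fun a : Par => ((t * siz a.1 : ℕ) : ℤ)) := by
  induction n with
  | zero =>
    intro g hg _ hn
    rw [Finset.card_eq_zero] at hn
    rw [hn, Finset.prod_empty, mul_one, red_gf_terminal hg N hrow hn]
  | succ n ih =>
    intro g hg hadm hn
    obtain ⟨x, hx, hmin⟩ := Finset.exists_min_image (pairs w (N + t) g) (fun x => x.2 - x.1)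
      (Finset.card_pos.1 (by omega))
    have hadj := adjacent_of_min hg hx hmin
    obtain ⟨-, -, hA, hB, -, -⟩ := (mem_pairs hg).1 hx
    set d := g.symm x.2 with hd
    have e2 : g d = x.2 := by simp [hd]
    have e1 : g (d - 1) = x.1 := by rw [hadj]; simp
    have hd1 : (d : ZMod t) - 1 ≠ d := by
      intro h
      have h' : ((d - 1 : ℤ) : ZMod t) = d := by push_cast; exact h
      obtain ⟨m, hm⟩ := exists_of_cast_eq h'
      have := hg.per_mul d m
      rw [← hm, e1, e2] at this
      rw [this, cast_add_mul, hB] at hA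
      cases hA
    have h1 : w (g (d - 1) : ℤ) = true := by rw [e1, hA]
    have h2 : w (g d : ℤ) = false := by rw [e2, hB]
    have hg' := good_swap hg d hd1 h1 h2
    obtain ⟨hadm', hgf⟩ := gf_swap hg hadm d h1 h2 hd1
    have hp := pairs_swap hg hx d (by omega) rfl hd1 hg'
    have := ih _ hg' hadm' (by rw [hp, Finset.card_erase_of_mem hx]; omega)
    rw [← this, ← hgf, hp, ← Finset.mul_prod_erase _ _ hx, e1, e2, mul_assoc]

end terminal

/-! ### The diagonals of a cylindric partition -/

section initial

/-- The profile on 0-based indices, extended by zero. -/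
def cc (k : ℕ) (c : Fin k → ℕ) (m : ℕ) : ℕ := profExt k c (m + 1)

lemma cc_fin {k : ℕ} (c : Fin k → ℕ) (i : Fin k) : cc k c i = c i := by
  have := i.isLt
  simp [cc, profExt, this]

/-- The position of the `i`-th down letter: the word consists, for each `i`, of `c i` up letters
followed by a down letter. -/
def rho (k : ℕ) (c : Fin k → ℕ) (i : ℕ) : ℕ := ∑ m ∈ Finset.range (i + 1), cc k c m + i

lemma rho_zero (k : ℕ) (c : Fin k → ℕ) : rho k c 0 = cc k c 0 := by simp [rho]

lemma rho_succ (k : ℕ) (c : Fin k → ℕ) (i : ℕ) :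
    rho k c (i + 1) = rho k c i + cc k c (i + 1) + 1 := by
  rw [rho, Finset.sum_range_succ, rho]; ring

lemma rho_strictMono (k : ℕ) (c : Fin k → ℕ) : StrictMono (rho k c) :=
  strictMono_nat_of_lt_succ fun i => by rw [rho_succ]; omega

lemma rho_last {k : ℕ} [NeZero k] (c : Fin k → ℕ) :
    rho k c (k - 1) + 1 = k + ∑ i, c i := by
  have hk : 0 < k := NeZero.pos k
  rw [rho, show k - 1 + 1 = k by omega, Finset.sum_range]
  simp only [cc_fin]
  omega

lemma rho_lt {k : ℕ} [NeZero k] (c : Fin k → ℕ) (i : Fin k) :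
    rho k c i < k + ∑ i, c i := by
  rw [← rho_last c]
  have := (rho_strictMono k c).monotone (show (i : ℕ) ≤ k - 1 by omega)
  omega

variable {k t : ℕ} {c : Fin k → ℕ}

open Classical in
/-- The initial word: its down letters are at the residues of the `rho k c i`, `i < k`. -/
noncomputable def word (t k : ℕ) (c : Fin k → ℕ) (x : ZMod t) : Bool :=
  decide (¬ ∃ i : Fin k, (rho k c i : ZMod t) = x)

lemma word_false {x : ZMod t} :
    word t k c x = false ↔ ∃ i : Fin k, (rho k c i : ZMod t) = x := by
  simp [word]

lemma fin_succ [NeZero k] (i : Fin k) :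
    ((i : ℕ) + 1 < k ∧ ((i + 1 : Fin k) : ℕ) = i + 1) ∨
      ((i : ℕ) = k - 1 ∧ ((i + 1 : Fin k) : ℕ) = 0) := by
  have hi := i.isLt
  have : ((i + 1 : Fin k) : ℕ) = (i + 1) % k := by
    rw [Fin.val_add, Fin.val_one', Nat.add_mod_mod]
  rw [this]
  by_cases h : (i : ℕ) + 1 < k
  · exact Or.inl ⟨h, Nat.mod_eq_of_lt h⟩
  · right
    have h1 : (i : ℕ) + 1 = k := by omega
    rw [h1, Nat.mod_self]
    exact ⟨by omega, rfl⟩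

lemma natCast_inj_of_lt {a b : ℕ} (ha : a < t) (hb : b < t) (h : (a : ZMod t) = b) : a = b := by
  rw [ZMod.natCast_eq_natCast_iff'] at h
  rwa [Nat.mod_eq_of_lt ha, Nat.mod_eq_of_lt hb] at h

lemma rho_inj [NeZero k] (ht : t = k + ∑ i, c i) {i j : Fin k}
    (h : (rho k c i : ZMod t) = rho k c j) : i = j := by
  have := natCast_inj_of_lt (by rw [ht]; exact rho_lt c i) (by rw [ht]; exact rho_lt c j) h
  exact Fin.ext ((rho_strictMono k c).injective this)

/-- The recursion `rho_succ`, read cyclically. -/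
lemma rho_step [NeZero k] (ht : t = k + ∑ i, c i) (i : Fin k) :
    (rho k c (i + 1 : Fin k) : ZMod t) = rho k c i + c (i + 1) + 1 := by
  rw [← cc_fin c (i + 1)]
  rcases fin_succ i with ⟨h, e⟩ | ⟨h, e⟩
  · rw [e, rho_succ]; push_cast; ring
  · have h1 := rho_last c
    rw [← ht] at h1
    have h2 : ((rho k c (k - 1) + 1 : ℕ) : ZMod t) = 0 := by rw [h1]; simp
    push_cast at h2
    rw [e, h, rho_zero]
    linear_combination -h2

lemma word_col [NeZero k] (ht : t = k + ∑ i, c i) (i : Fin k) (v : ℕ) (hv : v < c (i + 1)) :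
    word t k c (rho k c i + v + 1) = true := by
  by_contra hcon
  rw [Bool.not_eq_true, word_false] at hcon
  obtain ⟨j, hj⟩ := hcon
  rw [← cc_fin c (i + 1)] at hv
  have hlt := rho_lt c j
  rw [← ht] at hlt
  have hm := rho_strictMono k c
  rcases fin_succ i with ⟨h, e⟩ | ⟨h, e⟩
  · rw [e] at hv
    have h1 := rho_lt c (i + 1)
    rw [← ht, e, rho_succ] at h1
    have := natCast_inj_of_lt (a := rho k c j) (b := rho k c i + v + 1) hlt (by omega)
      (by push_cast; exact hj)
    have h2 : (i : ℕ) < j := hm.lt_iff_lt.1 (by omega)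
    have h3 := hm.monotone (show (i : ℕ) + 1 ≤ j by omega)
    rw [rho_succ] at h3
    omega
  · have h1 := rho_last c
    rw [← ht] at h1
    have h2 : ((rho k c (k - 1) + 1 : ℕ) : ZMod t) = 0 := by rw [h1]; simp
    push_cast at h2
    rw [e] at hv
    have h3 := hm.monotone (show 0 ≤ (j : ℕ) by omega)
    rw [rho_zero] at h3
    have := natCast_inj_of_lt (a := rho k c j) (b := v) hlt (by omega)
      (by rw [h] at hj; linear_combination hj + h2)
    omega

/-- `Row k c d u` says that the letter `u` steps to the right of the place `d` is a down letter. -/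
def Row (k : ℕ) (c : Fin k → ℕ) (d : ZMod t) (u : ℕ) : Prop := word t k c (d + u) = false

noncomputable instance (d : ZMod t) : DecidablePred (Row k c d) := fun u =>
  inferInstanceAs (Decidable (word t k c (d + u) = false))

lemma row_infinite [NeZero k] [NeZero t] (d : ZMod t) : (Set.ofPred (Row k c d)).Infinite := by
  rw [Set.infinite_iff_exists_gt]
  intro n
  have ht : 0 < t := NeZero.pos t
  refine ⟨((rho k c (0 : Fin k) : ZMod t) - d).val + t * (n + 1), ?_, ?_⟩
  · change word t k c _ = false
    rw [word_false]
    refine ⟨0, ?_⟩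
    push_cast
    simp
  · nlinarith

/-- The box in row `i` and column `j` lies on the diagonal `rho i - j`; its index on this diagonal
is the number of rows that the diagonal has met before. -/
noncomputable def cell (t : ℕ) (c : Fin k → ℕ) (x : Fin k × ℕ) : ZMod t × ℕ :=
  ((rho k c x.1 : ZMod t) - x.2, Nat.count (Row k c ((rho k c x.1 : ZMod t) - (x.2 : ZMod t))) x.2)

lemma row_cell (i : Fin k) (j : ℕ) : Row k c ((rho k c i : ZMod t) - (j : ZMod t)) j := by
  rw [Row, word_false]
  exact ⟨i, by ring⟩

lemma cell_bijective [NeZero k] [NeZero t] (ht : t = k + ∑ i, c i) : Function.Bijective (cell t c) := by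
  constructor
  · rintro ⟨i, j⟩ ⟨i', j'⟩ h
    simp only [cell, Prod.mk.injEq] at h
    obtain ⟨h1, h2⟩ := h
    have r := row_cell (t := t) (c := c) i' j'
    rw [← h1] at h2 r
    have hj := Nat.count_injective (row_cell i j) r h2
    subst hj
    rw [sub_left_inj] at h1
    rw [rho_inj ht h1]
  · rintro ⟨d, s⟩
    have h1 := Nat.nth_mem_of_infinite (row_infinite (k := k) (c := c) d) s
    have h2 := Nat.count_nth_of_infinite (row_infinite (k := k) (c := c) d) s
    obtain ⟨i, hi⟩ := word_false.1 h1
    refine ⟨(i, Nat.nth (Row k c d) s), ?_⟩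
    have : (rho k c i : ZMod t) - (Nat.nth (Row k c d) s : ℕ) = d := by rw [hi]; ring
    simp only [cell]
    rw [this, h2]

/-- The number of down letters at `p`, which is `0` or `1`. -/
noncomputable def ind (k : ℕ) (c : Fin k → ℕ) (p : ZMod t) : ℕ :=
  if word t k c p = false then 1 else 0

lemma count_succ_left (p : ZMod t) (n : ℕ) :
    Nat.count (Row k c p) (n + 1) = Nat.count (Row k c (p + 1)) n + ind k c p := by
  rw [Nat.count_succ']
  congr 1
  · congr 1
    funext u
    simp only [Row]
    push_cast
    rw [show p + ((u : ZMod t) + 1) = p + 1 + u by ring]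
  · simp [Row, ind]

/-- A step to the right in a row of the array moves to the previous diagonal. -/
lemma cell_right (i : Fin k) (j : ℕ) : cell t c (i, j + 1) =
    ((cell t c (i, j)).1 - 1,
      (cell t c (i, j)).2 + ind k c ((cell t c (i, j)).1 - 1)) := by
  have e : (rho k c i : ZMod t) - (j + 1 : ℕ) = rho k c i - j - 1 := by push_cast; ring
  simp only [cell]
  rw [e, count_succ_left, sub_add_cancel]

/-- From one down letter to just before the next one there is a single down letter. -/
lemma count_block [NeZero k] (ht : t = k + ∑ i, c i) (i : Fin k) :
    Nat.count (Row k c (rho k c i : ZMod t)) (c (i + 1) + 1) = 1 := by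
  rw [count_succ_left, ind, if_pos (word_false.2 ⟨i, rfl⟩)]
  rw [Nat.add_eq_right, Nat.count_iff_forall_not]
  intro v hv hrow
  have := word_col ht i v hv
  rw [Row, show (rho k c i : ZMod t) + 1 + v = rho k c i + v + 1 by ring, this] at hrow
  cases hrow

/-- A step to the next row of the array, shifted by the profile, moves to the next diagonal. -/
lemma cell_down [NeZero k] (ht : t = k + ∑ i, c i) (i : Fin k) (j : ℕ) :
    (cell t c (i + 1, j + c (i + 1))).1 = (cell t c (i, j)).1 + 1 ∧
      (cell t c (i + 1, j + c (i + 1))).2 + ind k c (cell t c (i, j)).1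
        = (cell t c (i, j)).2 + 1 := by
  have e : (rho k c (i + 1 : Fin k) : ZMod t) - (j + c (i + 1) : ℕ) = rho k c i - j + 1 := by
    rw [rho_step ht]; push_cast; ring
  simp only [cell]
  refine ⟨e, ?_⟩
  rw [e, ← count_succ_left, add_assoc, Nat.count_add]
  congr 1
  refine Eq.trans ?_ (count_block ht i)
  congr 1
  funext u
  simp only [Row]
  push_cast
  rw [show (rho k c i : ZMod t) - j + (j + u) = rho k c i + u by ring]

lemma word_cases (p : ZMod t) : (word t k c p = true ∧ ind k c p = 0) ∨
    (word t k c p = false ∧ ind k c p = 1) := by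
  rcases h : word t k c p with _ | _ <;> simp [ind, h]

/-- The cells of the array of a cylindric partition, sorted by diagonals. -/
noncomputable def cellEquiv [NeZero t] [NeZero k] (ht : t = k + ∑ i, c i) :
    Fin k × ℕ ≃ ZMod t × ℕ := Equiv.ofBijective (cell t c) (cell_bijective ht)

lemma exists_zero_iff {ι : Type*} [Finite ι] (f : ι → ℕ → ℕ) :
    (∀ i, ∃ N, ∀ j, N ≤ j → f i j = 0) ↔ {x : ι × ℕ | f x.1 x.2 ≠ 0}.Finite := by
  constructor
  · intro h
    choose N hN using h
    refine Set.Finite.subset (Set.Finite.biUnion (Set.finite_univ (α := ι)) fun i _ =>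
      (Set.finite_Iio (N i)).image (fun j => (i, j))) ?_
    rintro ⟨i, j⟩ hx
    simp only [Set.mem_iUnion]
    refine ⟨i, trivial, j, ?_, rfl⟩
    by_contra hj
    exact hx (hN i j (by simpa using hj))
  · intro h i
    obtain ⟨M, hM⟩ := (h.image Prod.snd).bddAbove
    refine ⟨M + 1, fun j hj => ?_⟩
    by_contra hne
    have := hM ⟨(i, j), hne, rfl⟩
    simp only at this
    omega

/-- The sizes of the rows of an array add up to the sum over all its cells; the latter is invariant
under rearranging the cells. -/
lemma sum_siz {ι : Type*} [Fintype ι] (f : ι → ℕ → ℕ)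
    (h : ∀ i, ∃ N, ∀ j, N ≤ j → f i j = 0) : ∑ i, siz (f i) = ∑' x : ι × ℕ, f x.1 x.2 := by
  rw [Summable.tsum_prod' (summable_of_hasFiniteSupport ((exists_zero_iff f).1 h))]
  · rw [tsum_fintype]; rfl
  · intro i
    obtain ⟨N, hN⟩ := h i
    exact summable_of_ne_finset_zero (s := Finset.range N) fun j hj => hN j (by simpa using hj)

/-- The diagonals of a cylindric partition form a periodic sequence of interlacing partitions. -/
noncomputable def stateEquiv [NeZero t] [NeZero k] (ht : t = k + ∑ i, c i) :
    CylindricPartition k c ≃ State t (word t k c) where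
  toFun Λ :=
    -- the two families of inequalities between the entries, read along the diagonals
    have right : ∀ d s, Function.uncurry Λ.part ((cellEquiv ht).symm (d - 1, s + ind k c (d - 1)))
        ≤ Function.uncurry Λ.part ((cellEquiv ht).symm (d, s)) := by
      intro d s
      obtain ⟨⟨i, j⟩, hx⟩ := (cellEquiv ht).surjective (d, s)
      have h1 := cell_right (t := t) (c := c) i j
      change cell t c (i, j) = _ at hx
      rw [hx] at h1
      rw [(cellEquiv ht).symm_apply_eq.2 hx.symm, (cellEquiv ht).symm_apply_eq.2 h1.symm]
      exact Λ.antitone i (Nat.le_succ j)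
    have down : ∀ d s s', s' + ind k c d = s + 1 →
        Function.uncurry Λ.part ((cellEquiv ht).symm (d + 1, s'))
        ≤ Function.uncurry Λ.part ((cellEquiv ht).symm (d, s)) := by
      intro d s s' hs
      obtain ⟨⟨i, j⟩, hx⟩ := (cellEquiv ht).surjective (d, s)
      obtain ⟨h1, h2⟩ := cell_down ht i j
      change cell t c (i, j) = _ at hx
      rw [hx] at h1 h2
      have h3 : (d + 1, s') = cell t c (i + 1, j + c (i + 1)) :=
        Prod.ext h1.symm (by simp only at h2 ⊢; omega)
      rw [(cellEquiv ht).symm_apply_eq.2 hx.symm, (cellEquiv ht).symm_apply_eq.2 h3]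
      exact Λ.cyl i j
    { μ := fun d s => Function.uncurry Λ.part ((cellEquiv ht).symm (d, s))
      fin := by
        refine (exists_zero_iff _).2 ?_
        have h := (exists_zero_iff _).1 Λ.finite_support
        exact h.preimage (f := (cellEquiv ht).symm) ((cellEquiv ht).symm.injective.injOn)
      up := by
        intro p hp s
        rcases word_cases (k := k) (c := c) p with ⟨h, hi⟩ | ⟨h, hi⟩
        · have h1 := right (p + 1) s
          rw [add_sub_cancel_right, hi] at h1
          exact ⟨h1, down p s (s + 1) (by omega)⟩
        · rw [h] at hp; cases hp
      dn := by
        intro p hp s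
        rcases word_cases (k := k) (c := c) p with ⟨h, hi⟩ | ⟨h, hi⟩
        · rw [h] at hp; cases hp
        · have h1 := right (p + 1) s
          rw [add_sub_cancel_right, hi] at h1
          exact ⟨down p s s (by omega), h1⟩ }
  invFun S :=
    { part := fun i j => Function.uncurry S.μ (cellEquiv ht (i, j))
      antitone := by
        intro i
        refine antitone_nat_of_succ_le fun j => ?_
        change Function.uncurry S.μ (cell t c (i, j + 1)) ≤ Function.uncurry S.μ (cell t c (i, j))
        rw [cell_right]
        obtain ⟨d, s⟩ := cell t c (i, j)
        simp only [Function.uncurry_apply_pair]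
        rcases word_cases (k := k) (c := c) (d - 1) with ⟨h, hi⟩ | ⟨h, hi⟩
        · have := (S.up _ h s).1
          rw [sub_add_cancel] at this
          rwa [hi]
        · have := (S.dn _ h s).2
          rw [sub_add_cancel] at this
          rwa [hi]
      finite_support := by
        refine (exists_zero_iff _).2 ?_
        have h := (exists_zero_iff _).1 S.fin
        exact h.preimage (f := cellEquiv ht) ((cellEquiv ht).injective.injOn)
      cyl := by
        intro i j
        obtain ⟨h1, h2⟩ := cell_down ht i j
        change Function.uncurry S.μ (cell t c (i + 1, j + c (i + 1)))
          ≤ Function.uncurry S.μ (cell t c (i, j))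
        generalize cell t c (i + 1, j + c (i + 1)) = y at h1 h2 ⊢
        generalize cell t c (i, j) = x at h1 h2 ⊢
        obtain ⟨d, s⟩ := x
        obtain ⟨d', s'⟩ := y
        simp only at h1 h2
        subst h1
        simp only [Function.uncurry_apply_pair]
        rcases word_cases (k := k) (c := c) d with ⟨h, hi⟩ | ⟨h, hi⟩
        · have := (S.up _ h s).2
          rw [hi] at h2
          rwa [show s' = s + 1 by omega]
        · have := (S.dn _ h s).1
          rw [hi] at h2
          rwa [show s' = s by omega] }
  left_inv Λ := by
    cases Λ
    simp [Function.uncurry]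
  right_inv S := by
    ext d s
    simp [Function.uncurry]

lemma size_eq [NeZero k] (Λ : CylindricPartition k c) : Λ.size = ∑ i, siz (Λ.part i) := by
  rw [CylindricPartition.size, tsum_fintype]; rfl

/-- Initially, every place has weight one. -/
lemma wt_stateEquiv [NeZero t] [NeZero k] (ht : t = k + ∑ i, c i) (Λ : CylindricPartition k c) :
    (Λ.size : ℤ) = (stateEquiv ht Λ).wt (wtOf 1) := by
  have h1 : ∀ d : ZMod t, wtOf 1 d = 1 := fun d => by simp [wtOf]
  simp only [State.wt, h1, one_mul]
  rw [size_eq, sum_siz _ Λ.finite_support, ← Nat.cast_sum, sum_siz _ (stateEquiv ht Λ).fin]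
  congr 1
  exact ((cellEquiv ht).symm.tsum_eq (Function.uncurry Λ.part)).symm

/-- There are finitely many cylindric partitions of each size. -/
lemma finite_size [NeZero k] (n : ℕ) :
    Finite {Λ : CylindricPartition k c // Λ.size = n} := by
  have := (finite_of_bounds (ι := Fin k) n).to_subtype
  refine Finite.of_injective (β := {f : Fin k → ℕ → ℕ | ∀ i j, f i j ≤ n ∧ (n ≤ j → f i j = 0)})
    (fun Λ => ⟨Λ.1.part, fun i j => ?_⟩) ?_
  · refine bounds_of_siz_le (Λ.1.antitone i) (Λ.1.finite_support i) ?_ j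
    refine le_of_le_of_eq ?_ ((size_eq Λ.1).symm.trans Λ.2)
    exact Finset.single_le_sum (f := fun i => siz (Λ.1.part i)) (fun _ _ => Nat.zero_le _)
      (Finset.mem_univ i)
  · rintro ⟨⟨Λ, _, _, _⟩, _⟩ ⟨⟨Λ', _, _, _⟩, _⟩ h
    simp only [Subtype.mk.injEq] at h
    subst h
    rfl

lemma good_one (w : ZMod t → Bool) : Good w 1 := ⟨fun _ => rfl, fun _ _ h _ => h⟩

lemma wordOf_one [NeZero t] (w : ZMod t → Bool) : wordOf w 1 = w := by
  funext x
  simp [wordOf]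

lemma adm_state [NeZero t] [NeZero k] (ht : t = k + ∑ i, c i) :
    Adm (State.wt (w := word t k c) (wtOf 1)) := by
  have e : ∀ S : State t (word t k c), S.wt (wtOf 1) = ((stateEquiv ht).symm S).size := fun S => by
    rw [wt_stateEquiv ht, Equiv.apply_symm_apply]
  refine ⟨fun S => by rw [e]; positivity, fun n => ?_⟩
  have := finite_size (c := c) n
  refine Finite.of_injective (β := {Λ : CylindricPartition k c // Λ.size = n})
    (fun S => ⟨(stateEquiv ht).symm S.1, by have := S.2; rw [e] at this; exact_mod_cast this⟩) ?_
  intro S S' h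
  exact Subtype.ext ((stateEquiv ht).symm.injective (congrArg Subtype.val h))

lemma cylGF_eq [NeZero t] [NeZero k] (ht : t = k + ∑ i, c i) :
    cylGF k c = gf (State.wt (w := word t k c) (wtOf 1)) := by
  rw [cylGF, tsum_eq_gf _ finite_size]
  exact gf_equiv (stateEquiv ht) (wt_stateEquiv ht)

end initial

/-! ### Enumerating the pairs -/

section product

variable {k t : ℕ} {c : Fin k → ℕ}

/-- The smallest distance from the `m`-th up letter before the `i`-th down letter to a later copy
of the `j`-th down letter. -/
def expo (t k : ℕ) (c : Fin k → ℕ) (i m j : ℕ) : ℕ :=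
  if i ≤ j then rho k c j + m - rho k c i else t + rho k c j + m - rho k c i

lemma cc_le_rho (i : ℕ) : cc k c i ≤ rho k c i := by
  rcases i with _ | i
  · rw [rho_zero]
  · rw [rho_succ]; omega

lemma rho_add_lt {i j : ℕ} (h : j < i) : rho k c j + cc k c i < rho k c i := by
  obtain ⟨i, rfl⟩ : ∃ n, i = n + 1 := ⟨i - 1, by omega⟩
  have := (rho_strictMono k c).monotone (show j ≤ i by omega)
  rw [rho_succ]; omega

lemma col_unique {i m i' m' : ℕ} (hm : 1 ≤ m) (hm' : 1 ≤ m') (h : m ≤ cc k c i)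
    (h' : m' ≤ cc k c i') (he : rho k c i + m' = rho k c i' + m) : i = i' := by
  rcases lt_trichotomy i i' with hlt | heq | hlt
  · have := rho_add_lt (c := c) hlt; omega
  · exact heq
  · have := rho_add_lt (c := c) hlt; omega

lemma word_true_of_col [NeZero k] (ht : t = k + ∑ i, c i) {i m : ℕ} (hi : i < k) (hm : 1 ≤ m)
    (h : m ≤ cc k c i) : word t k c ((rho k c i - m : ℤ) : ZMod t) = true := by
  by_contra hcon
  rw [Bool.not_eq_true, word_false] at hcon
  obtain ⟨j, hj⟩ := hcon
  have h1 := cc_le_rho (c := c) i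
  have h2 := rho_lt c j
  have h3 : rho k c i < _ := rho_lt c ⟨i, hi⟩
  rw [← ht] at h2 h3
  have := natCast_inj_of_lt (a := rho k c j) (b := rho k c i - m) h2 (by omega) (by
    rw [hj, Nat.cast_sub (by omega)]; push_cast; rfl)
  rcases lt_or_ge (j : ℕ) i with hlt | hge
  · have := rho_add_lt (c := c) hlt; omega
  · have := (rho_strictMono k c).monotone hge; omega

/-- Every up letter in the period belongs to the block before some down letter. -/
lemma exists_col [NeZero k] (ht : t = k + ∑ i, c i) {A : ℕ} (hA : A < t)
    (hw : word t k c (A : ZMod t) = true) :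
    ∃ i m : ℕ, i < k ∧ 1 ≤ m ∧ m ≤ cc k c i ∧ A + m = rho k c i := by
  have hk : 0 < k := NeZero.pos k
  have hne : ∀ i, i < k → A ≠ rho k c i := by
    rintro i hi rfl
    rw [word_false.2 ⟨⟨i, hi⟩, rfl⟩] at hw
    cases hw
  have hlast := rho_last c
  rw [← ht] at hlast
  have hex : ∃ i, A < rho k c i := ⟨k - 1, by have := hne (k - 1) (by omega); omega⟩
  have hlt : Nat.find hex ≤ k - 1 :=
    Nat.find_le (by have := hne (k - 1) (by omega); omega)
  have h1 := Nat.find_spec hex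
  have h2 := fun m => Nat.find_min hex (m := m)
  generalize Nat.find hex = n at hlt h1 h2
  refine ⟨n, rho k c n - A, by omega, by omega, ?_, by omega⟩
  rcases n with _ | n
  · rw [rho_zero]; omega
  · have := h2 n (by omega)
    have := hne n (by omega)
    rw [rho_succ]; omega

/-- An explicit enumeration of all pairs of letters that lie at most `t * L` apart. -/
lemma prod_pairs [NeZero t] [NeZero k] (ht : t = k + ∑ i, c i) (L : ℕ) {M : Type*} [CommMonoid M]
    (f : ℕ → M) :
    ∏ x ∈ pairs (word t k c) (t * L) 1, f (x.2 - x.1).toNat =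
      ∏ i ∈ Finset.range k, ∏ j ∈ Finset.range k, ∏ m ∈ Finset.Icc 1 (cc k c i),
        ∏ r ∈ Finset.range L, f (t * r + expo t k c i m j) := by
  have htpos : (0 : ℤ) < t := by exact_mod_cast NeZero.pos t
  have hlt : ∀ i, i < k → rho k c i < t := fun i hi => by
    rw [ht]; exact rho_lt c ⟨i, hi⟩
  have hmono := (rho_strictMono k c).monotone
  -- the position of the down letter, in terms of the pair of letters and the winding number
  have hB : ∀ i m j r : ℕ, i < k → j < k → m ≤ cc k c i →
      ((rho k c i : ℤ) - m + (t * r + expo t k c i m j : ℕ)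
        = rho k c j + t * ((r : ℤ) + if i ≤ j then 0 else 1)) := by
    intro i m j r hi hj hm
    have h1 := hlt i hi
    rw [expo]
    split_ifs with hij
    · have := hmono hij
      rw [Nat.cast_add, Nat.cast_sub (by omega)]; push_cast; ring
    · rw [Nat.cast_add, Nat.cast_sub (by omega)]; push_cast; ring
  have hpos : ∀ i m j : ℕ, i < k → 1 ≤ m → 1 ≤ expo t k c i m j := by
    intro i m j hi hm
    have h1 := hlt i hi
    rw [expo]
    split_ifs with hij
    · have := hmono hij; omega
    · omega
  have hle : ∀ i m j : ℕ, j < k → m ≤ cc k c i → expo t k c i m j ≤ t := by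
    intro i m j hj hm
    have h1 := hlt j hj
    have := cc_le_rho (c := c) i
    rw [expo]
    split_ifs with hij
    · omega
    · have := rho_add_lt (c := c) (not_le.1 hij); omega
  simp only [Finset.prod_sigma']
  symm
  refine Finset.prod_nbij (fun y => ((rho k c y.1 : ℤ) - y.2.2.1,
    (rho k c y.1 : ℤ) - y.2.2.1 + (t * y.2.2.2 + expo t k c y.1 y.2.2.1 y.2.1 : ℕ))) ?_ ?_ ?_ ?_
  · rintro ⟨i, j, m, r⟩ hy
    simp only [Finset.mem_sigma, Finset.mem_range, Finset.mem_Icc] at hy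
    obtain ⟨hi, hj, ⟨hm1, hm⟩, hr⟩ := hy
    have h1 := cc_le_rho (c := c) i
    have h2 := hlt i hi
    have h3 := hpos i m j hi hm1
    have h4 := hle i m j hj hm
    refine (mem_pairs (good_one _)).2 ⟨?_, ?_, ?_, ?_, ?_, ?_⟩
    · simp only; omega
    · simp only; omega
    · exact word_true_of_col ht hi hm1 hm
    · simp only
      rw [hB i m j r hi hj hm, cast_add_mul, word_false]
      exact ⟨⟨j, hj⟩, by simp⟩
    · simp only
      rw [add_sub_cancel_left]
      have : t * (r + 1) ≤ t * L := Nat.mul_le_mul_left _ hr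
      rw [Nat.mul_succ] at this
      exact_mod_cast (show t * r + expo t k c i m j ≤ t * L by omega)
    · change (rho k c i : ℤ) - m < (rho k c i : ℤ) - m + (t * r + expo t k c i m j : ℕ)
      have : 0 < t * r + expo t k c i m j := by omega
      omega
  · rintro ⟨i, j, m, r⟩ hy ⟨i', j', m', r'⟩ hy' he
    simp only [Finset.coe_sigma, Set.mem_sigma_iff, Finset.mem_coe, Finset.mem_range,
      Finset.mem_Icc] at hy hy'
    obtain ⟨hi, hj, ⟨hm1, hm⟩, hr⟩ := hy
    obtain ⟨hi', hj', ⟨hm1', hm'⟩, hr'⟩ := hy'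
    simp only [Prod.mk.injEq] at he
    obtain ⟨e1, e2⟩ := he
    obtain rfl := col_unique hm1 hm1' hm hm' (by omega)
    obtain rfl : m = m' := by omega
    rw [hB i m j r hi hj hm, hB i m j' r' hi hj' hm] at e2
    have e3 := congrArg (fun z : ℤ => (z : ZMod t)) e2
    simp only [cast_add_mul, Int.cast_natCast] at e3
    have e4 := rho_inj ht (i := ⟨j, hj⟩) (j := ⟨j', hj'⟩) e3
    simp only [Fin.mk.injEq] at e4
    subst e4
    have e5 : (t : ℤ) * r = t * r' := by linarith
    have := mul_left_cancel₀ htpos.ne' e5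
    have : r = r' := by exact_mod_cast this
    subst this
    rfl
  · rintro ⟨A, B⟩ hx
    obtain ⟨hA0, hAt, hwA, hwB, hM, hAB⟩ := (mem_pairs (good_one _)).1 hx
    simp only at hA0 hAt hwA hwB hM
    replace hAB : A < B := hAB
    lift A to ℕ using hA0
    obtain ⟨i, m, hi, hm1, hm, hA⟩ := exists_col ht (A := A) (by exact_mod_cast hAt)
      (by simpa using hwA)
    obtain ⟨j, hj⟩ := word_false.1 hwB
    have hj' : (B : ZMod t) = ((rho k c j : ℕ) : ℤ) := by rw [← hj]; simp
    obtain ⟨n, hn⟩ := exists_of_cast_eq hj'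
    have hjt := hlt j j.isLt
    have h3 := hpos i m j hi hm1
    have key : ∃ r : ℕ, (n : ℤ) = r + if i ≤ j then 0 else 1 := by
      have : 0 ≤ n - if i ≤ j then 0 else 1 := by
        by_contra hneg
        split_ifs at hneg with hij
        · have : n ≤ -1 := by omega
          nlinarith
        · have : n ≤ 0 := by omega
          have := rho_add_lt (c := c) (not_le.1 hij)
          have : (t : ℤ) * n ≤ 0 := mul_nonpos_of_nonneg_of_nonpos htpos.le ‹_›
          omega
      exact ⟨(n - if i ≤ j then 0 else 1).toNat, by rw [Int.toNat_of_nonneg this]; ring⟩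
    obtain ⟨r, rfl⟩ := key
    have hBr := hB i m j r hi j.isLt hm
    have hAi : (A : ℤ) = rho k c i - m := by omega
    rw [← hn, ← hAi] at hBr
    refine ⟨⟨i, j, m, r⟩, ?_, ?_⟩
    · simp only [Finset.coe_sigma, Set.mem_sigma_iff, Finset.mem_coe, Finset.mem_range,
        Finset.mem_Icc]
      refine ⟨hi, j.isLt, ⟨hm1, hm⟩, ?_⟩
      have h5 : t * r + expo t k c i m j ≤ t * L := by
        have : ((t * r + expo t k c i m j : ℕ) : ℤ) ≤ (t * L : ℕ) := by linarith
        exact_mod_cast this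
      exact lt_of_mul_lt_mul_left (show t * r < t * L by omega) (Nat.zero_le t)
    · simp only
      rw [← hAi, hBr]
  · rintro ⟨i, j, m, r⟩ _
    simp only
    rw [add_sub_cancel_left, Int.toNat_natCast]

lemma prod_Icc_shift {M : Type*} [CommMonoid M] (f : ℕ → M) (a b : ℕ) :
    ∏ i ∈ Finset.Icc (a + 1) b, f i = ∏ i ∈ Finset.Ico a b, f (i + 1) := by
  rw [Finset.prod_Ico_add' f a b 1]
  rfl

/-- The partial sums of the profile are differences of the positions of down letters. -/
lemma sSum_add (i n : ℕ) :
    sSum k c (i + 2) (i + n + 1) + n + rho k c i = rho k c (i + n) := by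
  induction n with
  | zero => simp [sSum]
  | succ n ih =>
    rw [sSum, show i + (n + 1) + 1 = (i + n + 1) + 1 by ring, Finset.sum_Icc_succ_top (by omega),
      ← add_assoc i n 1, rho_succ, ← ih, sSum, cc]
    ring

/-- The two products of the theorem, over the pairs with `i ≤ j` and `j < i`. -/
lemma prod_expo [NeZero k] (ht : t = k + ∑ i, c i) {M : Type*} [CommMonoid M] (f : ℕ → M) :
    (∏ i ∈ Finset.Icc 1 k, ∏ j ∈ Finset.Icc i k, ∏ m ∈ Finset.Icc 1 (profExt k c i),
        f (m + j - i + sSum k c (i + 1) j))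
      * (∏ i ∈ Finset.Icc 2 k, ∏ j ∈ Finset.Icc 2 i, ∏ m ∈ Finset.Icc 1 (profExt k c i),
        f (t + j - m - i - sSum k c j (i - 1)))
      = ∏ i ∈ Finset.range k, ∏ j ∈ Finset.range k, ∏ m ∈ Finset.Icc 1 (cc k c i),
        f (expo t k c i m j) := by
  have e1 : ∏ i ∈ Finset.Icc 1 k, ∏ j ∈ Finset.Icc i k, ∏ m ∈ Finset.Icc 1 (profExt k c i),
        f (m + j - i + sSum k c (i + 1) j)
      = ∏ i ∈ Finset.range k, ∏ j ∈ Finset.Ico i k, ∏ m ∈ Finset.Icc 1 (cc k c i),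
        f (expo t k c i m j) := by
    rw [prod_Icc_shift _ 0, ← Finset.range_eq_Ico]
    refine Finset.prod_congr rfl fun i _ => ?_
    rw [prod_Icc_shift]
    refine Finset.prod_congr rfl fun j hj => Finset.prod_congr rfl fun m _ => ?_
    rw [Finset.mem_Ico] at hj
    obtain ⟨n, rfl⟩ := Nat.exists_eq_add_of_le hj.1
    have := sSum_add (k := k) (c := c) i n
    rw [expo, if_pos hj.1]
    congr 1
    rw [show i + 1 + 1 = i + 2 by ring]
    omega
  have e2 : ∏ i ∈ Finset.Icc 2 k, ∏ j ∈ Finset.Icc 2 i, ∏ m ∈ Finset.Icc 1 (profExt k c i),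
        f (t + j - m - i - sSum k c j (i - 1))
      = ∏ i ∈ Finset.range k, ∏ j ∈ Finset.range i, ∏ m ∈ Finset.Icc 1 (cc k c i),
        f (expo t k c i m j) := by
    rw [prod_Icc_shift _ 1, Finset.prod_range_eq_mul_Ico _ (NeZero.pos k), Finset.prod_range_zero,
      one_mul]
    refine Finset.prod_congr rfl fun i hi => ?_
    rw [prod_Icc_shift _ 1]
    refine (Finset.prod_Ico_add' _ 0 i 1).symm.trans ?_
    rw [← Finset.range_eq_Ico]
    refine Finset.prod_congr rfl fun j hj => ?_
    rw [Finset.mem_range] at hj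
    rw [Finset.mem_Ico] at hi
    -- the letters of a block are counted from the other end
    refine Finset.prod_nbij' (fun m => cc k c i + 1 - m) (fun m => cc k c i + 1 - m) ?_ ?_ ?_ ?_ ?_
    · intro m hm
      change m ∈ Finset.Icc 1 (cc k c i) at hm
      rw [Finset.mem_Icc] at hm ⊢; omega
    · intro m hm
      change _ ∈ Finset.Icc 1 (cc k c i)
      rw [Finset.mem_Icc] at hm ⊢; omega
    · intro m hm
      change m ∈ Finset.Icc 1 (cc k c i) at hm
      rw [Finset.mem_Icc] at hm; omega
    · intro m hm
      rw [Finset.mem_Icc] at hm; omega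
    · intro m hm
      change m ∈ Finset.Icc 1 (cc k c i) at hm
      rw [Finset.mem_Icc] at hm
      obtain ⟨n, rfl⟩ : ∃ n, i = j + n + 1 := ⟨i - j - 1, by omega⟩
      have h1 := sSum_add (k := k) (c := c) j n
      have h2 := rho_succ k c (j + n)
      have h3 : rho k c (j + n + 1) < _ := rho_lt c ⟨j + n + 1, hi.2⟩
      rw [← ht] at h3
      rw [expo, if_neg (by omega)]
      congr 1
      rw [show j + 1 + 1 = j + 2 by ring, show j + n + 1 + 1 - 1 = j + n + 1 by omega]
      omega
  rw [e1, e2, ← Finset.prod_mul_distrib]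
  refine Finset.prod_congr rfl fun i hi => ?_
  rw [mul_comm, Finset.prod_range_mul_prod_Ico _ (Finset.mem_range.1 hi).le]

end product

/-! ### The product formula -/

section final

variable {k t : ℕ} {c : Fin k → ℕ}

/-- The denominators of the theorem cancel the generating function. -/
lemma cylGF_mul [NeZero t] [NeZero k] (ht : t = k + ∑ i, c i) :
    cylGF k c * ((∏' m : ℕ, (1 - (X : PowerSeries ℚ) ^ (t * (m + 1)))) *
      ∏ i ∈ Finset.range k, ∏ j ∈ Finset.range k, ∏ m ∈ Finset.Icc 1 (cc k c i),
        ∏' r : ℕ, (1 - (X : PowerSeries ℚ) ^ (t * r + expo t k c i m j))) = 1 := by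
  have htpos : 0 < t := NeZero.pos t
  refine red_ext fun K => ?_
  -- the modulus `t * K` makes the range `t * (K + 1)` of the pairs a whole number of periods
  suffices h : red (t * K) (cylGF k c * ((∏' m : ℕ, (1 - (X : PowerSeries ℚ) ^ (t * (m + 1)))) *
      ∏ i ∈ Finset.range k, ∏ j ∈ Finset.range k, ∏ m ∈ Finset.Icc 1 (cc k c i),
        ∏' r : ℕ, (1 - (X : PowerSeries ℚ) ^ (t * r + expo t k c i m j)))) = red (t * K) 1 by
    rw [red_eq_iff] at h ⊢
    exact fun n hn => h n (lt_of_lt_of_le hn (Nat.le_mul_of_pos_left K htpos))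
  have hrow : ∃ x, word t k c x = false := ⟨_, word_false.2 ⟨0, rfl⟩⟩
  have hadm := adm_state ht
  have hgf := cylGF_eq ht
  have hmain := red_gf_main (w := word t k c) (t * K) hrow _ 1 (good_one _)
    (by rw [wordOf_one]; exact hadm) rfl
  rw [wordOf_one, ← hgf, show t * K + t = t * (K + 1) by ring,
    prod_pairs ht (K + 1) fun n => 1 - (X : PowerSeries ℚ) ^ n] at hmain
  have h0 : red (t * K) (∏' m : ℕ, (1 - (X : PowerSeries ℚ) ^ (t * (m + 1))))
      = red (t * K) (∏ m ∈ Finset.range (t * K), (1 - (X : PowerSeries ℚ) ^ (t * (m + 1)))) := by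
    refine red_tprod _ (multipliable_factor t t htpos) _ _ fun r hr => red_one_sub ?_
    nlinarith
  have h1 : ∀ i m j, red (t * K)
      (∏' r : ℕ, (1 - (X : PowerSeries ℚ) ^ (t * r + expo t k c i m j)))
      = red (t * K)
        (∏ r ∈ Finset.range (K + 1), (1 - (X : PowerSeries ℚ) ^ (t * r + expo t k c i m j))) := by
    intro i m j
    refine red_tprod _ (multipliable_factor _ t htpos) _ _ fun r hr => red_one_sub ?_
    have := Nat.mul_le_mul_left t (show K ≤ r by omega)
    omega
  have hpar := red_gf_par t (t * K) (t * K) htpos le_rfl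
  rw [← hmain, ← h0] at hpar
  rw [← map_mul] at hpar
  rw [map_one, ← hpar]
  simp only [map_mul, map_prod, h1]
  ring

/-- Inversion of power series, as a homomorphism of monoids. -/
noncomputable def invHom : PowerSeries ℚ →* PowerSeries ℚ where
  toFun f := f⁻¹
  map_one' := by simp
  map_mul' f g := by rw [PowerSeries.mul_inv_rev, mul_comm]

lemma cylGF_eq_inv [NeZero t] [NeZero k] (ht : t = k + ∑ i, c i) :
    cylGF k c = (∏' m : ℕ, (1 - (X : PowerSeries ℚ) ^ (t * (m + 1))))⁻¹ *
      ∏ i ∈ Finset.range k, ∏ j ∈ Finset.range k, ∏ m ∈ Finset.Icc 1 (cc k c i),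
        (∏' r : ℕ, (1 - (X : PowerSeries ℚ) ^ (t * r + expo t k c i m j)))⁻¹ := by
  have h := cylGF_mul ht
  rw [← PowerSeries.eq_inv_iff_mul_eq_one] at h
  · rw [h]
    change invHom _ = invHom _ * ∏ i ∈ _, ∏ j ∈ _, ∏ m ∈ _, invHom _
    simp only [map_mul, map_prod]
  · intro h0
    have := congrArg constantCoeff h
    rw [map_mul, h0, mul_zero, map_one] at this
    exact zero_ne_one this

end final

end Borodin

/-- Borodin's product formula for cylindric partitions. -/
theorem borodin (k ℓ : ℕ) [NeZero k] (c : Fin k → ℕ) (hc : ∑ i, c i = ℓ) :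
    cylGF k c
      = (∏' m : ℕ, (1 - (PowerSeries.X : PowerSeries ℚ) ^ ((k + ℓ) * (m + 1))))⁻¹
        * (∏ i ∈ Finset.Icc 1 k, ∏ j ∈ Finset.Icc i k, ∏ m ∈ Finset.Icc 1 (profExt k c i),
            (∏' r : ℕ, (1 - (PowerSeries.X : PowerSeries ℚ)
              ^ ((k + ℓ) * r + (m + j - i + sSum k c (i + 1) j))))⁻¹)
        * (∏ i ∈ Finset.Icc 2 k, ∏ j ∈ Finset.Icc 2 i, ∏ m ∈ Finset.Icc 1 (profExt k c i),
            (∏' r : ℕ, (1 - (PowerSeries.X : PowerSeries ℚ)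
              ^ ((k + ℓ) * r + (k + ℓ + j - m - i - sSum k c j (i - 1)))))⁻¹) := by
  have : NeZero (k + ℓ) := ⟨by have := NeZero.pos k; omega⟩
  have ht : k + ℓ = k + ∑ i, c i := by rw [hc]
  rw [mul_assoc, Borodin.cylGF_eq_inv ht, Borodin.prod_expo ht fun a =>
    (∏' r : ℕ, (1 - (PowerSeries.X : PowerSeries ℚ) ^ ((k + ℓ) * r + a)))⁻¹]
end
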